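/- arXiv:2001.02226 — 4 statements merged into one kernel-verified Lean document; each statement's English description precedes it below -/
import Mathlib

section
/- Let ν ≥ 1, let N ⊆ ℝ^ν be a compact connected smooth embedded submanifold without boundary with base point b ∈ N, let ℓ ≥ 1, and let p > ℓ + 1 be a real number. Assume that π_ℓ(N, b) is infinite. Then there exist a constant c > 0 and a sequence (u_j) of smooth maps u_j : B̄^ℓ → N with u_j = b on S^{ℓ−1} such that E^{1−1/p, p}_{B^ℓ}(u_j) → ∞ as j → ∞ and such that, for every j and every C^1 map U : B̄^ℓ × [0,1] → N with U(·, 0) = u_j, one has ∫_{B^ℓ×(0,1)} ‖DU‖^p ≥ c · ( E^{1−1/p, p}_{B^ℓ}(u_j) )^{p/(p−1)}. -/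
open Metric Set MeasureTheory Filter
open scoped ENNReal Topology

noncomputable section

/-- `N ⊆ ℝ^ν` is a smooth embedded submanifold without boundary: around each of its points
there is a smooth local diffeomorphism of the ambient space flattening `N` onto a
`d`-dimensional coordinate subspace. -/
def IsSmoothSubmanifold {ν : ℕ} (N : Set (EuclideanSpace ℝ (Fin ν))) : Prop :=
  ∃ d : ℕ, ∀ x ∈ N, ∃ (U V : Set (EuclideanSpace ℝ (Fin ν)))
      (φ ψ : EuclideanSpace ℝ (Fin ν) → EuclideanSpace ℝ (Fin ν)),
    IsOpen U ∧ IsOpen V ∧ x ∈ U ∧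
    ContDiffOn ℝ (⊤ : ℕ∞) φ U ∧ ContDiffOn ℝ (⊤ : ℕ∞) ψ V ∧
    MapsTo φ U V ∧ MapsTo ψ V U ∧
    (∀ y ∈ U, ψ (φ y) = y) ∧ (∀ z ∈ V, φ (ψ z) = z) ∧
    (∀ y ∈ U, (y ∈ N ↔ ∀ i : Fin ν, d ≤ (i : ℕ) → φ y i = 0))

/-- The Gagliardo fractional energy `E^{s,p}_A(u)`. -/
def gagliardoE {l ν : ℕ} (s p : ℝ) (A : Set (EuclideanSpace ℝ (Fin l)))
    (u : EuclideanSpace ℝ (Fin l) → EuclideanSpace ℝ (Fin ν)) : ℝ≥0∞ :=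
  ∫⁻ x in A, ∫⁻ y in A, ENNReal.ofReal (‖u y - u x‖ ^ p / ‖y - x‖ ^ ((l : ℝ) + s * p))

/-- `f` is `C^1` on the closed set `A` in the sense that it is (the restriction of)
a `C^1` map on an open neighborhood of `A`. -/
def C1OnNhd {E F : Type*} [NormedAddCommGroup E] [NormedSpace ℝ E]
    [NormedAddCommGroup F] [NormedSpace ℝ F] (f : E → F) (A : Set E) : Prop :=
  ∃ V : Set E, IsOpen V ∧ A ⊆ V ∧ ContDiffOn ℝ 1 f V

/-- `f` is `C^∞` on the closed set `A` in the sense that it is (the restriction of)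
a smooth map on an open neighborhood of `A`. -/
def SmoothOnNhd {E F : Type*} [NormedAddCommGroup E] [NormedSpace ℝ E]
    [NormedAddCommGroup F] [NormedSpace ℝ F] (f : E → F) (A : Set E) : Prop :=
  ∃ V : Set E, IsOpen V ∧ A ⊆ V ∧ ContDiffOn ℝ (⊤ : ℕ∞) f V

/-- The `C^1` extension `p`-energy `E^{1,p}_ext(u)` of a map `u : B̄^l → N`:
the infimum (in `ℝ≥0∞`, so `sInf ∅ = ∞`) of `∫_{B^l × (0,1)} ‖DU‖^p` over all `C^1` maps
`U : B̄^l × [0,1] → N` with `U(·,0) = u`. -/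
def extEnergy {l ν : ℕ} (p : ℝ) (N : Set (EuclideanSpace ℝ (Fin ν)))
    (u : EuclideanSpace ℝ (Fin l) → EuclideanSpace ℝ (Fin ν)) : ℝ≥0∞ :=
  sInf { e | ∃ U : EuclideanSpace ℝ (Fin l) × ℝ → EuclideanSpace ℝ (Fin ν),
    C1OnNhd U (closedBall 0 1 ×ˢ Icc (0 : ℝ) 1) ∧
    MapsTo U (closedBall 0 1 ×ˢ Icc (0 : ℝ) 1) N ∧
    (∀ x ∈ closedBall (0 : EuclideanSpace ℝ (Fin l)) 1, U (x, 0) = u x) ∧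
    e = ∫⁻ z in ball (0 : EuclideanSpace ℝ (Fin l)) 1 ×ˢ Ioo (0 : ℝ) 1,
          ENNReal.ofReal (‖fderiv ℝ U z‖ ^ p) }

/-- `f` and `g`, mapping `B̄^l` into `N` and agreeing on `S^{l-1}`, are homotopic within `N`
relative to the sphere `S^{l-1}`. -/
def HomotopicRelSphere {l ν : ℕ} (N : Set (EuclideanSpace ℝ (Fin ν)))
    (f g : EuclideanSpace ℝ (Fin l) → EuclideanSpace ℝ (Fin ν)) : Prop :=
  ∃ H : EuclideanSpace ℝ (Fin l) × ℝ → EuclideanSpace ℝ (Fin ν),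
    ContinuousOn H (closedBall 0 1 ×ˢ Icc (0 : ℝ) 1) ∧
    MapsTo H (closedBall 0 1 ×ˢ Icc (0 : ℝ) 1) N ∧
    (∀ x ∈ closedBall (0 : EuclideanSpace ℝ (Fin l)) 1, H (x, 0) = f x ∧ H (x, 1) = g x) ∧
    (∀ x ∈ sphere (0 : EuclideanSpace ℝ (Fin l)) 1, ∀ t ∈ Icc (0 : ℝ) 1, H (x, t) = f x)

/-- The topological `p`-energy `E^{1,p}_top(u)` of `u : B̄^l → N` with `u = b` on `S^{l-1}`:
the infimum (in `ℝ≥0∞`) of `∫_{B^l} ‖Dw‖^p` over all `C^1` maps `w : B̄^l → N` with `w = b` on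
`S^{l-1}` that are homotopic to `u` relative to `S^{l-1}`. -/
def topEnergy {l ν : ℕ} (p : ℝ) (N : Set (EuclideanSpace ℝ (Fin ν)))
    (b : EuclideanSpace ℝ (Fin ν))
    (u : EuclideanSpace ℝ (Fin l) → EuclideanSpace ℝ (Fin ν)) : ℝ≥0∞ :=
  sInf { e | ∃ w : EuclideanSpace ℝ (Fin l) → EuclideanSpace ℝ (Fin ν),
    C1OnNhd w (closedBall 0 1) ∧ MapsTo w (closedBall 0 1) N ∧
    (∀ x ∈ sphere (0 : EuclideanSpace ℝ (Fin l)) 1, w x = b) ∧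
    HomotopicRelSphere N w u ∧
    e = ∫⁻ x in ball (0 : EuclideanSpace ℝ (Fin l)) 1, ENNReal.ofReal (‖fderiv ℝ w x‖ ^ p) }

/-! An extension `U` of `u` with energy `M = ∫ ‖DU‖ ^ p` has a slice at small height whose own
`p`-energy is at most a constant times `M + 1`, which represents the same homotopy class as `u`.
Interpolating this bound with the boundedness of `N` gives a representative whose fractional
energy `E` satisfies `E ^ (p / (p - 1)) ≤ C * (M + 1)`. Applied to an extension whose energy is
nearly minimal among all extensions of all representatives of a class, this yields a
representative `u` that satisfies `E(u) ^ (p / (p - 1)) ≤ C * (M + 2)` for *every* extension of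
`u`. Since `(1 - 1 / p) * p = p - 1 > l`, Morrey's embedding and the Arzelà–Ascoli theorem show
that only finitely many classes have a representative with fractional energy below a given bound,
so over the infinitely many classes the energies tend to `∞`, and the additive constant is absorbed.
-/

local notation "ℝ^" n:max => EuclideanSpace ℝ (Fin n)

section ImplicitFunction

variable {𝕜 : Type*} [RCLike 𝕜]
  {E : Type*} [NormedAddCommGroup E] [NormedSpace 𝕜 E] [CompleteSpace E]
  {F : Type*} [NormedAddCommGroup F] [NormedSpace 𝕜 F] [CompleteSpace F]
  {G : Type*} [NormedAddCommGroup G] [NormedSpace 𝕜 G] [CompleteSpace G]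

theorem eventually_contDiffAt_implicitFunction {n : WithTop ℕ∞} {f : E × F → G} {u : E × F}
    (cdf : ContDiffAt 𝕜 n f u) (hf : ∀ᶠ v in 𝓝 u, ContDiffAt 𝕜 n f v) (pn : n ≠ 0)
    (if₂ : (fderiv 𝕜 f u ∘L .inr 𝕜 E F).IsInvertible) :
    ∀ᶠ x in 𝓝 u.1, ContDiffAt 𝕜 n (cdf.implicitFunction pn if₂) x := by
  set g := cdf.implicitFunction pn if₂ with hg
  have hgu : (u.1, g u.1) = u := by rw [hg, cdf.implicitFunction_apply_self pn if₂]
  have hgC : ∀ᶠ x in 𝓝 u.1, ContDiffAt 𝕜 1 g x :=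
    ContDiffAt.eventually ((cdf.contDiffAt_implicitFunction pn if₂).of_le
      (ENat.one_le_iff_ne_zero_withTop.2 pn)) (by simp)
  have hgraph : Tendsto (fun x ↦ (x, g x)) (𝓝 u.1) (𝓝 u) :=
    hgu ▸ continuousAt_id.prodMk hgC.self_of_nhds.continuousAt
  have hinv : ∀ᶠ v in 𝓝 u, (fderiv 𝕜 f v ∘L .inr 𝕜 E F).IsInvertible := by
    obtain ⟨e, he⟩ := if₂
    have hcont : ContinuousAt (fun v ↦ fderiv 𝕜 f v ∘L .inr 𝕜 E F) u :=
      (cdf.continuousAt_fderiv pn).clm_comp continuousAt_const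
    exact hcont (he ▸ e.nhds)
  have hlevel := cdf.eventually_apply_implicitFunction pn if₂
  filter_upwards [hgraph.eventually hf, hgraph.eventually hinv, hgC, hlevel,
    eventually_eventually_nhds.2 hlevel] with x hfx hinvx hgx hx hlevelx
  have hgraphx : Tendsto (fun y ↦ (y, g y)) (𝓝 x) (𝓝 (x, g x)) :=
    continuousAt_id.prodMk hgx.continuousAt
  have huniq := hgraphx.eventually (hfx.eventually_apply_eq_iff_implicitFunction pn hinvx)
  refine (hfx.contDiffAt_implicitFunction pn hinvx).congr_of_eventuallyEq ?_
  filter_upwards [huniq, hlevelx] with y hy hly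
  exact (hy.1 (hly.trans hx.symm)).symm

end ImplicitFunction

theorem isInvertible_of_injective_of_finrank_eq {E F : Type*}
    [NormedAddCommGroup E] [NormedSpace ℝ E] [FiniteDimensional ℝ E]
    [NormedAddCommGroup F] [NormedSpace ℝ F] [FiniteDimensional ℝ F] {A : E →L[ℝ] F}
    (hA : Function.Injective A) (hdim : Module.finrank ℝ E = Module.finrank ℝ F) :
    A.IsInvertible :=
  ⟨(A.toLinearMap.linearEquivOfInjective hA hdim).toContinuousLinearEquiv, by ext; simp⟩

section Retraction

variable {E : Type*} [NormedAddCommGroup E] [InnerProductSpace ℝ E]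
  {F : Type*} [NormedAddCommGroup F] [NormedSpace ℝ F]

/-- The equation satisfied by the parameters `t` of the critical points `σ t` of the distance
to `y`: the vector `σ t - y` is normal to the image of `σ` at `σ t`. -/
def normalEquation (σ : F → E) (w : E × F) : F →L[ℝ] ℝ :=
  (innerSL ℝ (σ w.2 - w.1)) ∘L fderiv ℝ σ w.2

theorem normalEquation_apply (σ : F → E) (w : E × F) (v : F) :
    normalEquation σ w v = inner ℝ (σ w.2 - w.1) (fderiv ℝ σ w.2 v) :=
  rfl

theorem normalEquation_self (σ : F → E) (t : F) : normalEquation σ (σ t, t) = 0 := by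
  ext v
  simp [normalEquation_apply]

theorem normalEquation_eq_zero_of_isLocalMin {σ : F → E} {y : E} {t : F}
    (hσ : DifferentiableAt ℝ σ t) (hmin : IsLocalMin (fun t' ↦ dist y (σ t')) t) :
    normalEquation σ (y, t) = 0 := by
  have hminSq : IsLocalMin (fun t' ↦ ‖σ t' - y‖ ^ 2) t := by
    filter_upwards [hmin] with t' ht'
    simp only [← dist_eq_norm, dist_comm _ y]
    gcongr
  have hderiv := hminSq.hasFDerivAt_eq_zero (hσ.hasFDerivAt.sub_const y).norm_sq
  ext v
  simpa [normalEquation_apply, inner_sub_left] using DFunLike.congr_fun hderiv v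

theorem contDiffOn_normalEquation [FiniteDimensional ℝ F] {σ : F → E} {W : Set F}
    (hW : IsOpen W) (hσ : ContDiffOn ℝ (⊤ : ℕ∞) σ W) :
    ContDiffOn ℝ (⊤ : ℕ∞) (normalEquation σ) (univ ×ˢ W) := by
  have hmaps : MapsTo Prod.snd ((univ : Set E) ×ˢ W) W := fun w hw ↦ hw.2
  rw [contDiffOn_clm_apply]
  intro v
  exact ((hσ.comp contDiffOn_snd hmaps).sub contDiffOn_fst).inner ℝ
    (((hσ.fderiv_of_isOpen hW (by simp)).comp contDiffOn_snd hmaps).clm_apply contDiffOn_const)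

theorem fderiv_normalEquation_inr [FiniteDimensional ℝ F] {σ : F → E} {W : Set F} {t : F}
    (hW : IsOpen W) (hσ : ContDiffOn ℝ (⊤ : ℕ∞) σ W) (ht : t ∈ W) (v v' : F) :
    fderiv ℝ (normalEquation σ) (σ t, t) (0, v) v' =
      inner ℝ (fderiv ℝ σ t v) (fderiv ℝ σ t v') := by
  have hΦ : HasFDerivAt (normalEquation σ) (fderiv ℝ (normalEquation σ) (σ t, t)) (σ t, t) :=
    ((contDiffOn_normalEquation hW hσ).contDiffAt ((isOpen_univ.prod hW).mem_nhds
      ⟨mem_univ _, ht⟩)).differentiableAt (by simp) |>.hasFDerivAt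
  have hpartial := ((hΦ.comp t ((hasFDerivAt_const (σ t) t).prodMk (hasFDerivAt_id t))).clm_apply
    (hasFDerivAt_const v' t))
  have hσt := ((hσ.contDiffAt (hW.mem_nhds ht)).differentiableAt (by simp)).hasFDerivAt
  have hσ't := (((hσ.fderiv_of_isOpen hW (m := (⊤ : ℕ∞)) (by simp)).contDiffAt
    (hW.mem_nhds ht)).differentiableAt (by simp)).hasFDerivAt
  have hinner := (hσt.sub_const (σ t)).inner ℝ (hσ't.clm_apply (hasFDerivAt_const v' t))
  simpa [fderivInnerCLM_apply] using DFunLike.congr_fun (hpartial.unique hinner) v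

theorem exists_contDiffAt_of_normalEquation_eq_zero [FiniteDimensional ℝ E]
    [FiniteDimensional ℝ F] {σ : F → E} {W : Set F} {t₀ : F} (hW : IsOpen W)
    (hσ : ContDiffOn ℝ (⊤ : ℕ∞) σ W) (ht₀ : t₀ ∈ W)
    (himm : Function.Injective (fderiv ℝ σ t₀)) :
    ∃ g : E → F, g (σ t₀) = t₀ ∧ (∀ᶠ y in 𝓝 (σ t₀), ContDiffAt ℝ (⊤ : ℕ∞) g y) ∧
      ∀ᶠ w in 𝓝 (σ t₀, t₀), normalEquation σ w = 0 → w.2 = g w.1 := by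
  have hnear : ∀ᶠ w in 𝓝 (σ t₀, t₀), ContDiffAt ℝ (⊤ : ℕ∞) (normalEquation σ) w := by
    have hopen := (isOpen_univ (X := E)).prod hW
    filter_upwards [hopen.mem_nhds ⟨mem_univ _, ht₀⟩] with w hw
    exact (contDiffOn_normalEquation hW hσ).contDiffAt (hopen.mem_nhds hw)
  have hinv : (fderiv ℝ (normalEquation σ) (σ t₀, t₀) ∘L .inr ℝ E F).IsInvertible := by
    refine isInvertible_of_injective_of_finrank_eq (E := F) (F := F →L[ℝ] ℝ) ?_ ?_
    · refine (injective_iff_map_eq_zero _).2 fun v hv ↦ himm ?_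
      have hzero := DFunLike.congr_fun hv v
      simp only [ContinuousLinearMap.comp_apply, ContinuousLinearMap.inr_apply,
        fderiv_normalEquation_inr hW hσ ht₀] at hzero
      simpa using hzero
    · rw [← (LinearMap.toContinuousLinearMap (𝕜 := ℝ) (E := F) (F' := ℝ)).finrank_eq,
        Module.finrank_linearMap_self]
  have hsmooth := hnear.self_of_nhds
  refine ⟨hsmooth.implicitFunction (by simp) hinv,
    hsmooth.implicitFunction_apply_self (by simp) hinv,
    eventually_contDiffAt_implicitFunction hsmooth hnear (by simp) hinv, ?_⟩
  filter_upwards [hsmooth.eventually_apply_eq_iff_implicitFunction (by simp) hinv] with w hw hw0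
  exact (hw.1 (by rw [hw0, normalEquation_self])).symm

end Retraction

section NearestPoint

variable {ν : ℕ} {N : Set (ℝ^ν)}

/-- The coordinate subspace of `ℝ^ν` spanned by the first `d` coordinates. -/
def coordinateSubspace (ν d : ℕ) : Submodule ℝ (ℝ^ν) where
  carrier := {z | ∀ i : Fin ν, d ≤ (i : ℕ) → z i = 0}
  add_mem' hz hz' i hi := by simp [hz i hi, hz' i hi]
  zero_mem' _ _ := rfl
  smul_mem' c z hz i hi := by simp [hz i hi]

/-- A smooth immersion `σ` of an open set `W` of a normed space `T` into `N`, with `σ t₀ = x`,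
whose inverse extends to a map `τ` of the ambient space. -/
structure IsLocalParametrization {T : Type*} [NormedAddCommGroup T] [NormedSpace ℝ T]
    (N : Set (ℝ^ν)) (W : Set T) (σ : T → ℝ^ν)
    (τ : ℝ^ν → T) (t₀ : T) : Prop where
  isOpen : IsOpen W
  mem : t₀ ∈ W
  contDiffOn : ContDiffOn ℝ (⊤ : ℕ∞) σ W
  mapsTo : MapsTo σ W N
  injective_fderiv : Function.Injective (fderiv ℝ σ t₀)
  tendsto_inv : Tendsto τ (𝓝 (σ t₀)) (𝓝 t₀)
  eventually_right_inv : ∀ᶠ q in 𝓝 (σ t₀), q ∈ N → σ (τ q) = q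

theorem IsSmoothSubmanifold.exists_isLocalParametrization (hN : IsSmoothSubmanifold N)
    {x : ℝ^ν} (hx : x ∈ N) :
    ∃ (T : Submodule ℝ (ℝ^ν)) (W : Set T) (σ : T → ℝ^ν)
      (τ : ℝ^ν → T) (t₀ : T), IsLocalParametrization N W σ τ t₀ ∧ σ t₀ = x := by
  obtain ⟨d, hd⟩ := hN
  obtain ⟨U, V, φ, ψ, hU, hV, hxU, hφ, hψ, hφUV, hψVU, hψφ, hφψ, hNU⟩ := hd x hx
  set T := coordinateSubspace ν d
  obtain ⟨t₀, ht₀⟩ : ∃ t₀ : T, (t₀ : ℝ^ν) = φ x :=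
    ⟨⟨φ x, (hNU x hxU).1 hx⟩, rfl⟩
  have ht₀V : (t₀ : ℝ^ν) ∈ V := ht₀ ▸ hφUV hxU
  have hψt₀ : ψ t₀ = x := by rw [ht₀, hψφ x hxU]
  have hφx : ContDiffAt ℝ (⊤ : ℕ∞) φ (ψ t₀) := hψt₀ ▸ hφ.contDiffAt (hU.mem_nhds hxU)
  have hψd : DifferentiableAt ℝ ψ t₀ :=
    (hψ.contDiffAt (hV.mem_nhds ht₀V)).differentiableAt (by simp)
  have hinj : Function.Injective (fderiv ℝ ψ t₀) := by
    have hid : fderiv ℝ φ (ψ t₀) ∘L fderiv ℝ ψ t₀ = ContinuousLinearMap.id ℝ _ :=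
      ((hφx.differentiableAt (by simp)).hasFDerivAt.comp _ hψd.hasFDerivAt).unique
        ((hasFDerivAt_id _).congr_of_eventuallyEq
          (by filter_upwards [hV.mem_nhds ht₀V] with z hz using hφψ z hz))
    exact Function.LeftInverse.injective (DFunLike.congr_fun hid)
  refine ⟨T, (↑) ⁻¹' V, fun t ↦ ψ t, fun q ↦ T.orthogonalProjectionOnto (φ q), t₀,
    ⟨hV.preimage continuous_subtype_val, ht₀V, ?_, ?_, ?_, ?_, ?_⟩, hψt₀⟩
  · exact hψ.comp T.subtypeL.contDiff.contDiffOn fun t ht ↦ ht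
  · exact fun t ht ↦ (hNU _ (hψVU ht)).2 (by rw [hφψ _ ht]; exact t.2)
  · have hσd : fderiv ℝ (fun t : T ↦ ψ t) t₀ = fderiv ℝ ψ t₀ ∘L T.subtypeL :=
      (hψd.hasFDerivAt.comp t₀ T.subtypeL.hasFDerivAt).fderiv
    rw [hσd]
    exact hinj.comp Subtype.val_injective
  · have hcont := (T.orthogonalProjectionOnto.continuous.continuousAt.comp
      hφx.continuousAt).tendsto
    rwa [Function.comp_apply, hφψ _ ht₀V,
      Submodule.orthogonalProjectionOnto_mem_subspace_eq_self] at hcont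
  · filter_upwards [hU.mem_nhds (hψt₀ ▸ hxU)] with q hqU hqN
    have hφq : T.starProjection (φ q) = φ q :=
      T.starProjection_eq_self_iff.2 ((hNU q hqU).1 hqN)
    exact (congrArg ψ hφq).trans (hψφ q hqU)

theorem IsSmoothSubmanifold.eventually_contDiffAt_nearestPoint (hN : IsSmoothSubmanifold N)
    {P : ℝ^ν → ℝ^ν} (hPN : ∀ y, P y ∈ N)
    (hP : ∀ y, infDist y N = dist y (P y)) {x : ℝ^ν} (hx : x ∈ N) :
    ∀ᶠ y in 𝓝 x, ContDiffAt ℝ (⊤ : ℕ∞) P y := by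
  obtain ⟨T, W, σ, τ, t₀, hσ, rfl⟩ := hN.exists_isLocalParametrization hx
  obtain ⟨g, hgt₀, hg, hguniq⟩ := exists_contDiffAt_of_normalEquation_eq_zero
    hσ.isOpen hσ.contDiffOn hσ.mem hσ.injective_fderiv
  have hPx : Tendsto P (𝓝 (σ t₀)) (𝓝 (σ t₀)) := by
    have hbound : ∀ y, dist (P y) (σ t₀) ≤ 2 * dist y (σ t₀) := fun y ↦ by
      have hle : dist y (P y) ≤ dist y (σ t₀) := hP y ▸ infDist_le_dist_of_mem hx
      linarith [dist_triangle_left (P y) (σ t₀) y]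
    have hlim : Tendsto (fun y ↦ 2 * dist y (σ t₀)) (𝓝 (σ t₀)) (𝓝 0) := by
      simpa using (tendsto_id (α := ℝ^ν) (x := 𝓝 (σ t₀))).dist
        (tendsto_const_nhds (x := σ t₀)) |>.const_mul 2
    exact tendsto_iff_dist_tendsto_zero.2 (squeeze_zero (fun _ ↦ dist_nonneg) hbound hlim)
  have hτP : Tendsto (fun y ↦ τ (P y)) (𝓝 (σ t₀)) (𝓝 t₀) := hσ.tendsto_inv.comp hPx
  have heq : ∀ᶠ y in 𝓝 (σ t₀), P y = σ (g y) := by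
    filter_upwards [hPx.eventually hσ.eventually_right_inv,
      hτP.eventually (hσ.isOpen.mem_nhds hσ.mem),
      (tendsto_id.prodMk_nhds hτP).eventually hguniq] with y hy hyW hyuniq
    have hmin : IsLocalMin (fun t ↦ dist y (σ t)) (τ (P y)) := by
      filter_upwards [hσ.isOpen.mem_nhds hyW] with t ht
      rw [hy (hPN y), ← hP y]
      exact infDist_le_dist_of_mem (hσ.mapsTo ht)
    have hcrit := normalEquation_eq_zero_of_isLocalMin
      ((hσ.contDiffOn.contDiffAt (hσ.isOpen.mem_nhds hyW)).differentiableAt (by simp)) hmin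
    rw [← hy (hPN y)]
    exact congrArg σ (hyuniq hcrit)
  have hgW : ∀ᶠ y in 𝓝 (σ t₀), g y ∈ W :=
    hg.self_of_nhds.continuousAt.eventually (hgt₀.symm ▸ hσ.isOpen.mem_nhds hσ.mem)
  filter_upwards [hg, hgW, heq.eventually_nhds] with y hgy hyW heqy
  exact ((hσ.contDiffOn.contDiffAt (hσ.isOpen.mem_nhds hyW)).comp y hgy).congr_of_eventuallyEq heqy

/-- `P` maps the whole space to `N`, fixes `N`, and is smooth and `L`-Lipschitz on the
`δ`-neighbourhood of `N`. -/
structure IsTubularRetraction (N : Set (ℝ^ν)) (δ : ℝ) (L : NNReal)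
    (P : ℝ^ν → ℝ^ν) : Prop where
  pos : 0 < δ
  mem : ∀ y, P y ∈ N
  eq_self : ∀ y ∈ N, P y = y
  contDiffOn : ContDiffOn ℝ (⊤ : ℕ∞) P (thickening δ N)
  lipschitzOnWith : LipschitzOnWith L P (thickening δ N)

theorem IsSmoothSubmanifold.exists_isTubularRetraction (hN : IsSmoothSubmanifold N)
    (hNcpt : IsCompact N) (hne : N.Nonempty) : ∃ δ L P, IsTubularRetraction N δ L P := by
  choose P hPN hP using fun y ↦ hNcpt.exists_infDist_eq_dist hne y
  have hsmooth : N ⊆ interior {y | ContDiffAt ℝ (⊤ : ℕ∞) P y} := fun x hx ↦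
    mem_interior_iff_mem_nhds.2 (hN.eventually_contDiffAt_nearestPoint hPN hP hx)
  obtain ⟨δ, hδ, hsub⟩ := hNcpt.exists_cthickening_subset_open isOpen_interior hsmooth
  have hPδ : ∀ y ∈ cthickening δ N, ContDiffAt ℝ (⊤ : ℕ∞) P y := fun y hy ↦
    interior_subset (hsub hy)
  obtain ⟨L, hL⟩ := LocallyLipschitzOn.exists_lipschitzOnWith_of_compact (f := P)
    hNcpt.cthickening fun y hy ↦ by
      obtain ⟨K, t, ht, hK⟩ := ((hPδ y hy).of_le (m := 1) (by simp)).exists_lipschitzOnWith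
      exact ⟨K, t, mem_nhdsWithin_of_mem_nhds ht, hK⟩
  exact ⟨δ, L, P, hδ, hPN,
    fun y hy ↦ (dist_eq_zero.1 ((hP y).symm.trans (infDist_zero_of_mem hy))).symm,
    fun y hy ↦ (hPδ y (thickening_subset_cthickening δ N hy)).contDiffWithinAt,
    hL.mono (thickening_subset_cthickening δ N)⟩

end NearestPoint

section Spheroids

variable {Y : Type*} [TopologicalSpace Y] {N : Set Y} {b : N} {l : ℕ}

/-- A continuous map `ℝ^l → N` equal to the base point `b` outside the open ball of radius `R`:
the spherical picture of a generalized loop. -/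
structure IsSpheroid (b : N) (R : ℝ) (w : ℝ^l → Y) : Prop where
  continuous : Continuous w
  mem : ∀ x, w x ∈ N
  eq_base : ∀ x, R ≤ ‖x‖ → w x = b

theorem IsSpheroid.mono {R R' : ℝ} {w : ℝ^l → Y} (h : IsSpheroid b R w) (hR : R ≤ R') :
    IsSpheroid b R' w :=
  ⟨h.continuous, h.mem, fun x hx ↦ h.eq_base x (hR.trans hx)⟩

/-- The affine identification of the unit cube with `[-1, 1]^l`. -/
def cubeMap (t : Fin l → unitInterval) : ℝ^l :=
  WithLp.toLp 2 fun i ↦ 2 * (t i : ℝ) - 1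

theorem continuous_cubeMap : Continuous (cubeMap (l := l)) := by
  unfold cubeMap
  fun_prop

theorem exists_abs_cubeMap_eq_one {t : Fin l → unitInterval} (ht : t ∈ Cube.boundary (Fin l)) :
    ∃ i, |cubeMap t i| = 1 := by
  obtain ⟨i, hi | hi⟩ := ht <;> exact ⟨i, by norm_num [cubeMap, hi]⟩

theorem one_le_norm_cubeMap {t : Fin l → unitInterval} (ht : t ∈ Cube.boundary (Fin l)) :
    1 ≤ ‖cubeMap t‖ := by
  obtain ⟨i, hi⟩ := exists_abs_cubeMap_eq_one ht
  exact hi ▸ PiLp.norm_apply_le (cubeMap t) i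

/-- The retraction of `ℝ^l` onto the unit cube that inverts `cubeMap`. -/
def cubeClamp (x : ℝ^l) : Fin l → unitInterval :=
  fun i ↦ projIcc 0 1 zero_le_one ((1 + x i) / 2)

theorem continuous_cubeClamp : Continuous (cubeClamp (l := l)) :=
  continuous_pi fun i ↦ continuous_projIcc.comp (by fun_prop)

theorem cubeClamp_cubeMap (t : Fin l → unitInterval) : cubeClamp (cubeMap t) = t := by
  funext i
  have hti : (1 + (2 * (t i : ℝ) - 1)) / 2 = t i := by ring
  simp only [cubeClamp, cubeMap, hti]
  exact projIcc_val _ _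

theorem cubeClamp_mem_boundary {x : ℝ^l} (hx : ∃ i, 1 ≤ |x i|) :
    cubeClamp x ∈ Cube.boundary (Fin l) := by
  obtain ⟨i, hi⟩ := hx
  refine ⟨i, ?_⟩
  rcases le_abs.1 hi with hi | hi
  · exact Or.inr (projIcc_of_right_le _ (by linarith))
  · exact Or.inl (projIcc_of_le_left _ (by linarith))

theorem norm_le_sum_abs (x : ℝ^l) : ‖x‖ ≤ ∑ i, |x i| :=
  calc ‖x‖ = ‖∑ i, x i • EuclideanSpace.single i (1 : ℝ)‖ := by
        simpa using congrArg norm ((EuclideanSpace.basisFun (Fin l) ℝ).sum_repr x).symm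
    _ ≤ ∑ i, ‖x i • EuclideanSpace.single i (1 : ℝ)‖ := norm_sum_le _ _
    _ = ∑ i, |x i| := by simp [norm_smul]

theorem exists_one_le_abs_of_le_norm {x : ℝ^l} (hx : l + 1 ≤ ‖x‖) : ∃ i, 1 ≤ |x i| := by
  by_contra! hlt
  have hsum : ∑ i, |x i| ≤ ∑ _i : Fin l, (1 : ℝ) := Finset.sum_le_sum fun i _ ↦ (hlt i).le
  simp only [Finset.sum_const, Finset.card_univ, Fintype.card_fin, nsmul_eq_mul, mul_one] at hsum
  linarith [norm_le_sum_abs x]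

/-- The generalized loop on the unit cube defined by a spheroid of radius `1`. -/
def IsSpheroid.toGenLoop {w : ℝ^l → Y} (h : IsSpheroid b 1 w) : GenLoop (Fin l) N b :=
  ⟨⟨fun t ↦ ⟨w (cubeMap t), h.mem _⟩, (h.continuous.comp continuous_cubeMap).subtype_mk _⟩,
    fun _ ht ↦ Subtype.ext (h.eq_base _ (one_le_norm_cubeMap ht))⟩

/-- `w` is a spheroid of radius `R ≤ 1` in the class `α ∈ π_l(N, b)`. -/
structure IsRepresentative (α : HomotopyGroup (Fin l) N b) (R : ℝ) (w : ℝ^l → Y) : Prop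
    extends IsSpheroid b R w where
  le_one : R ≤ 1
  class_eq : Quotient.mk (GenLoop.Homotopic.setoid (Fin l) b) (toIsSpheroid.mono le_one).toGenLoop
    = α

variable {α : HomotopyGroup (Fin l) N b} {R R' : ℝ} {w w' : ℝ^l → Y}

theorem IsRepresentative.unique {α' : HomotopyGroup (Fin l) N b} (h : IsRepresentative α R w)
    (h' : IsRepresentative α' R' w) : α = α' :=
  h.class_eq.symm.trans h'.class_eq

theorem IsRepresentative.of_homotopy (h : IsRepresentative α R w) (h' : IsSpheroid b R' w')
    (hR' : R' ≤ 1) {H : ℝ × ℝ^l → Y} (hH : ContinuousOn H (Icc 0 1 ×ˢ univ))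
    (hHN : ∀ s ∈ Icc (0 : ℝ) 1, ∀ x, H (s, x) ∈ N)
    (hHb : ∀ s ∈ Icc (0 : ℝ) 1, ∀ x, 1 ≤ ‖x‖ → H (s, x) = b)
    (hH₀ : ∀ x, H (0, x) = w x) (hH₁ : ∀ x, H (1, x) = w' x) : IsRepresentative α R' w' := by
  refine ⟨h', hR', Eq.trans (Eq.symm ?_) h.class_eq⟩
  refine Quotient.sound ⟨⟨⟨⟨fun q ↦ ⟨H (q.1, cubeMap q.2), hHN _ q.1.2 _⟩, ?_⟩, ?_, ?_⟩, ?_⟩⟩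
  · have hpair : Continuous fun q : unitInterval × (Fin l → unitInterval) ↦
        ((q.1 : ℝ), cubeMap q.2) :=
      (continuous_subtype_val.comp continuous_fst).prodMk (continuous_cubeMap.comp continuous_snd)
    exact (hH.comp_continuous hpair fun q ↦ ⟨q.1.2, mem_univ _⟩).subtype_mk _
  · exact fun t ↦ Subtype.ext (hH₀ _)
  · exact fun t ↦ Subtype.ext (hH₁ _)
  · intro s t ht
    have hnorm := one_le_norm_cubeMap ht
    exact Subtype.ext ((hHb s s.2 _ hnorm).trans ((h.mono h.le_one).eq_base _ hnorm).symm)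

theorem exists_isRepresentative (α : HomotopyGroup (Fin l) N b) {r : ℝ} (hr : 0 < r)
    (hr1 : r ≤ 1) : ∃ w, IsRepresentative α r w := by
  obtain ⟨f, rfl⟩ := Quotient.exists_rep α
  set c : ℝ := (l + 1) / r
  have hc : 1 ≤ c := (one_le_div hr).2 (by linarith [(Nat.cast_nonneg l : (0 : ℝ) ≤ l)])
  have hw : IsSpheroid b r fun x : ℝ^l ↦ (f (cubeClamp (c • x)) : Y) := by
    refine ⟨continuous_subtype_val.comp (f.1.continuous.comp
      (continuous_cubeClamp.comp (continuous_const_smul c))), fun x ↦ (f _).2, fun x hx ↦ ?_⟩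
    rw [GenLoop.boundary f _ (cubeClamp_mem_boundary (exists_one_le_abs_of_le_norm ?_))]
    rw [norm_smul, Real.norm_of_nonneg (by linarith)]
    calc (l + 1 : ℝ) = c * r := (div_mul_cancel₀ _ hr.ne').symm
      _ ≤ c * ‖x‖ := by gcongr
  refine ⟨_, hw, hr1, Quotient.sound ⟨⟨⟨⟨fun q ↦ f (cubeClamp
    ((c + q.1 * (1 - c)) • cubeMap q.2)), ?_⟩, ?_, ?_⟩, ?_⟩⟩⟩
  · have hscale : Continuous fun q : unitInterval × (Fin l → unitInterval) ↦
        c + (q.1 : ℝ) * (1 - c) := by fun_prop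
    exact f.1.continuous.comp (continuous_cubeClamp.comp
      (hscale.smul (continuous_cubeMap.comp continuous_snd)))
  · exact fun t ↦ Subtype.ext (by simp [IsSpheroid.toGenLoop])
  · exact fun t ↦ by simp [cubeClamp_cubeMap]
  · intro s t ht
    have hbdry : cubeClamp ((c + s * (1 - c)) • cubeMap t) ∈ Cube.boundary (Fin l) := by
      obtain ⟨i, hi⟩ := exists_abs_cubeMap_eq_one ht
      refine cubeClamp_mem_boundary ⟨i, ?_⟩
      rw [PiLp.smul_apply, smul_eq_mul, abs_mul, hi, mul_one]
      exact le_abs.2 (Or.inl (by nlinarith [s.2.1, s.2.2]))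
    exact (GenLoop.boundary f _ hbdry).trans
      (Subtype.ext ((hw.mono hr1).eq_base _ (one_le_norm_cubeMap ht)).symm)

end Spheroids

/-- The straight line from `w x` to `v x` stays in the tubular neighbourhood, so its projection
to `N` is a homotopy from `w` to `P ∘ v`. -/
theorem IsRepresentative.retract_of_dist_lt {l ν : ℕ} {N : Set (ℝ^ν)} {δ : ℝ} {L : NNReal}
    {P : ℝ^ν → ℝ^ν} {b : N} {α : HomotopyGroup (Fin l) N b} {R R' : ℝ} {v w : ℝ^l → ℝ^ν}
    (hw : IsRepresentative α R w) (hP : IsTubularRetraction N δ L P) (hv : Continuous v)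
    (hvb : ∀ x, R' ≤ ‖x‖ → v x = b) (hR' : R' ≤ 1) (hvw : ∀ x, dist (v x) (w x) < δ) :
    IsRepresentative α R' (P ∘ v) := by
  have hline : ∀ s ∈ Icc (0 : ℝ) 1, ∀ x, w x + s • (v x - w x) ∈ thickening δ N := by
    intro s hs x
    refine mem_thickening_iff.2 ⟨w x, hw.mem x, ?_⟩
    rw [dist_self_add_left, norm_smul, Real.norm_of_nonneg hs.1, ← dist_eq_norm]
    exact (mul_le_of_le_one_left dist_nonneg hs.2).trans_lt (hvw x)
  have hPb : P b = b := hP.eq_self b b.2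
  have hlineCont : Continuous fun q : ℝ × ℝ^l ↦ w q.2 + q.1 • (v q.2 - w q.2) :=
    (hw.continuous.comp continuous_snd).add (continuous_fst.smul
      ((hv.comp continuous_snd).sub (hw.continuous.comp continuous_snd)))
  have hH : ContinuousOn (fun q : ℝ × ℝ^l ↦ P (w q.2 + q.1 • (v q.2 - w q.2)))
      (Icc 0 1 ×ˢ univ) :=
    hP.contDiffOn.continuousOn.comp hlineCont.continuousOn fun q hq ↦ hline q.1 hq.1 q.2
  have hPv : IsSpheroid b R' (P ∘ v) := by
    refine ⟨?_, fun x ↦ hP.mem _, fun x hx ↦ by rw [Function.comp_apply, hvb x hx, hPb]⟩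
    refine hP.contDiffOn.continuousOn.comp_continuous hv fun x ↦ ?_
    simpa using hline 1 (by simp) x
  refine hw.of_homotopy hPv hR' hH (fun s _ x ↦ hP.mem _) (fun s _ x hx ↦ ?_) (fun x ↦ ?_)
    fun x ↦ ?_
  · simp only [hvb x (hR'.trans hx), (hw.mono hw.le_one).eq_base x hx, sub_self, smul_zero,
      add_zero, hPb]
  · simp [hP.eq_self _ (hw.mem x)]
  · simp

section Gagliardo

theorem ofReal_norm_rpow {G : Type*} [NormedAddCommGroup G] (v : G) {p : ℝ} (hp : 0 ≤ p) :
    ENNReal.ofReal (‖v‖ ^ p) = ‖v‖ₑ ^ p := by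
  rw [← ENNReal.ofReal_rpow_of_nonneg (norm_nonneg _) hp, ofReal_norm]

theorem lintegral_rpow_le_lintegral_rpow {Ω : Type*} [MeasurableSpace Ω] (μ : Measure Ω)
    [IsProbabilityMeasure μ] {p : ℝ} (hp : 1 ≤ p) {f : Ω → ℝ≥0∞} (hf : AEMeasurable f μ) :
    (∫⁻ z, f z ∂μ) ^ p ≤ ∫⁻ z, f z ^ p ∂μ := by
  have hp0 : 0 < p := by linarith
  calc (∫⁻ z, f z ∂μ) ^ p = eLpNorm' f 1 μ ^ p := by simp [eLpNorm']
    _ ≤ eLpNorm' f p μ ^ p := by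
        gcongr
        exact eLpNorm'_le_eLpNorm'_of_exponent_le zero_lt_one hp μ hf.aestronglyMeasurable
    _ = ∫⁻ z, f z ^ p ∂μ := by simp [eLpNorm', ← ENNReal.rpow_mul, hp0.ne']

theorem enorm_integral_rpow_le {Ω G : Type*} [MeasurableSpace Ω] (μ : Measure Ω)
    [IsProbabilityMeasure μ] [NormedAddCommGroup G] [NormedSpace ℝ G] {p : ℝ} (hp : 1 ≤ p)
    (f : Ω → G) : ‖∫ z, f z ∂μ‖ₑ ^ p ≤ ∫⁻ z, ‖f z‖ₑ ^ p ∂μ := by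
  have hp0 : 0 < p := by linarith
  by_cases hf : AEStronglyMeasurable f μ
  · calc ‖∫ z, f z ∂μ‖ₑ ^ p ≤ (∫⁻ z, ‖f z‖ₑ ∂μ) ^ p := by
          gcongr
          exact enorm_integral_le_lintegral_enorm f
      _ ≤ ∫⁻ z, ‖f z‖ₑ ^ p ∂μ := lintegral_rpow_le_lintegral_rpow μ hp hf.enorm
  · simp [integral_non_aestronglyMeasurable hf, hp0]

variable {l ν : ℕ} {G : Type*} [NormedAddCommGroup G] {s p : ℝ}

/-- The `p`-th power of the `L^p` norm of the increment `x ↦ w (x + h) - w x`. -/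
def incrementEnergy (p : ℝ) (w : ℝ^l → G) (h : ℝ^l) : ℝ≥0∞ :=
  ∫⁻ x, ‖w (x + h) - w x‖ₑ ^ p

theorem gagliardoE_univ (hp : 0 ≤ p) {w : ℝ^l → ℝ^ν} (hw : Continuous w) :
    gagliardoE s p univ w =
      ∫⁻ h, incrementEnergy p w h * ENNReal.ofReal (‖h‖ ^ (l + s * p))⁻¹ := by
  have hmeas : Measurable fun q : ℝ^l × ℝ^l ↦
      ‖w (q.1 + q.2) - w q.1‖ₑ ^ p * ENNReal.ofReal (‖q.2‖ ^ (l + s * p))⁻¹ :=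
    (Continuous.measurable (by fun_prop)).pow_const p |>.mul
      (measurable_snd.norm.pow_const _).inv.ennreal_ofReal
  calc gagliardoE s p univ w
      = ∫⁻ x, ∫⁻ h, ‖w (x + h) - w x‖ₑ ^ p * ENNReal.ofReal (‖h‖ ^ (l + s * p))⁻¹ := by
        simp only [gagliardoE, Measure.restrict_univ]
        refine lintegral_congr fun x ↦ ?_
        rw [← lintegral_add_left_eq_self _ x]
        refine lintegral_congr fun h ↦ ?_
        rw [div_eq_mul_inv, ENNReal.ofReal_mul (by positivity), ofReal_norm_rpow _ hp,
          add_sub_cancel_left]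
    _ = ∫⁻ h, ∫⁻ x, ‖w (x + h) - w x‖ₑ ^ p * ENNReal.ofReal (‖h‖ ^ (l + s * p))⁻¹ :=
        lintegral_lintegral_swap hmeas.aemeasurable
    _ = _ := by
        refine lintegral_congr fun h ↦ lintegral_mul_const _ ?_
        exact (Continuous.measurable (by fun_prop)).pow_const p

theorem gagliardoE_mono_set {A B : Set (ℝ^l)} (hAB : A ⊆ B) (w : ℝ^l → ℝ^ν) :
    gagliardoE s p A w ≤ gagliardoE s p B w :=
  (lintegral_mono_set hAB).trans (lintegral_mono fun _ ↦ lintegral_mono_set hAB)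

theorem gagliardoE_le_of_norm_sub_le (hp : 0 ≤ p) (A : Set (ℝ^l)) {ν' : ℕ} {v : ℝ^l → ℝ^ν'}
    {w : ℝ^l → ℝ^ν} {L : NNReal} (hvw : ∀ x y, ‖v y - v x‖ ≤ L * ‖w y - w x‖) :
    gagliardoE s p A v ≤ (L : ℝ≥0∞) ^ p * gagliardoE s p A w := by
  have hL : (L : ℝ≥0∞) ^ p ≠ ∞ := ENNReal.rpow_ne_top_of_nonneg hp ENNReal.coe_ne_top
  rw [gagliardoE, gagliardoE, ← lintegral_const_mul' _ _ hL]
  refine lintegral_mono fun x ↦ ?_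
  rw [← lintegral_const_mul' _ _ hL]
  refine lintegral_mono fun y ↦ ?_
  rw [← ENNReal.ofReal_coe_nnreal, ENNReal.ofReal_rpow_of_nonneg L.coe_nonneg hp,
    ← ENNReal.ofReal_mul (by positivity)]
  refine ENNReal.ofReal_le_ofReal ?_
  rw [← mul_div_assoc, ← Real.mul_rpow L.coe_nonneg (norm_nonneg _)]
  gcongr
  exact hvw x y

theorem incrementEnergy_average_le [NormedSpace ℝ G] (μ : Measure (ℝ^l)) [IsProbabilityMeasure μ]
    (hp : 1 ≤ p) {w : ℝ^l → G} (hw : Continuous w)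
    (hint : ∀ x, Integrable (fun t ↦ w (x - t)) μ) (h : ℝ^l) :
    incrementEnergy p (fun x ↦ ∫ t, w (x - t) ∂μ) h ≤ incrementEnergy p w h := by
  have hmeas : Measurable fun q : ℝ^l × ℝ^l ↦ ‖w (q.1 + h - q.2) - w (q.1 - q.2)‖ₑ ^ p :=
    (Continuous.enorm (by fun_prop)).measurable.pow_const p
  calc incrementEnergy p (fun x ↦ ∫ t, w (x - t) ∂μ) h
      ≤ ∫⁻ x, ∫⁻ t, ‖w (x + h - t) - w (x - t)‖ₑ ^ p ∂μ := by
        refine lintegral_mono fun x ↦ ?_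
        rw [← integral_sub (hint _) (hint _)]
        exact enorm_integral_rpow_le μ hp _
    _ = ∫⁻ t, (∫⁻ x, ‖w (x + h - t) - w (x - t)‖ₑ ^ p) ∂μ :=
        lintegral_lintegral_swap hmeas.aemeasurable
    _ = ∫⁻ _, incrementEnergy p w h ∂μ := by
        refine lintegral_congr fun t ↦ ?_
        rw [incrementEnergy, ← lintegral_sub_right_eq_self (fun x ↦ ‖w (x + h) - w x‖ₑ ^ p) t]
        simp only [sub_add_eq_add_sub]
    _ = incrementEnergy p w h := by simp

open scoped Convolution in
theorem gagliardoE_normed_convolution_le (φ : ContDiffBump (0 : ℝ^l)) (hp : 1 ≤ p)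
    {w : ℝ^l → ℝ^ν} (hw : Continuous w)
    (hφw : Continuous (φ.normed volume ⋆[ContinuousLinearMap.lsmul ℝ ℝ] w)) :
    gagliardoE s p univ (φ.normed volume ⋆[ContinuousLinearMap.lsmul ℝ ℝ] w) ≤
      gagliardoE s p univ w := by
  set ρ : ℝ^l → ℝ≥0∞ := fun t ↦ ENNReal.ofReal (φ.normed volume t)
  have hρ : Measurable ρ := φ.continuous_normed.measurable.ennreal_ofReal
  have hρtop : ∀ᵐ t : ℝ^l, ρ t < ∞ := .of_forall fun _ ↦ ENNReal.ofReal_lt_top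
  have hρreal (t : ℝ^l) : (ρ t).toReal = φ.normed volume t :=
    ENNReal.toReal_ofReal (φ.nonneg_normed t)
  have : IsProbabilityMeasure (volume.withDensity ρ) := ⟨by
    rw [withDensity_apply _ .univ, Measure.restrict_univ,
      ← ofReal_integral_eq_lintegral_ofReal φ.integrable_normed (.of_forall φ.nonneg_normed),
      φ.integral_normed, ENNReal.ofReal_one]⟩
  have hconv : (φ.normed volume ⋆[ContinuousLinearMap.lsmul ℝ ℝ] w) =
      fun x ↦ ∫ t, w (x - t) ∂(volume.withDensity ρ) := by
    ext1 x
    rw [integral_withDensity_eq_integral_toReal_smul hρ hρtop]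
    simp only [convolution_def, ContinuousLinearMap.lsmul_apply, hρreal]
  have hint (x : ℝ^l) : Integrable (fun t ↦ w (x - t)) (volume.withDensity ρ) := by
    rw [integrable_withDensity_iff_integrable_smul' hρ hρtop]
    simp only [hρreal]
    exact (φ.continuous_normed.smul (by fun_prop)).integrable_of_hasCompactSupport
      φ.hasCompactSupport_normed.smul_right
  rw [gagliardoE_univ (by linarith) hφw, gagliardoE_univ (by linarith) hw]
  refine lintegral_mono fun h ↦ ?_
  gcongr
  rw [hconv]
  exact incrementEnergy_average_le _ hp hw hint h

theorem IsSpheroid.uniformContinuous {N : Set G} {b : N} {R : ℝ} {w : ℝ^l → G}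
    (hw : IsSpheroid b R w) : UniformContinuous w := by
  have hsupp : HasCompactSupport (w - fun _ ↦ (b : G)) :=
    HasCompactSupport.intro (isCompact_closedBall 0 R) fun x hx ↦ sub_eq_zero.2
      (hw.eq_base x (not_le.1 fun h ↦ hx (mem_closedBall_zero_iff.2 h)).le)
  simpa using (hsupp.uniformContinuous_of_continuous (hw.continuous.sub continuous_const)).add
    (uniformContinuous_const (b := (b : G)))

open scoped Convolution in
theorem IsSpheroid.normed_convolution_eq_base [NormedSpace ℝ G] [CompleteSpace G] {N : Set G}
    {b : N} {R : ℝ} {w : ℝ^l → G} (hw : IsSpheroid b R w) (φ : ContDiffBump (0 : ℝ^l)) {x : ℝ^l}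
    (hx : R + φ.rOut ≤ ‖x‖) :
    (φ.normed volume ⋆[ContinuousLinearMap.lsmul ℝ ℝ] w) x = b := by
  have hball : ∀ y ∈ ball x φ.rOut, w y = b := fun y hy ↦ by
    have hxy : ‖x‖ - ‖y‖ ≤ dist y x := by
      rw [dist_comm, dist_eq_norm]
      exact norm_sub_norm_le x y
    exact hw.eq_base y (by linarith [mem_ball.1 hy])
  have hwx : w x = b := hball x (mem_ball_self φ.rOut_pos)
  exact (φ.normed_convolution_eq_right fun y hy ↦ (hball y hy).trans hwx.symm).trans hwx

open scoped Convolution in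
theorem IsRepresentative.exists_contDiff {N : Set (ℝ^ν)} {δ : ℝ} {L : NNReal}
    {P : ℝ^ν → ℝ^ν} {b : N} {α : HomotopyGroup (Fin l) N b} {R R' : ℝ} {w : ℝ^l → ℝ^ν}
    (hw : IsRepresentative α R w) (hP : IsTubularRetraction N δ L P) (hp : 1 ≤ p)
    (hRR' : R < R') (hR' : R' ≤ 1) :
    ∃ u, IsRepresentative α R' u ∧ ContDiff ℝ (⊤ : ℕ∞) u ∧
      gagliardoE s p univ u ≤ (L : ℝ≥0∞) ^ p * gagliardoE s p univ w := by
  have hwc : Continuous w := hw.continuous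
  obtain ⟨η, hη, hηw⟩ := Metric.uniformContinuous_iff.1 hw.uniformContinuous _ (half_pos hP.pos)
  obtain ⟨r, hr, hrη⟩ := exists_between (lt_min hη (sub_pos.2 hRR'))
  obtain ⟨hrη, hrR⟩ := lt_min_iff.1 hrη
  let φ : ContDiffBump (0 : ℝ^l) := ⟨r / 2, r, half_pos hr, half_lt_self hr⟩
  set v := φ.normed volume ⋆[ContinuousLinearMap.lsmul ℝ ℝ] w
  have hv : ContDiff ℝ (⊤ : ℕ∞) v := φ.hasCompactSupport_normed.contDiff_convolution_left _
    φ.contDiff_normed hwc.locallyIntegrable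
  have hvw (x : ℝ^l) : dist (v x) (w x) < δ :=
    (φ.dist_normed_convolution_le hwc.aestronglyMeasurable fun y hy ↦
      (hηw ((mem_ball.1 hy).trans hrη)).le).trans_lt (half_lt_self hP.pos)
  have hvb (x : ℝ^l) (hx : R' ≤ ‖x‖) : v x = b :=
    hw.normed_convolution_eq_base φ (show R + r ≤ ‖x‖ by linarith)
  have hvN (x : ℝ^l) : v x ∈ thickening δ N := mem_thickening_iff.2 ⟨w x, hw.mem x, hvw x⟩
  refine ⟨P ∘ v, hw.retract_of_dist_lt hP hv.continuous hvb hR' hvw,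
    hP.contDiffOn.comp_contDiff hv hvN, ?_⟩
  calc gagliardoE s p univ (P ∘ v) ≤ (L : ℝ≥0∞) ^ p * gagliardoE s p univ v :=
        gagliardoE_le_of_norm_sub_le (by linarith) _ fun x y ↦ by
          simpa [dist_eq_norm] using hP.lipschitzOnWith.dist_le_mul _ (hvN y) _ (hvN x)
    _ ≤ (L : ℝ≥0∞) ^ p * gagliardoE s p univ w := by
        gcongr
        exact gagliardoE_normed_convolution_le φ hp hwc hv.continuous

theorem volume_mul_volume_mul_le_gagliardoE {A B S : Set (ℝ^l)} (hA : MeasurableSet A)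
    (hB : MeasurableSet B) (hAS : A ⊆ S) (hBS : B ⊆ S) (hp : 0 ≤ p) (hsp : 0 ≤ l + s * p)
    {w : ℝ^l → ℝ^ν} {m d : ℝ} (hm : 0 < m) (hw : ∀ x ∈ A, ∀ y ∈ B, m ≤ ‖w y - w x‖)
    (hd : ∀ x ∈ A, ∀ y ∈ B, ‖y - x‖ ≤ d) :
    volume A * volume B * ENNReal.ofReal (m ^ p / d ^ (l + s * p)) ≤ gagliardoE s p S w := by
  have hpoint : ∀ x ∈ A, ∀ y ∈ B, ENNReal.ofReal (m ^ p / d ^ (l + s * p)) ≤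
      ENNReal.ofReal (‖w y - w x‖ ^ p / ‖y - x‖ ^ (l + s * p)) := fun x hx y hy ↦ by
    have hxy : 0 < ‖y - x‖ := norm_pos_iff.2 fun h ↦ by
      have := hw x hx y hy
      rw [sub_eq_zero.1 h, sub_self, norm_zero] at this
      linarith
    have := hw x hx y hy
    have := hd x hx y hy
    gcongr
  calc volume A * volume B * ENNReal.ofReal (m ^ p / d ^ (l + s * p))
      = ∫⁻ _ in A, ∫⁻ _ in B, ENNReal.ofReal (m ^ p / d ^ (l + s * p)) := by
        rw [setLIntegral_const, setLIntegral_const]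
        ring
    _ ≤ ∫⁻ x in A, ∫⁻ y in B, ENNReal.ofReal (‖w y - w x‖ ^ p / ‖y - x‖ ^ (l + s * p)) :=
        setLIntegral_mono' hA fun x hx ↦ setLIntegral_mono' hB (hpoint x hx)
    _ ≤ gagliardoE s p S w :=
        (lintegral_mono_set hAS).trans (lintegral_mono fun _ ↦ lintegral_mono_set hBS)

theorem exists_ball_subset_unit_ball {E : Type*} [NormedAddCommGroup E] [NormedSpace ℝ E] {x : E}
    (hx : x ∈ ball (0 : E) 1) {r : ℝ} (hr : 0 ≤ r) (hr1 : r ≤ 1) :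
    ∃ x', ball x' r ⊆ ball 0 1 ∩ ball x (2 * r) := by
  have hx1 : ‖x‖ < 1 := mem_ball_zero_iff.1 hx
  refine ⟨(1 - r) • x, subset_inter (ball_subset_ball' ?_) (ball_subset_ball' ?_)⟩
  · rw [dist_zero_right, norm_smul, Real.norm_of_nonneg (by linarith)]
    nlinarith
  · rw [dist_eq_norm, sub_smul, one_smul, sub_sub_cancel_left, norm_neg, norm_smul,
      Real.norm_of_nonneg hr]
    nlinarith

theorem scaled_ball_energy_eq {θ ρ K α : ℝ} (hρ : 0 < ρ) (hK : 0 ≤ K)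
    (hsp : s * p = l + α * p) :
    (θ * ρ / 2) ^ l * (θ * ρ / 2) ^ l * ((K / 4 * ρ ^ α) ^ p / (2 * ρ) ^ (l + s * p)) =
      (θ / 2) ^ (2 * l) * (1 / 4) ^ p / 2 ^ (l + s * p) * K ^ p := by
  have hρα : ρ ^ (l + s * p) = ρ ^ (2 * l) * (ρ ^ α) ^ p := by
    rw [← Real.rpow_mul hρ.le, ← Real.rpow_natCast, ← Real.rpow_add hρ, hsp]
    push_cast
    ring_nf
  rw [Real.mul_rpow zero_le_two hρ.le, hρα, Real.mul_rpow (by positivity) (by positivity),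
    div_eq_mul_one_div K, Real.mul_rpow hK (by norm_num), ← pow_add, ← two_mul, mul_div_right_comm,
    mul_pow]
  field_simp

theorem quarter_mul_rpow_le_dist_of_holderOnWith {X Y : Type*} [PseudoMetricSpace X]
    [PseudoMetricSpace Y] {A : Set X} {f : X → Y} {K α : NNReal} (hf : HolderOnWith K α f A)
    {θ : ℝ} (hθ : 0 ≤ θ) (hθα : θ ^ (α : ℝ) ≤ 1 / 8)
    {x y z z' : X} (hx : x ∈ A) (hy : y ∈ A) (hz : z ∈ A) (hz' : z' ∈ A)
    (hxz : dist x z ≤ θ * dist x y) (hyz : dist z' y ≤ θ * dist x y)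
    (hxy : K / 2 * dist x y ^ (α : ℝ) ≤ dist (f x) (f y)) :
    K / 4 * dist x y ^ (α : ℝ) ≤ dist (f z) (f z') := by
  have hθK : K * (θ * dist x y) ^ (α : ℝ) ≤ K / 8 * dist x y ^ (α : ℝ) := by
    rw [Real.mul_rpow hθ dist_nonneg, ← mul_assoc]
    gcongr
    linarith [mul_le_mul_of_nonneg_left hθα K.coe_nonneg]
  have hxz' := hf.dist_le_of_le hx hz hxz
  have hyz' := hf.dist_le_of_le hz' hy hyz
  linarith [dist_triangle4 (f x) (f z) (f z') (f y)]

/-- Around two points violating the Hölder bound with constant `K / 2`, the Hölder bound with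
constant `K` keeps the values of `w` apart on balls of radius comparable to their distance. -/
theorem le_gagliardoE_of_holderOnWith {α : NNReal} {w : ℝ^l → ℝ^ν} {K : NNReal} {θ : ℝ}
    (hp : 0 ≤ p) (hsp : s * p = l + α * p) (hθ : 0 < θ) (hθ1 : θ ≤ 1 / 2)
    (hθα : θ ^ (α : ℝ) ≤ 1 / 8) (hw : HolderOnWith K α w (ball 0 1)) {x y : ℝ^l}
    (hx : x ∈ ball 0 1) (hy : y ∈ ball 0 1)
    (hxy : K / 2 * dist x y ^ (α : ℝ) < dist (w x) (w y)) :
    volume (ball (0 : ℝ^l) 1) ^ 2 *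
      ENNReal.ofReal ((θ / 2) ^ (2 * l) * (1 / 4) ^ p / 2 ^ (l + s * p) * K ^ p) ≤
      gagliardoE s p (ball 0 1) w := by
  set ρ := dist x y
  have hρ : 0 < ρ := dist_pos.2 fun h ↦ by
    rw [h, dist_self] at hxy
    exact hxy.not_ge (by positivity)
  have hρ2 : ρ < 2 := by linarith [dist_triangle_right x y 0, mem_ball.1 hx, mem_ball.1 hy]
  have hr : 0 < θ * ρ / 2 := by positivity
  have hr1 : θ * ρ / 2 ≤ 1 := by nlinarith
  obtain ⟨x', hx'⟩ := exists_ball_subset_unit_ball hx hr.le hr1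
  obtain ⟨y', hy'⟩ := exists_ball_subset_unit_ball hy hr.le hr1
  rw [mul_div_cancel₀ _ two_ne_zero] at hx' hy'
  have hdist : 0 < K / 4 * ρ ^ (α : ℝ) := by linarith [hw.dist_le hx hy]
  have henergy := volume_mul_volume_mul_le_gagliardoE (s := s) (w := w) (d := 2 * ρ)
    measurableSet_ball measurableSet_ball (hx'.trans inter_subset_left)
    (hy'.trans inter_subset_left) hp (by rw [hsp]; positivity) hdist (fun z hz z' hz' ↦ ?_)
    fun z hz z' hz' ↦ ?_
  · rw [Measure.addHaar_ball_of_pos _ _ hr, Measure.addHaar_ball_of_pos _ _ hr,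
      finrank_euclideanSpace_fin] at henergy
    rw [← scaled_ball_energy_eq hρ K.coe_nonneg hsp, ENNReal.ofReal_mul (by positivity),
      ENNReal.ofReal_mul (by positivity)]
    exact le_of_eq_of_le (by ring) henergy
  · rw [← dist_eq_norm, dist_comm]
    exact quarter_mul_rpow_le_dist_of_holderOnWith hw hθ.le hθα hx hy (hx' hz).1 (hy' hz').1
      (mem_ball'.1 (hx' hz).2).le (mem_ball.1 (hy' hz').2).le hxy.le
  · rw [← dist_eq_norm, dist_comm]
    have hθρ : θ * ρ ≤ ρ / 2 := by nlinarith
    linarith [dist_triangle4 z x y z', mem_ball.1 (hx' hz).2, mem_ball'.1 (hy' hz').2]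

theorem exists_nnHolderNorm_half_mul_lt_dist {X Y : Type*} [MetricSpace X] [MetricSpace Y]
    {f : X → Y} {α : NNReal} (hf : nnHolderNorm α f ≠ 0) :
    ∃ x y, (nnHolderNorm α f : ℝ) / 2 * dist x y ^ (α : ℝ) < dist (f x) (f y) := by
  by_contra! hle
  have hhalf : HolderWith (nnHolderNorm α f / 2) α f := fun x y ↦ by
    rw [edist_nndist, edist_nndist, ← ENNReal.coe_rpow_of_nonneg _ α.coe_nonneg,
      ← ENNReal.coe_mul, ENNReal.coe_le_coe]
    exact hle x y
  exact hhalf.nnholderNorm_le.not_gt (NNReal.half_lt_self hf)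

theorem exists_rpow_le {α ε c : ℝ} (hα : 0 < α) (hε : 0 < ε) (hc : 0 < c) :
    ∃ θ, 0 < θ ∧ θ ≤ c ∧ θ ^ α ≤ ε := by
  have htend : Tendsto (fun θ : ℝ ↦ θ ^ α) (𝓝[>] 0) (𝓝 0) := by
    simpa only [Real.zero_rpow hα.ne'] using
      (Real.continuousAt_rpow_const 0 α (.inr hα.le)).tendsto.mono_left nhdsWithin_le_nhds
  obtain ⟨θ, hθε, hθ⟩ := ((htend.eventually (Iic_mem_nhds hε)).and (Ioc_mem_nhdsGT hc)).exists
  exact ⟨θ, hθ.1, hθ.2, hθε⟩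

theorem exists_mul_nnHolderNorm_le_gagliardoE (l ν : ℕ) {α : NNReal} (hα : 0 < α) (hp : 0 < p)
    (hsp : s * p = l + α * p) :
    ∃ c : ℝ≥0∞, c ≠ 0 ∧ ∀ w : ℝ^l → ℝ^ν, MemHolder α ((ball 0 1).domRestrict w) →
      c * (nnHolderNorm α ((ball 0 1).domRestrict w) : ℝ≥0∞) ^ p ≤
        gagliardoE s p (ball 0 1) w := by
  obtain ⟨θ, hθ, hθ1, hθα⟩ := exists_rpow_le (NNReal.coe_pos.2 hα)
    (by norm_num : (0 : ℝ) < 1 / 8) (by norm_num : (0 : ℝ) < 1 / 2)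
  have hc : 0 < (θ / 2) ^ (2 * l) * (1 / 4) ^ p / 2 ^ (l + s * p) := by positivity
  have hvol : volume (ball (0 : ℝ^l) 1) ≠ 0 := (measure_ball_pos volume 0 one_pos).ne'
  refine ⟨volume (ball (0 : ℝ^l) 1) ^ 2 * ENNReal.ofReal _,
    mul_ne_zero (pow_ne_zero 2 hvol) (ENNReal.ofReal_pos.2 hc).ne', fun w hw ↦ ?_⟩
  rcases eq_or_ne (nnHolderNorm α ((ball 0 1).domRestrict w)) 0 with hK | hK
  · simp [hK, hp]
  obtain ⟨x, y, hxy⟩ := exists_nnHolderNorm_half_mul_lt_dist hK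
  have henergy := le_gagliardoE_of_holderOnWith hp.le hsp hθ hθ1 hθα
    (HolderWith.restrict_iff.1 hw.holderWith) x.2 y.2 hxy
  rwa [ENNReal.ofReal_mul hc.le, ← mul_assoc,
    ← ENNReal.ofReal_rpow_of_nonneg NNReal.zero_le_coe hp.le, ENNReal.ofReal_coe_nnreal] at henergy

theorem exists_holderOnWith_of_gagliardoE_le (l ν : ℕ) (hp : 0 < p) (hs : s ≤ 1) (hsp : l < s * p)
    {M : ℝ≥0∞} (hM : M ≠ ∞) :
    ∃ α : NNReal, 0 < α ∧ ∃ C : NNReal, ∀ w : ℝ^l → ℝ^ν, ContDiff ℝ 1 w →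
      gagliardoE s p (ball 0 1) w ≤ M → HolderOnWith C α w (ball 0 1) := by
  have hα : 0 < s - l / p := sub_pos.2 ((div_lt_iff₀ hp).2 hsp)
  lift s - l / p to NNReal using hα.le with α hαs
  have hα1 : (α : ℝ) ≤ 1 := by
    have : 0 ≤ l / p := by positivity
    linarith
  obtain ⟨c, hc, hcw⟩ := exists_mul_nnHolderNorm_le_gagliardoE (s := s) l ν hα hp
    (by rw [hαs, sub_mul, div_mul_cancel₀ _ hp.ne']; ring)
  have hC : (M / c) ^ p⁻¹ ≠ ∞ :=
    ENNReal.rpow_ne_top_of_nonneg (by positivity) (ENNReal.div_ne_top hM hc)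
  lift (M / c) ^ p⁻¹ to NNReal using hC with C hCM
  refine ⟨α, hα, C, fun w hw hwM ↦ HolderWith.restrict_iff.1 ?_⟩
  have hmem : MemHolder α ((ball 0 1).domRestrict w) := by
    obtain ⟨K, hK⟩ := hw.contDiffOn.exists_lipschitzOnWith one_ne_zero
      (convex_closedBall (0 : ℝ^l) 1) (isCompact_closedBall 0 1)
    have : BoundedSpace (ball (0 : ℝ^l) 1) := boundedSpace_val_set_iff.2 isBounded_ball
    exact MemHolder.of_le ⟨K, (hK.mono ball_subset_closedBall).to_restrict.holderWith⟩ hα1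
  refine hmem.holderWith.mono ?_
  rw [← ENNReal.coe_le_coe, hCM, ENNReal.le_rpow_inv_iff hp,
    ENNReal.le_div_iff_mul_le (.inl hc) (.inr hM), mul_comm]
  exact (hcw w hmem).trans hwM

theorem totallyBounded_setOf_holderWith {X Y : Type*} [PseudoMetricSpace X] [CompactSpace X]
    [MetricSpace Y] {N : Set Y} (hN : IsCompact N) {α : NNReal} (hα : 0 < α) (C : NNReal) :
    TotallyBounded {f : BoundedContinuousFunction X Y | (∀ x, f x ∈ N) ∧ HolderWith C α f} := by
  refine (BoundedContinuousFunction.arzela_ascoli N hN _ (fun f x hf ↦ hf.1 x)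
    (Metric.equicontinuous_of_continuity_modulus (fun d ↦ C * d ^ (α : ℝ)) ?_ _
      fun x y f ↦ f.2.2.dist_le x y)).totallyBounded.subset subset_closure
  simpa [hα.ne'] using (Real.continuousAt_rpow_const 0 (α : ℝ) (.inr α.2)).tendsto.const_mul (C : ℝ)

theorem finite_of_totallyBounded_of_dist_lt {ι X : Type*} [PseudoMetricSpace X] {A : Set X}
    (hA : TotallyBounded A) {S : Set ι} {f : ι → X} (hf : MapsTo f S A) {δ : ℝ} (hδ : 0 < δ)
    (hinj : ∀ i ∈ S, ∀ j ∈ S, dist (f i) (f j) < δ → i = j) : S.Finite := by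
  obtain ⟨t, ht, hAt⟩ := Metric.totallyBounded_iff.1 hA (δ / 2) (half_pos hδ)
  refine (ht.biUnion fun y _ ↦ Subsingleton.finite (s := S ∩ f ⁻¹' ball y (δ / 2))
    fun i hi j hj ↦ hinj i hi.1 j hj.1 ?_).subset fun i hi ↦ ?_
  · linarith [dist_triangle_right (f i) (f j) y, mem_ball.1 hi.2, mem_ball.1 hj.2]
  · obtain ⟨y, hy, hiy⟩ := mem_iUnion₂.1 (hAt (hf hi))
    exact mem_iUnion₂.2 ⟨y, hy, hi, hiy⟩

theorem IsRepresentative.unique_of_dist_lt {N : Set (ℝ^ν)} {δ : ℝ} {L : NNReal} {P : ℝ^ν → ℝ^ν}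
    {b : N} {α β : HomotopyGroup (Fin l) N b} {R : ℝ} {v w : ℝ^l → ℝ^ν}
    (hv : IsRepresentative α R v) (hw : IsRepresentative β R w) (hP : IsTubularRetraction N δ L P)
    (hvw : ∀ x ∈ closedBall 0 R, dist (v x) (w x) < δ) : α = β := by
  have hPv : P ∘ v = v := funext fun x ↦ hP.eq_self _ (hv.mem x)
  have hrep := hw.retract_of_dist_lt hP hv.continuous hv.eq_base hv.le_one fun x ↦ ?_
  · exact hv.unique (hPv ▸ hrep)
  · rcases le_total ‖x‖ R with hx | hx
    · exact hvw x (mem_closedBall_zero_iff.2 hx)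
    · simpa [hv.eq_base x hx, hw.eq_base x hx] using hP.pos

theorem finite_setOf_isRepresentative_gagliardoE_le {N : Set (ℝ^ν)} (hN : IsCompact N) {δ : ℝ}
    {L : NNReal} {P : ℝ^ν → ℝ^ν} (hP : IsTubularRetraction N δ L P) (b : N) (hp : 0 < p)
    (hs : s ≤ 1) (hsp : l < s * p) {R : ℝ} (hR : R < 1) {M : ℝ≥0∞} (hM : M ≠ ∞) :
    {α : HomotopyGroup (Fin l) N b | ∃ w, IsRepresentative α R w ∧ ContDiff ℝ 1 w ∧
      gagliardoE s p (ball 0 1) w ≤ M}.Finite := by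
  obtain ⟨γ, hγ, C, hC⟩ := exists_holderOnWith_of_gagliardoE_le l ν hp hs hsp hM
  set S := {α : HomotopyGroup (Fin l) N b | ∃ w, IsRepresentative α R w ∧ ContDiff ℝ 1 w ∧
      gagliardoE s p (ball 0 1) w ≤ M}
  choose! w hw hw1 hwM using fun α (hα : α ∈ S) ↦ hα
  have hwcont (α : S) : Continuous (w α) := (hw α α.2).continuous
  let f (α : S) : BoundedContinuousFunction (closedBall (0 : ℝ^l) R) (ℝ^ν) :=
    .mkOfCompact ⟨fun x ↦ w α x, (hwcont α).comp continuous_subtype_val⟩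
  refine finite_coe_iff.1 (finite_univ_iff.1 (finite_of_totallyBounded_of_dist_lt
    (totallyBounded_setOf_holderWith hN hγ C) (f := f) (fun α _ ↦ ?_) hP.pos
    fun α _ β _ hαβ ↦ Subtype.ext ?_))
  · exact ⟨fun x ↦ (hw α α.2).mem x, ((hC _ (hw1 α α.2) (hwM α α.2)).mono
      (closedBall_subset_ball hR)).holderWith⟩
  · refine (hw α α.2).unique_of_dist_lt (hw β β.2) hP fun x hx ↦ ?_
    exact (BoundedContinuousFunction.dist_coe_le_dist (f := f α) (g := f β) ⟨x, hx⟩).trans_lt hαβ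

end Gagliardo

section Interpolation

variable {l ν : ℕ} {s p : ℝ}

theorem IsSpheroid.incrementEnergy_le {N : Set (ℝ^ν)} {b : N} {R : ℝ} {w : ℝ^l → ℝ^ν}
    (hw : IsSpheroid b R w) (hp : 0 < p) {D : ℝ≥0∞} (hD : ∀ x y, ‖w x - w y‖ₑ ≤ D) (h : ℝ^l) :
    incrementEnergy p w h ≤ 2 * (D ^ p * volume (ball (0 : ℝ^l) R)) := by
  let f : ℝ^l → ℝ≥0∞ := (ball 0 R).indicator fun _ ↦ D ^ p
  have hf : Measurable f := measurable_const.indicator measurableSet_ball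
  have hle (x : ℝ^l) : ‖w (x + h) - w x‖ₑ ^ p ≤ f x + f (x + h) := by
    have hDp : ‖w (x + h) - w x‖ₑ ^ p ≤ D ^ p := by gcongr; exact hD _ _
    by_cases hx : x ∈ ball 0 R
    · exact hDp.trans (by simp only [f, indicator_of_mem hx, le_self_add])
    by_cases hxh : x + h ∈ ball 0 R
    · exact hDp.trans (by simp only [f, indicator_of_mem hxh, le_add_self])
    rw [mem_ball_zero_iff, not_lt] at hx hxh
    simp [hw.eq_base _ hx, hw.eq_base _ hxh, hp]
  calc incrementEnergy p w h ≤ ∫⁻ x, (f x + f (x + h)) := lintegral_mono hle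
    _ = 2 * ∫⁻ x, f x := by
        rw [lintegral_add_left hf, lintegral_add_right_eq_self f h, two_mul]
    _ = 2 * (D ^ p * volume (ball (0 : ℝ^l) R)) := by
        rw [lintegral_indicator measurableSet_ball, setLIntegral_const]

theorem integrable_min_rpow_mul_norm_rpow (hl : 1 ≤ l) {r c : ℝ} (hr : l < r) (hrp : r < l + p)
    (hc : 0 ≤ c) : Integrable fun k : ℝ^l ↦ min (‖k‖ ^ p) c * ‖k‖ ^ (-r) := by
  have hmeas : AEStronglyMeasurable (fun k : ℝ^l ↦ min (‖k‖ ^ p) c * ‖k‖ ^ (-r)) :=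
    Measurable.aestronglyMeasurable (by fun_prop)
  have hnorm (k : ℝ^l) : ‖min (‖k‖ ^ p) c * ‖k‖ ^ (-r)‖ = min (‖k‖ ^ p) c * ‖k‖ ^ (-r) :=
    Real.norm_of_nonneg (by positivity)
  have hp : 0 < p := by linarith
  rw [← integrableOn_univ, ← union_compl_self (ball (0 : ℝ^l) 1)]
  refine IntegrableOn.union ?_ ?_
  · refine integrableOn_ball_of_norm_le_rpow (C := 1) (α := r - p) (by simpa using hl)
      (by simpa using by linarith) (ae_of_all _ fun k ↦ ?_) hmeas
    rw [hnorm, one_mul]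
    rcases eq_or_ne k 0 with rfl | hk
    · simp only [norm_zero, Real.zero_rpow hp.ne', min_eq_left hc, zero_mul]
      positivity
    · rw [neg_sub, sub_eq_add_neg, Real.rpow_add (norm_pos_iff.2 hk)]
      gcongr
      exact min_le_left _ _
  · refine Integrable.mono' ((integrable_one_add_norm (r := r) (by simpa using hr)).const_mul
      (c * 2 ^ r)).integrableOn hmeas.restrict ?_
    filter_upwards [ae_restrict_mem measurableSet_ball.compl] with k hk
    have hk : 1 ≤ ‖k‖ := by simpa using hk
    have hrpow : (2 * ‖k‖) ^ (-r) ≤ (1 + ‖k‖) ^ (-r) :=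
      Real.rpow_le_rpow_of_nonpos (by positivity) (by linarith)
        (by linarith [l.cast_nonneg (α := ℝ)])
    calc ‖min (‖k‖ ^ p) c * ‖k‖ ^ (-r)‖ ≤ c * ‖k‖ ^ (-r) := by
          rw [hnorm]; gcongr; exact min_le_right _ _
      _ = c * 2 ^ r * (2 * ‖k‖) ^ (-r) := by
          rw [Real.mul_rpow zero_le_two (norm_nonneg k), ← mul_assoc, mul_assoc c,
            ← Real.rpow_add two_pos, add_neg_cancel, Real.rpow_zero, mul_one]
      _ ≤ c * 2 ^ r * (1 + ‖k‖) ^ (-r) := by gcongr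

theorem lintegral_eq_mul_lintegral_comp_smul (f : ℝ^l → ℝ≥0∞) {t : ℝ} (ht : 0 < t) :
    ∫⁻ h, f h = ENNReal.ofReal (t ^ l) * ∫⁻ k, f (t • k) := by
  have hemb : MeasurableEmbedding fun k : ℝ^l ↦ t • k :=
    (Homeomorph.smulOfNeZero t ht.ne').measurableEmbedding
  rw [← hemb.lintegral_map, Measure.map_addHaar_smul _ ht.ne', lintegral_smul_measure,
    finrank_euclideanSpace_fin, smul_eq_mul, ← mul_assoc, ← ENNReal.ofReal_mul (by positivity),
    abs_of_pos (by positivity), mul_inv_cancel₀ (by positivity), ENNReal.ofReal_one, one_mul]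

theorem exists_gagliardoE_le_mul_rpow (hl : 1 ≤ l) (hp : 0 < p) (hs : 0 < s) (hs' : s < 1)
    {c : ℝ} (hc : 0 ≤ c) : ∃ C ≠ ∞, ∀ w : ℝ^l → ℝ^ν, Continuous w →
      (∀ h, incrementEnergy p w h ≤ ENNReal.ofReal c) → ∀ g : ℝ, 0 < g →
      (∀ h, incrementEnergy p w h ≤ ENNReal.ofReal (‖h‖ ^ p * g)) →
      gagliardoE s p univ w ≤ C * ENNReal.ofReal (g ^ s) := by
  set r : ℝ := l + s * p with hr
  have hK := (integrable_min_rpow_mul_norm_rpow (p := p) (r := r) hl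
    (by linarith [mul_pos hs hp]) (by nlinarith) hc).lintegral_lt_top.ne
  refine ⟨_, hK, fun w hw hwc g hg hwg ↦ ?_⟩
  -- The two bounds cross at `‖h‖ ~ t`; scaling by `t` normalises `g` to `1`.
  set t : ℝ := g ^ (-(1 / p)) with ht_def
  have ht : 0 < t := by positivity
  have htg : t ^ p * g = 1 := by
    rw [ht_def, ← Real.rpow_mul hg.le, neg_mul, one_div_mul_cancel hp.ne', Real.rpow_neg_one,
      inv_mul_cancel₀ hg.ne']
  have htpow : t ^ l * t ^ (-r) = g ^ s := by
    rw [← Real.rpow_natCast, ← Real.rpow_add ht, hr, ht_def, ← Real.rpow_mul hg.le]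
    congr 1
    field_simp
    ring
  have hscale (k : ℝ^l) : ENNReal.ofReal (min (‖t • k‖ ^ p * g) c * ‖t • k‖ ^ (-r)) =
      ENNReal.ofReal (t ^ (-r)) * ENNReal.ofReal (min (‖k‖ ^ p) c * ‖k‖ ^ (-r)) := by
    rw [norm_smul, Real.norm_of_nonneg ht.le, Real.mul_rpow ht.le (norm_nonneg k),
      Real.mul_rpow ht.le (norm_nonneg k), mul_right_comm, htg, one_mul,
      ← ENNReal.ofReal_mul (by positivity), mul_left_comm]
  calc gagliardoE s p univ w
      = ∫⁻ h, incrementEnergy p w h * ENNReal.ofReal (‖h‖ ^ r)⁻¹ := gagliardoE_univ hp.le hw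
    _ ≤ ∫⁻ h : ℝ^l, ENNReal.ofReal (min (‖h‖ ^ p * g) c * ‖h‖ ^ (-r)) := by
        refine lintegral_mono fun h ↦ ?_
        rw [ENNReal.ofReal_mul (by positivity), ENNReal.ofReal_min, Real.rpow_neg (norm_nonneg h)]
        gcongr
        exact le_min (hwg h) (hwc h)
    _ = (∫⁻ k : ℝ^l, ENNReal.ofReal (min (‖k‖ ^ p) c * ‖k‖ ^ (-r))) * ENNReal.ofReal (g ^ s) := by
        rw [lintegral_eq_mul_lintegral_comp_smul _ ht, lintegral_congr hscale,
          lintegral_const_mul' _ _ ENNReal.ofReal_ne_top, ← mul_assoc,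
          ← ENNReal.ofReal_mul (by positivity), htpow, mul_comm]

end Interpolation

section Sobolev

variable {l ν : ℕ} {p : ℝ}

theorem ae_differentiableAt_of_locallyLipschitz {E F : Type*} [NormedAddCommGroup E]
    [NormedSpace ℝ E] [FiniteDimensional ℝ E] [MeasurableSpace E] [BorelSpace E]
    [NormedAddCommGroup F] [NormedSpace ℝ F] [FiniteDimensional ℝ F] (μ : Measure E)
    [μ.IsAddHaarMeasure] {w : E → F} (hw : LocallyLipschitz w) :
    ∀ᵐ x ∂μ, DifferentiableAt ℝ w x := by
  have : ∀ᵐ x ∂μ, ∀ n : ℕ, x ∈ closedBall 0 n → DifferentiableWithinAt ℝ w (closedBall 0 n) x := by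
    refine ae_all_iff.2 fun n ↦ ?_
    obtain ⟨K, hK⟩ :=
      (hw.locallyLipschitzOn (s := closedBall 0 n)).exists_lipschitzOnWith_of_compact
        (isCompact_closedBall 0 n)
    exact hK.ae_differentiableWithinAt_of_mem
  filter_upwards [this] with x hx
  obtain ⟨n, hn⟩ := exists_nat_gt ‖x‖
  exact (hx n (by simpa using hn.le)).differentiableAt
    (mem_of_superset (isOpen_ball.mem_nhds (by simpa using hn)) ball_subset_closedBall)

theorem enorm_sub_le_lintegral_enorm_deriv {F : Type*} [NormedAddCommGroup F]
    [InnerProductSpace ℝ F] [FiniteDimensional ℝ F] {γ : ℝ → F} (hγ : LocallyLipschitz γ) {a b : ℝ}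
    (hab : a ≤ b) : ‖γ b - γ a‖ₑ ≤ ∫⁻ t in Ioc a b, ‖deriv γ t‖ₑ := by
  set v := γ b - γ a
  rcases eq_or_ne v 0 with hv | hv
  · simp [hv]
  obtain ⟨K, hK⟩ := (hγ.locallyLipschitzOn (s := uIcc a b)).exists_lipschitzOnWith_of_compact
    isCompact_uIcc
  have hac := ((innerSL ℝ v).lipschitz.comp_lipschitzOnWith hK).absolutelyContinuousOnInterval
  have hftc : ∫ t in Ioc a b, deriv (innerSL ℝ v ∘ γ) t = ‖v‖ * ‖v‖ := by
    rw [← intervalIntegral.integral_of_le hab, hac.integral_deriv_eq_sub]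
    simp only [Function.comp_apply, innerSL_apply_apply, ← inner_sub_right]
    exact real_inner_self_eq_norm_mul_norm v
  have hderiv : ∀ᵐ t, ‖deriv (innerSL ℝ v ∘ γ) t‖ₑ ≤ ‖v‖ₑ * ‖deriv γ t‖ₑ := by
    filter_upwards [ae_differentiableAt_of_locallyLipschitz volume hγ] with t ht
    rw [fderiv_comp_deriv t (innerSL ℝ v).differentiableAt ht, ContinuousLinearMap.fderiv]
    simpa [← ofReal_norm (innerSL ℝ v)] using (innerSL ℝ v).le_opENorm (deriv γ t)
  refine (ENNReal.mul_le_mul_iff_right (enorm_ne_zero.2 hv) enorm_ne_top).1 ?_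
  calc ‖v‖ₑ * ‖v‖ₑ = ‖∫ t in Ioc a b, deriv (innerSL ℝ v ∘ γ) t‖ₑ := by
        rw [hftc, enorm_mul, enorm_norm]
    _ ≤ ∫⁻ t in Ioc a b, ‖deriv (innerSL ℝ v ∘ γ) t‖ₑ := enorm_integral_le_lintegral_enorm _
    _ ≤ ∫⁻ t in Ioc a b, ‖v‖ₑ * ‖deriv γ t‖ₑ := lintegral_mono_ae (ae_restrict_of_ae hderiv)
    _ = ‖v‖ₑ * ∫⁻ t in Ioc a b, ‖deriv γ t‖ₑ := lintegral_const_mul' _ _ enorm_ne_top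

theorem enorm_sub_rpow_le_lintegral_lineDeriv (hp : 1 ≤ p) {w : ℝ^l → ℝ^ν}
    (hw : LocallyLipschitz w) (x h : ℝ^l) :
    ‖w (x + h) - w x‖ₑ ^ p ≤ ∫⁻ t in Ioc (0 : ℝ) 1, ‖lineDeriv ℝ w (x + t • h) h‖ₑ ^ p := by
  have hprob : IsProbabilityMeasure (volume.restrict (Ioc (0 : ℝ) 1)) := ⟨by simp⟩
  have hγ : LocallyLipschitz fun t : ℝ ↦ w (x + t • h) :=
    hw.comp (ContDiff.locallyLipschitz (𝕂 := ℝ) (by fun_prop))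
  have hderiv (t : ℝ) : deriv (fun t : ℝ ↦ w (x + t • h)) t = lineDeriv ℝ w (x + t • h) h := by
    simp only [lineDeriv, add_assoc, ← add_smul]
    rw [deriv_comp_const_add (fun t : ℝ ↦ w (x + t • h)), add_zero]
  have hmeas : AEMeasurable (fun t : ℝ ↦ ‖lineDeriv ℝ w (x + t • h) h‖ₑ)
      (volume.restrict (Ioc 0 1)) :=
    ((measurable_lineDeriv hw.continuous).comp (by fun_prop)).enorm.aemeasurable
  calc ‖w (x + h) - w x‖ₑ ^ p
      ≤ (∫⁻ t in Ioc (0 : ℝ) 1, ‖lineDeriv ℝ w (x + t • h) h‖ₑ) ^ p := by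
        gcongr
        simpa [hderiv] using enorm_sub_le_lintegral_enorm_deriv hγ zero_le_one
    _ ≤ ∫⁻ t in Ioc (0 : ℝ) 1, ‖lineDeriv ℝ w (x + t • h) h‖ₑ ^ p := by
        exact lintegral_rpow_le_lintegral_rpow _ hp hmeas

theorem incrementEnergy_le_lintegral_fderiv (hp : 1 ≤ p) {w : ℝ^l → ℝ^ν}
    (hw : LocallyLipschitz w) (h : ℝ^l) :
    incrementEnergy p w h ≤ ‖h‖ₑ ^ p * ∫⁻ y, ‖fderiv ℝ w y‖ₑ ^ p := by
  have hmeas : Measurable fun y ↦ ‖lineDeriv ℝ w y h‖ₑ ^ p :=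
    (measurable_lineDeriv hw.continuous).enorm.pow_const p
  calc incrementEnergy p w h
      ≤ ∫⁻ x, ∫⁻ t in Ioc (0 : ℝ) 1, ‖lineDeriv ℝ w (x + t • h) h‖ₑ ^ p :=
        lintegral_mono fun x ↦ enorm_sub_rpow_le_lintegral_lineDeriv hp hw x h
    _ = ∫⁻ t in Ioc (0 : ℝ) 1, ∫⁻ x, ‖lineDeriv ℝ w (x + t • h) h‖ₑ ^ p :=
        lintegral_lintegral_swap (hmeas.comp (by fun_prop)).aemeasurable
    _ = ∫⁻ y, ‖lineDeriv ℝ w y h‖ₑ ^ p := by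
        simp [lintegral_add_right_eq_self fun y ↦ ‖lineDeriv ℝ w y h‖ₑ ^ p]
    _ ≤ ∫⁻ y, ‖h‖ₑ ^ p * ‖fderiv ℝ w y‖ₑ ^ p := by
        refine lintegral_mono_ae ?_
        filter_upwards [ae_differentiableAt_of_locallyLipschitz volume hw] with y hy
        rw [hy.lineDeriv_eq_fderiv, mul_comm, ← ENNReal.mul_rpow_of_nonneg _ _ (by linarith)]
        gcongr
        exact (fderiv ℝ w y).le_opENorm h
    _ = ‖h‖ₑ ^ p * ∫⁻ y, ‖fderiv ℝ w y‖ₑ ^ p :=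
        lintegral_const_mul' _ _ (by finiteness)

end Sobolev

section Slicing

variable {l ν : ℕ} {N : Set (ℝ^ν)} {b : N} {u : ℝ^l → ℝ^ν} {U : ℝ^l × ℝ → ℝ^ν} {R a s p : ℝ}

/-- `U` is a competitor in the definition of `extEnergy p N u`: a `C^1` extension of `u` to the
cylinder over the unit ball, with values in `N`. -/
structure IsExtension (N : Set (ℝ^ν)) (u : ℝ^l → ℝ^ν) (U : ℝ^l × ℝ → ℝ^ν) : Prop where
  c1OnNhd : C1OnNhd U (closedBall 0 1 ×ˢ Icc (0 : ℝ) 1)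
  mapsTo : MapsTo U (closedBall 0 1 ×ˢ Icc (0 : ℝ) 1) N
  eq_trace : ∀ x ∈ closedBall (0 : ℝ^l) 1, U (x, 0) = u x

/-- The `p`-energy of `U` on the open cylinder over the unit ball. -/
def cylinderEnergy (p : ℝ) (U : ℝ^l × ℝ → ℝ^ν) : ℝ≥0∞ :=
  ∫⁻ z in ball (0 : ℝ^l) 1 ×ˢ Ioo (0 : ℝ) 1, ENNReal.ofReal (‖fderiv ℝ U z‖ ^ p)

theorem extEnergy_le_cylinderEnergy (hU : IsExtension N u U) :
    extEnergy p N u ≤ cylinderEnergy p U :=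
  sInf_le ⟨U, hU.c1OnNhd, hU.mapsTo, hU.eq_trace, rfl⟩

theorem exists_isExtension_cylinderEnergy_lt {c : ℝ≥0∞} (h : extEnergy p N u < c) :
    ∃ U, IsExtension N u U ∧ cylinderEnergy p U < c := by
  obtain ⟨_, ⟨U, hC1, hN, hu, rfl⟩, hlt⟩ := sInf_lt_iff.1 h
  exact ⟨U, ⟨hC1, hN, hu⟩, hlt⟩

theorem IsExtension.contDiffAt (hU : IsExtension N u U) {z : ℝ^l × ℝ}
    (hz : z ∈ closedBall (0 : ℝ^l) 1 ×ˢ Icc (0 : ℝ) 1) : ContDiffAt ℝ 1 U z := by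
  obtain ⟨V, hV, hKV, hUV⟩ := hU.c1OnNhd
  exact hUV.contDiffAt (hV.mem_nhds (hKV hz))

/-- The restriction of `U` to the graph `{(x, s (a - ‖x‖)) : ‖x‖ ≤ a}` of a cone, which projects
onto the ball of radius `a`, extended by `b`. If `U` is an extension of a spheroid of radius
`R < a`, then the maps `slice b U a s` form a homotopy from that spheroid to `slice b U a 1`. -/
def slice (b : ℝ^ν) (U : ℝ^l × ℝ → ℝ^ν) (a s : ℝ) (x : ℝ^l) : ℝ^ν :=
  if ‖x‖ ≤ 1 then U (x, s * max 0 (a - ‖x‖)) else b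

theorem slice_of_norm_le_one {c : ℝ^ν} {x : ℝ^l} (hx : ‖x‖ ≤ 1) :
    slice c U a s x = U (x, s * max 0 (a - ‖x‖)) :=
  if_pos hx

theorem graph_mem_cylinder (ha : a ≤ 1) (hs : s ∈ Icc (0 : ℝ) 1) {x : ℝ^l} (hx : ‖x‖ ≤ 1) :
    (x, s * max 0 (a - ‖x‖)) ∈ closedBall (0 : ℝ^l) 1 ×ˢ Icc (0 : ℝ) 1 := by
  have hmax : max 0 (a - ‖x‖) ≤ 1 := max_le zero_le_one (by linarith [norm_nonneg x])
  exact ⟨mem_closedBall_zero_iff.2 hx, mul_nonneg hs.1 (le_max_left _ _),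
    mul_le_one₀ hs.2 (le_max_left _ _) hmax⟩

namespace IsExtension

theorem slice_eq_base (hU : IsExtension N u U) (hu : IsSpheroid b R u) (hRa : R ≤ a) {x : ℝ^l}
    (hx : a ≤ ‖x‖) : slice b U a s x = b := by
  by_cases hx1 : ‖x‖ ≤ 1
  · rw [slice_of_norm_le_one hx1, max_eq_left (sub_nonpos.2 hx), mul_zero,
      hU.eq_trace x (mem_closedBall_zero_iff.2 hx1), hu.eq_base x (hRa.trans hx)]
  · exact if_neg hx1

theorem slice_mem (hU : IsExtension N u U) (ha : a ≤ 1) (hs : s ∈ Icc (0 : ℝ) 1) (x : ℝ^l) :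
    slice b U a s x ∈ N := by
  by_cases hx : ‖x‖ ≤ 1
  · rw [slice_of_norm_le_one hx]
    exact hU.mapsTo (graph_mem_cylinder ha hs hx)
  · rw [slice, if_neg hx]
    exact b.2

theorem slice_zero (hU : IsExtension N u U) (hu : IsSpheroid b R u) (hR : R ≤ 1) (x : ℝ^l) :
    slice b U a 0 x = u x := by
  by_cases hx : ‖x‖ ≤ 1
  · rw [slice_of_norm_le_one hx, zero_mul, hU.eq_trace x (mem_closedBall_zero_iff.2 hx)]
  · rw [slice, if_neg hx, hu.eq_base x (by linarith)]

theorem continuousOn_slice (hU : IsExtension N u U) (hu : IsSpheroid b R u) (hRa : R ≤ a)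
    (ha : a ≤ 1) : ContinuousOn (fun q : ℝ × ℝ^l ↦ slice b U a q.1 q.2) (Icc 0 1 ×ˢ univ) := by
  have hcover : Icc (0 : ℝ) 1 ×ˢ (univ : Set (ℝ^l)) =
      Icc 0 1 ×ˢ closedBall 0 1 ∪ Icc 0 1 ×ˢ {x | a ≤ ‖x‖} := by
    rw [← prod_union]
    congr
    exact (eq_univ_of_forall fun x ↦ (le_total ‖x‖ 1).imp mem_closedBall_zero_iff.2 ha.trans).symm
  rw [hcover]
  refine ContinuousOn.union_of_isClosed ?_ ?_ (isClosed_Icc.prod isClosed_closedBall)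
    (isClosed_Icc.prod (isClosed_le continuous_const continuous_norm))
  · have hcomp : ContinuousOn (fun q : ℝ × ℝ^l ↦ U (q.2, q.1 * max 0 (a - ‖q.2‖)))
        (Icc 0 1 ×ˢ closedBall 0 1) := by
      intro q hq
      refine ContinuousAt.comp_continuousWithinAt (f := fun q : ℝ × ℝ^l ↦ _) (hU.contDiffAt
        (graph_mem_cylinder ha hq.1 (mem_closedBall_zero_iff.1 hq.2))).continuousAt ?_
      exact Continuous.continuousWithinAt (by fun_prop)
    exact hcomp.congr fun q hq ↦ slice_of_norm_le_one (mem_closedBall_zero_iff.1 hq.2)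
  · exact continuousOn_const.congr fun q hq ↦ hU.slice_eq_base hu hRa hq.2

theorem isRepresentative_slice {α : HomotopyGroup (Fin l) N b} (hU : IsExtension N u U)
    (hu : IsRepresentative α R u) (hRa : R ≤ a) (ha : a ≤ 1) :
    IsRepresentative α a (slice b U a 1) := by
  have hcont := hU.continuousOn_slice hu.toIsSpheroid hRa ha
  have hslice : IsSpheroid b a (slice b U a 1) := by
    refine ⟨?_, hU.slice_mem ha (by simp), fun x ↦ hU.slice_eq_base hu.toIsSpheroid hRa⟩
    exact hcont.comp_continuous (f := fun x ↦ (1, x)) (by fun_prop) fun x ↦ ⟨by simp, mem_univ x⟩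
  refine hu.of_homotopy (H := fun q ↦ slice b U a q.1 q.2) hslice ha hcont
    (fun s hs ↦ hU.slice_mem ha hs) (fun s _ x hx ↦ ?_) (fun x ↦ ?_) fun _ ↦ rfl
  · exact hU.slice_eq_base hu.toIsSpheroid hRa (ha.trans hx)
  · exact hU.slice_zero hu.toIsSpheroid hu.le_one x

theorem locallyLipschitz_slice (hU : IsExtension N u U) (hu : IsSpheroid b R u) (hRa : R ≤ a)
    (ha : a < 1) : LocallyLipschitz (slice b U a 1) := by
  intro x
  rcases lt_or_ge ‖x‖ 1 with hx | hx
  · obtain ⟨K, t, ht, hK⟩ := (hU.contDiffAt (graph_mem_cylinder (s := 1) ha.le (by simp)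
      hx.le)).exists_lipschitzOnWith
    have hgraph : LipschitzWith 1 fun y : ℝ^l ↦ (y, 1 * max 0 (a - ‖y‖)) := by
      simpa using LipschitzWith.id.prodMk ((LipschitzWith.const a).sub
        lipschitzWith_one_norm |>.const_max 0)
    refine ⟨K * 1, _, inter_mem (hgraph.continuous.continuousAt ht)
      (isOpen_ball.mem_nhds (mem_ball_zero_iff.2 hx)), fun y hy z hz ↦ ?_⟩
    rw [slice_of_norm_le_one (mem_ball_zero_iff.1 hy.2).le,
      slice_of_norm_le_one (mem_ball_zero_iff.1 hz.2).le]
    exact (hK.comp hgraph.lipschitzOnWith fun _ h ↦ h) hy.1 hz.1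
  · refine ⟨0, {y | a < ‖y‖}, (isOpen_lt continuous_const continuous_norm).mem_nhds
      (ha.trans_le hx), fun y hy z hz ↦ ?_⟩
    simp [hU.slice_eq_base hu hRa (le_of_lt hy), hU.slice_eq_base hu hRa (le_of_lt hz)]

end IsExtension

theorem IsExtension.norm_fderiv_slice_le (hU : IsExtension N u U) (c : ℝ^ν) (ha : a < 1) {x : ℝ^l}
    (hx : ‖x‖ < a) : ‖fderiv ℝ (slice c U a 1) x‖ ≤ ‖fderiv ℝ U (x, a - ‖x‖)‖ := by
  have hgraph : LipschitzWith 1 fun y : ℝ^l ↦ (y, a - ‖y‖) := by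
    simpa using LipschitzWith.id.prodMk ((LipschitzWith.const a).sub lipschitzWith_one_norm)
  have hslice : slice c U a 1 =ᶠ[𝓝 x] U ∘ fun y ↦ (y, a - ‖y‖) := by
    filter_upwards [continuous_norm.continuousAt.eventually_lt continuousAt_const hx] with y hy
    simp [slice_of_norm_le_one (hy.le.trans ha.le), hy.le]
  have hUx : ContDiffAt ℝ 1 U (x, a - ‖x‖) := by
    simpa [hx.le] using hU.contDiffAt (graph_mem_cylinder (s := 1) ha.le (by simp)
      (hx.trans ha).le)
  refine le_of_forall_gt_imp_ge_of_dense fun r hr ↦ ?_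
  lift r to NNReal using (norm_nonneg _).trans hr.le
  obtain ⟨t, ht, hrt⟩ := hUx.exists_lipschitzOnWith_of_nnnorm_lt r hr
  have hlip := hrt.comp (hgraph.lipschitzOnWith (s := (fun y : ℝ^l ↦ (y, a - ‖y‖)) ⁻¹' t))
    (mapsTo_preimage _ t)
  rw [hslice.fderiv_eq, ← mul_one r]
  exact norm_fderiv_le_of_lipschitzOn ℝ (hgraph.continuous.continuousAt ht) hlip

theorem IsExtension.ae_enorm_fderiv_slice_rpow_le (hU : IsExtension N u U) (hu : IsSpheroid b R u)
    (hRa : R ≤ a) (ha₀ : 0 < a) (ha : a < 1) (hp : 0 < p) :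
    ∀ᵐ x, ‖fderiv ℝ (slice b U a 1) x‖ₑ ^ p ≤
      (ball (0 : ℝ^l) 1 ×ˢ Ioo (0 : ℝ) 1).indicator
        (fun z ↦ ENNReal.ofReal (‖fderiv ℝ U z‖ ^ p)) (x, a - ‖x‖) := by
  have hsphere : ∀ᵐ x : ℝ^l, x ∉ sphere 0 a :=
    measure_eq_zero_iff_ae_notMem.1 (Measure.addHaar_sphere_of_ne_zero volume 0 ha₀.ne')
  filter_upwards [hsphere] with x hxa
  rw [mem_sphere_zero_iff_norm] at hxa
  rcases lt_or_gt_of_ne hxa with hlt | hgt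
  · have hmem : (x, a - ‖x‖) ∈ ball (0 : ℝ^l) 1 ×ˢ Ioo (0 : ℝ) 1 :=
      ⟨mem_ball_zero_iff.2 (hlt.trans ha), by linarith, by linarith [norm_nonneg x]⟩
    rw [indicator_of_mem hmem, ← ofReal_norm_rpow _ hp.le]
    gcongr
    exact hU.norm_fderiv_slice_le b ha hlt
  · have hconst : slice b U a 1 =ᶠ[𝓝 x] fun _ ↦ (b : ℝ^ν) := by
      filter_upwards [continuousAt_const.eventually_lt continuous_norm.continuousAt hgt] with y hy
      exact hU.slice_eq_base hu hRa (le_of_lt hy)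
    rw [← ofReal_norm_rpow _ hp.le, hconst.fderiv_eq, fderiv_const_apply, norm_zero,
      Real.zero_rpow hp.ne', ENNReal.ofReal_zero]
    exact zero_le

theorem exists_lintegral_graph_le {X : Type*} [MeasurableSpace X] (μ : Measure X) [SFinite μ]
    {φ : X → ℝ} (hφ : Measurable φ) {f : X × ℝ → ℝ≥0∞} (hf : Measurable f) {R R' : ℝ}
    (hR : R < R') : ∃ a ∈ Ioo R R',
      ∫⁻ x, f (x, a - φ x) ∂μ ≤ (ENNReal.ofReal (R' - R))⁻¹ * ∫⁻ z, f z ∂μ.prod volume := by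
  have hvol : volume (Ioo R R') = ENNReal.ofReal (R' - R) := Real.volume_Ioo
  have hgraph : Measurable fun q : ℝ × X ↦ f (q.2, q.1 - φ q.2) := by fun_prop
  obtain ⟨a, ha, hle⟩ := exists_le_setLAverage (by simp [hR] : volume (Ioo R R') ≠ 0)
    (by simp) (hgraph.lintegral_prod_right' (ν := μ)).aemeasurable
  refine ⟨a, ha, hle.trans ?_⟩
  rw [setLAverage_eq, hvol, ENNReal.div_eq_inv_mul]
  gcongr
  calc ∫⁻ a in Ioo R R', ∫⁻ x, f (x, a - φ x) ∂μ
      ≤ ∫⁻ a, ∫⁻ x, f (x, a - φ x) ∂μ := setLIntegral_le_lintegral _ _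
    _ = ∫⁻ x, (∫⁻ a, f (x, a - φ x)) ∂μ := lintegral_lintegral_swap hgraph.aemeasurable
    _ = ∫⁻ x, (∫⁻ t, f (x, t)) ∂μ := by
        refine lintegral_congr fun x ↦ ?_
        exact lintegral_sub_right_eq_self (fun t ↦ f (x, t)) (φ x)
    _ = ∫⁻ z, f z ∂μ.prod volume := (lintegral_prod f hf.aemeasurable).symm

theorem IsExtension.exists_isRepresentative_lintegral_fderiv_le {α : HomotopyGroup (Fin l) N b}
    (hU : IsExtension N u U) (hu : IsRepresentative α R u) (hp : 0 < p) (hR : 0 ≤ R) {R' : ℝ}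
    (hRR' : R < R') (hR' : R' ≤ 1) :
    ∃ w, IsRepresentative α R' w ∧ LocallyLipschitz w ∧
      ∫⁻ x, ‖fderiv ℝ w x‖ₑ ^ p ≤ (ENNReal.ofReal (R' - R))⁻¹ * cylinderEnergy p U := by
  have hmeas : MeasurableSet (ball (0 : ℝ^l) 1 ×ˢ Ioo (0 : ℝ) 1) :=
    measurableSet_ball.prod measurableSet_Ioo
  obtain ⟨a, ⟨hRa, haR'⟩, ha⟩ := exists_lintegral_graph_le volume measurable_norm
    (((measurable_fderiv ℝ U).norm.pow_const p).ennreal_ofReal.indicator hmeas) hRR'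
  have ha₀ : 0 < a := hR.trans_lt hRa
  have ha₁ : a < 1 := haR'.trans_le hR'
  have hslice := hU.isRepresentative_slice hu hRa.le ha₁.le
  refine ⟨slice b U a 1, ⟨hslice.toIsSpheroid.mono haR'.le, hR', hslice.class_eq⟩,
    hU.locallyLipschitz_slice hu.toIsSpheroid hRa.le ha₁, ?_⟩
  refine (lintegral_mono_ae (hU.ae_enorm_fderiv_slice_rpow_le hu.toIsSpheroid hRa.le ha₀ ha₁
    hp)).trans (ha.trans_eq ?_)
  rw [← Measure.volume_eq_prod, lintegral_indicator hmeas, cylinderEnergy]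

theorem IsRepresentative.comp_smul {α : HomotopyGroup (Fin l) N b} {w : ℝ^l → ℝ^ν}
    (hw : IsRepresentative α R w) {t : ℝ} (ht : 1 ≤ t) :
    IsRepresentative α (R / t) fun x ↦ w (t • x) := by
  have ht₀ : 0 < t := by linarith
  have hspheroid : IsSpheroid b (R / t) fun x ↦ w (t • x) := by
    refine ⟨hw.continuous.comp (continuous_const_smul t), fun x ↦ hw.mem _, fun x hx ↦ ?_⟩
    refine hw.eq_base _ ?_
    rwa [norm_smul, Real.norm_of_nonneg ht₀.le, mul_comm, ← div_le_iff₀ ht₀]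
  have hcont : Continuous fun q : ℝ × ℝ^l ↦ w ((1 + q.1 * (t - 1)) • q.2) :=
    hw.continuous.comp (by fun_prop)
  refine hw.of_homotopy hspheroid ((div_le_one ht₀).2 (hw.le_one.trans ht)) hcont.continuousOn
    (fun s _ x ↦ hw.mem _) (fun s hs x hx ↦ hw.eq_base _ (hw.le_one.trans ?_))
    (fun x ↦ by simp) fun x ↦ by simp
  have hscale : 1 ≤ 1 + s * (t - 1) := le_add_of_nonneg_right (mul_nonneg hs.1 (by linarith))
  rw [norm_smul, Real.norm_of_nonneg (by linarith)]
  exact one_le_mul_of_one_le_of_one_le hscale hx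

theorem gagliardoE_comp_smul (s p : ℝ) (w : ℝ^l → ℝ^ν) {t : ℝ} (ht : 0 < t) :
    gagliardoE s p univ (fun x ↦ w (t • x)) =
      ENNReal.ofReal (t ^ (s * p - l)) * gagliardoE s p univ w := by
  have hpow : t ^ (s * p - l) * t ^ l * t ^ l = t ^ (l + s * p) := by
    rw [← Real.rpow_natCast, ← Real.rpow_add ht, ← Real.rpow_add ht]
    ring_nf
  simp only [gagliardoE, Measure.restrict_univ]
  conv_rhs => rw [lintegral_eq_mul_lintegral_comp_smul _ ht, ← mul_assoc,
    ← lintegral_const_mul' _ _ (by finiteness)]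
  refine lintegral_congr fun x ↦ ?_
  conv_rhs => rw [lintegral_eq_mul_lintegral_comp_smul _ ht, ← mul_assoc,
    ← lintegral_const_mul' _ _ (by finiteness)]
  refine lintegral_congr fun y ↦ ?_
  rw [← ENNReal.ofReal_mul (by positivity), ← ENNReal.ofReal_mul (by positivity),
    ← ENNReal.ofReal_mul (by positivity), hpow, ← smul_sub, norm_smul,
    Real.norm_of_nonneg ht.le, Real.mul_rpow ht.le (norm_nonneg _), ← mul_div_assoc,
    mul_div_mul_left _ _ (by positivity)]

theorem exists_gagliardoE_rpow_le_mul (hl : 1 ≤ l) (hp : 1 < p) {A : ℝ≥0∞} (hA : A ≠ ∞) :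
    ∃ C ≠ ∞, ∀ w : ℝ^l → ℝ^ν, Continuous w → (∀ h, incrementEnergy p w h ≤ A) →
      ∀ G : ℝ≥0∞, G ≠ 0 → G ≠ ∞ → (∀ h, incrementEnergy p w h ≤ ‖h‖ₑ ^ p * G) →
        gagliardoE (1 - 1 / p) p univ w ^ (p / (p - 1)) ≤ C * G := by
  have hp₀ : 0 < p := by linarith
  have hq : 0 < p / (p - 1) := div_pos hp₀ (by linarith)
  have hsq : (1 - 1 / p) * (p / (p - 1)) = 1 := by
    have : p - 1 ≠ 0 := by linarith
    field_simp
  obtain ⟨C, hC, hinterp⟩ := exists_gagliardoE_le_mul_rpow (ν := ν) (s := 1 - 1 / p) hl hp₀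
    (sub_pos.2 ((div_lt_one hp₀).2 hp)) (sub_lt_self 1 (by positivity)) (c := A.toReal)
    ENNReal.toReal_nonneg
  refine ⟨C ^ (p / (p - 1)), by finiteness, fun w hw hbound G hG₀ hG hgrad ↦ ?_⟩
  have hG_pos : 0 < G.toReal := ENNReal.toReal_pos hG₀ hG
  have hE : gagliardoE (1 - 1 / p) p univ w ≤ C * ENNReal.ofReal (G.toReal ^ (1 - 1 / p)) := by
    refine hinterp w hw (fun h ↦ ?_) _ hG_pos fun h ↦ ?_
    · rw [ENNReal.ofReal_toReal hA]
      exact hbound h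
    · rw [ENNReal.ofReal_mul (by positivity), ofReal_norm_rpow _ hp₀.le, ENNReal.ofReal_toReal hG]
      exact hgrad h
  calc gagliardoE (1 - 1 / p) p univ w ^ (p / (p - 1))
      ≤ (C * ENNReal.ofReal (G.toReal ^ (1 - 1 / p))) ^ (p / (p - 1)) := by gcongr
    _ = C ^ (p / (p - 1)) * G := by
        rw [ENNReal.mul_rpow_of_nonneg _ _ hq.le,
          ENNReal.ofReal_rpow_of_nonneg (by positivity) hq.le, ← Real.rpow_mul hG_pos.le, hsq,
          Real.rpow_one, ENNReal.ofReal_toReal hG]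

theorem exists_isRepresentative_gagliardoE_rpow_le (hN : IsCompact N) (b : N) (hl : 1 ≤ l)
    (hp : 1 < p) {R' : ℝ} (hR : 0 ≤ R) (hRR' : R < R') (hR' : R' ≤ 1) :
    ∃ C ≠ ∞, ∀ (α : HomotopyGroup (Fin l) N b) (u : ℝ^l → ℝ^ν) (U : ℝ^l × ℝ → ℝ^ν),
      IsRepresentative α R u → IsExtension N u U → cylinderEnergy p U ≠ ∞ →
      ∃ w, IsRepresentative α R' w ∧
        gagliardoE (1 - 1 / p) p univ w ^ (p / (p - 1)) ≤ C * (cylinderEnergy p U + 1) := by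
  have hp₀ : 0 < p := by linarith
  have hA : 2 * (ediam N ^ p * volume (ball (0 : ℝ^l) R')) ≠ ∞ := by
    have hdiam : ediam N ≠ ∞ := hN.isBounded.ediam_ne_top
    have hball : volume (ball (0 : ℝ^l) R') ≠ ∞ := measure_ball_lt_top.ne
    finiteness
  obtain ⟨C, hC, hinterp⟩ := exists_gagliardoE_rpow_le_mul (ν := ν) hl hp hA
  set k : ℝ≥0∞ := (ENNReal.ofReal (R' - R))⁻¹
  have hk : k ≠ ∞ := ENNReal.inv_ne_top.2 (ENNReal.ofReal_pos.2 (sub_pos.2 hRR')).ne'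
  have hk₀ : k ≠ 0 := ENNReal.inv_ne_zero.2 ENNReal.ofReal_ne_top
  refine ⟨C * k, by finiteness, fun α u U hu hU hfin ↦ ?_⟩
  obtain ⟨w, hw, hlip, hwE⟩ := hU.exists_isRepresentative_lintegral_fderiv_le hu hp₀ hR hRR' hR'
  refine ⟨w, hw, (hinterp w hw.continuous (fun h ↦ ?_) (k * (cylinderEnergy p U + 1))
    (by simp [hk₀]) (by finiteness) fun h ↦ ?_).trans_eq (mul_assoc _ _ _).symm⟩
  · exact hw.incrementEnergy_le hp₀ (fun x y ↦ (edist_eq_enorm_sub (w x) (w y)).symm.trans_le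
      (edist_le_ediam_of_mem (hw.mem x) (hw.mem y))) h
  · refine (incrementEnergy_le_lintegral_fderiv hp.le hlip h).trans ?_
    gcongr
    exact hwE.trans (mul_le_mul_right le_self_add k)

end Slicing

section NearMinimizers

variable {l ν : ℕ} {N : Set (ℝ^ν)} {b : N} {R p : ℝ}

theorem exists_isExtension_cylinderEnergy_le_extEnergy_add_one (α : HomotopyGroup (Fin l) N b)
    (h : ∃ u, IsRepresentative α R u ∧ extEnergy p N u ≠ ∞) :
    ∃ u U, IsRepresentative α R u ∧ IsExtension N u U ∧ cylinderEnergy p U ≠ ∞ ∧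
      ∀ u', IsRepresentative α R u' → cylinderEnergy p U ≤ extEnergy p N u' + 1 := by
  set m : ℝ≥0∞ := ⨅ (u : ℝ^l → ℝ^ν) (_ : IsRepresentative α R u), extEnergy p N u
  have hm_le (u : ℝ^l → ℝ^ν) (hu : IsRepresentative α R u) : m ≤ extEnergy p N u :=
    iInf₂_le u hu
  have hm : m ≠ ∞ := by
    obtain ⟨u, hu, hE⟩ := h
    exact ne_top_of_le_ne_top hE (hm_le u hu)
  obtain ⟨u, hu, hE⟩ : ∃ u, ∃ _ : IsRepresentative α R u, extEnergy p N u < m + 1 := by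
    simpa only [m, iInf_lt_iff] using ENNReal.lt_add_right hm one_ne_zero
  obtain ⟨U, hU, hUE⟩ := exists_isExtension_cylinderEnergy_lt hE
  refine ⟨u, U, hu, hU, hUE.ne_top, fun u' hu' ↦ hUE.le.trans ?_⟩
  gcongr
  exact hm_le u' hu'

theorem exists_isRepresentative_gagliardoE_rpow_le_extEnergy (hN : IsCompact N)
    (hNsub : IsSmoothSubmanifold N) (b : N) (hl : 1 ≤ l) (hp : 1 < p) :
    ∃ C ≠ ∞, ∀ α : HomotopyGroup (Fin l) N b, ∃ u : ℝ^l → ℝ^ν,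
      IsRepresentative α (1 / 2) u ∧ ContDiff ℝ (⊤ : ℕ∞) u ∧
      gagliardoE (1 - 1 / p) p (ball 0 1) u ^ (p / (p - 1)) ≤ C * (extEnergy p N u + 2) := by
  have hq : 0 < p / (p - 1) := div_pos (by linarith) (by linarith)
  obtain ⟨δ, L, P, hP⟩ := hNsub.exists_isTubularRetraction hN ⟨b, b.2⟩
  obtain ⟨C, hC, hslice⟩ := exists_isRepresentative_gagliardoE_rpow_le hN b hl hp
    (R := 1 / 2) (R' := 3 / 4) (by norm_num) (by norm_num) (by norm_num)
  set K : ℝ≥0∞ := (L : ℝ≥0∞) ^ p * ENNReal.ofReal (2 ^ ((1 - 1 / p) * p - l))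
  have hK : K ≠ ∞ := by finiteness
  refine ⟨K ^ (p / (p - 1)) * C + 1, by finiteness, fun α ↦ ?_⟩
  by_cases h : ∃ u, IsRepresentative α (1 / 2) u ∧ extEnergy p N u ≠ ∞
  · obtain ⟨u₀, U₀, hu₀, hU₀, hfin, hmin⟩ :=
      exists_isExtension_cylinderEnergy_le_extEnergy_add_one α h
    obtain ⟨w, hw, hwE⟩ := hslice α u₀ U₀ hu₀ hU₀ hfin
    obtain ⟨u, hu, husmooth, huE⟩ := (hw.comp_smul one_le_two).exists_contDiff (R' := 1 / 2)
      (s := 1 - 1 / p) hP hp.le (by norm_num) (by norm_num)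
    rw [gagliardoE_comp_smul _ _ _ two_pos, ← mul_assoc] at huE
    refine ⟨u, hu, husmooth, ?_⟩
    calc gagliardoE (1 - 1 / p) p (ball 0 1) u ^ (p / (p - 1))
        ≤ (K * gagliardoE (1 - 1 / p) p univ w) ^ (p / (p - 1)) := by
          gcongr
          exact (gagliardoE_mono_set (subset_univ _) u).trans huE
      _ = K ^ (p / (p - 1)) * gagliardoE (1 - 1 / p) p univ w ^ (p / (p - 1)) :=
          ENNReal.mul_rpow_of_nonneg _ _ hq.le
      _ ≤ K ^ (p / (p - 1)) * (C * (extEnergy p N u + 1 + 1)) := by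
          gcongr
          exact hwE.trans (by gcongr; exact hmin u hu)
      _ = K ^ (p / (p - 1)) * C * (extEnergy p N u + 2) := by
          rw [mul_assoc, add_assoc, one_add_one_eq_two]
      _ ≤ (K ^ (p / (p - 1)) * C + 1) * (extEnergy p N u + 2) := by
          gcongr
          exact le_self_add
  · push Not at h
    obtain ⟨w, hw⟩ := exists_isRepresentative α (r := 1 / 4) (by norm_num) (by norm_num)
    obtain ⟨u, hu, husmooth, -⟩ := hw.exists_contDiff (R' := 1 / 2) (s := 1 - 1 / p) hP hp.le
      (by norm_num) (by norm_num)
    exact ⟨u, hu, husmooth, by simp [h u hu]⟩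

theorem tendsto_gagliardoE_cofinite (hN : IsCompact N) (hNsub : IsSmoothSubmanifold N)
    {s : ℝ} (hp : 0 < p) (hs : s ≤ 1) (hsp : l < s * p) (hR : R < 1)
    {u : HomotopyGroup (Fin l) N b → ℝ^l → ℝ^ν} (hu : ∀ α, IsRepresentative α R (u α))
    (hu' : ∀ α, ContDiff ℝ 1 (u α)) :
    Tendsto (fun α ↦ gagliardoE s p (ball 0 1) (u α)) cofinite (𝓝 ∞) := by
  obtain ⟨δ, L, P, hP⟩ := hNsub.exists_isTubularRetraction hN ⟨b, b.2⟩
  refine ENNReal.tendsto_nhds_top fun n ↦ ?_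
  refine (finite_setOf_isRepresentative_gagliardoE_le hN hP b hp hs hsp hR
    (ENNReal.natCast_ne_top n)).subset fun α hα ↦ ⟨u α, hu α, hu' α, not_lt.1 hα⟩

theorem exists_pos_eventually_ofReal_mul_le {ι : Type*} {f : Filter ι} {X M : ι → ℝ≥0∞}
    {C k : ℝ≥0∞} (hC : C ≠ ∞) (hk : k ≠ ∞) (hX : Tendsto X f (𝓝 ∞))
    (h : ∀ i, X i ≤ C * (M i + k)) : ∃ c : ℝ, 0 < c ∧ ∀ᶠ i in f, ENNReal.ofReal c * X i ≤ M i := by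
  refine ⟨(2 * C + 1)⁻¹.toReal, ENNReal.toReal_pos (by simp; finiteness) (by simp), ?_⟩
  filter_upwards [hX.eventually_const_lt (show 2 * C * k < ∞ by finiteness)] with i hi
  rw [ENNReal.ofReal_toReal (by simp), ENNReal.inv_mul_le_iff (by simp) (by finiteness)]
  by_cases hM : M i = ∞
  · simp [hM]
  have hXi : X i ≠ ∞ := ne_top_of_le_ne_top (by finiteness) (h i)
  refine ENNReal.le_of_add_le_add_right hXi ?_
  calc X i + X i ≤ C * (M i + k) + C * (M i + k) := add_le_add (h i) (h i)
    _ = 2 * C * M i + 2 * C * k := by ring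
    _ ≤ (2 * C + 1) * M i + X i := by gcongr; exact le_self_add

end NearMinimizers

theorem statement3_general {ν : ℕ} {N : Set (ℝ^ν)} (hN : IsCompact N)
    (hNsub : IsSmoothSubmanifold N) (b : N) {l : ℕ} (hl : 1 ≤ l) {p : ℝ} (hp : l + 1 < p)
    (hπ : Infinite (HomotopyGroup (Fin l) N b)) :
    ∃ c : ℝ, 0 < c ∧
    ∃ u : ℕ → ℝ^l → ℝ^ν,
      (∀ j, SmoothOnNhd (u j) (closedBall 0 1)) ∧
      (∀ j, MapsTo (u j) (closedBall 0 1) N) ∧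
      (∀ j, ∀ x ∈ sphere (0 : ℝ^l) 1, u j x = b) ∧
      Tendsto (fun j ↦ gagliardoE (1 - 1 / p) p (ball 0 1) (u j)) atTop (𝓝 ∞) ∧
      ∀ j, ∀ U : ℝ^l × ℝ → ℝ^ν,
        C1OnNhd U (closedBall 0 1 ×ˢ Icc (0 : ℝ) 1) →
        MapsTo U (closedBall 0 1 ×ˢ Icc (0 : ℝ) 1) N →
        (∀ x ∈ closedBall (0 : ℝ^l) 1, U (x, 0) = u j x) →
        ENNReal.ofReal c * gagliardoE (1 - 1 / p) p (ball 0 1) (u j) ^ (p / (p - 1)) ≤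
          ∫⁻ z in ball (0 : ℝ^l) 1 ×ˢ Ioo (0 : ℝ) 1, ENNReal.ofReal (‖fderiv ℝ U z‖ ^ p) := by
  have hp₁ : 1 < p := by linarith [(l.cast_nonneg : (0 : ℝ) ≤ l)]
  have hq : 0 < p / (p - 1) := div_pos (by linarith) (by linarith)
  obtain ⟨C, hC, hC'⟩ := exists_isRepresentative_gagliardoE_rpow_le_extEnergy hN hNsub b hl hp₁
  choose u hu hsmooth hE using hC'
  have htend : Tendsto (fun α ↦ gagliardoE (1 - 1 / p) p (ball 0 1) (u α)) cofinite (𝓝 ∞) :=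
    tendsto_gagliardoE_cofinite hN hNsub (by linarith) (sub_le_self 1 (by positivity))
      (by rw [sub_mul, one_div_mul_cancel (by linarith)]; linarith) one_half_lt_one hu
      fun α ↦ (hsmooth α).of_le (by norm_cast)
  have htend_rpow :=
    ((ENNReal.continuous_rpow_const (y := p / (p - 1))).tendsto ∞).comp htend
  rw [ENNReal.top_rpow_of_pos hq] at htend_rpow
  obtain ⟨c, hc, hbound⟩ :=
    exists_pos_eventually_ofReal_mul_le hC ENNReal.ofNat_ne_top htend_rpow hE
  let α := (frequently_cofinite_iff_infinite.1 hbound.frequently).natEmbedding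
  refine ⟨c, hc, fun j ↦ u (α j),
    fun j ↦ ⟨univ, isOpen_univ, subset_univ _, (hsmooth _).contDiffOn⟩,
    fun j x _ ↦ (hu _).mem x, fun j x hx ↦ (hu _).eq_base x ?_, ?_, fun j U hU hUN hUu ↦ ?_⟩
  · rw [mem_sphere_zero_iff_norm.1 hx]
    norm_num
  · rw [← Nat.cofinite_eq_atTop]
    exact htend.comp (Subtype.val_injective.comp α.injective).tendsto_cofinite
  · exact (α j).2.trans (extEnergy_le_cylinderEnergy ⟨hU, hUN, hUu⟩)

/-- superlinear lower bound: if `p > ℓ + 1` and `π_ℓ(N, b)` is infinite, there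
are `c > 0` and smooth maps `u_j : B̄^ℓ → N` equal to `b` on `S^{ℓ-1}` with fractional energies
tending to `∞`, such that every `C^1` extension `U : B̄^ℓ × [0,1] → N` of `u_j` satisfies
`∫ ‖DU‖^p ≥ c (E^{1-1/p,p}(u_j))^{p/(p-1)}`. -/
theorem statement3 (ν : ℕ) (hν : 1 ≤ ν) (N : Set (EuclideanSpace ℝ (Fin ν)))
    (hNcpt : IsCompact N) (hNconn : IsConnected N) (hNsub : IsSmoothSubmanifold N)
    (b : EuclideanSpace ℝ (Fin ν)) (hb : b ∈ N)
    (l : ℕ) (hl : 1 ≤ l) (p : ℝ) (hp : (l : ℝ) + 1 < p)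
    (hπ : Infinite (HomotopyGroup (Fin l) ↥N ⟨b, hb⟩)) :
    ∃ c : ℝ, 0 < c ∧
    ∃ u : ℕ → EuclideanSpace ℝ (Fin l) → EuclideanSpace ℝ (Fin ν),
      (∀ j, SmoothOnNhd (u j) (closedBall 0 1)) ∧
      (∀ j, MapsTo (u j) (closedBall 0 1) N) ∧
      (∀ j, ∀ x ∈ sphere (0 : EuclideanSpace ℝ (Fin l)) 1, u j x = b) ∧
      Filter.Tendsto (fun j => gagliardoE (1 - 1 / p) p (ball 0 1) (u j))
        Filter.atTop (nhds ⊤) ∧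
      (∀ j, ∀ U : EuclideanSpace ℝ (Fin l) × ℝ → EuclideanSpace ℝ (Fin ν),
        C1OnNhd U (closedBall 0 1 ×ˢ Icc (0 : ℝ) 1) →
        MapsTo U (closedBall 0 1 ×ˢ Icc (0 : ℝ) 1) N →
        (∀ x ∈ closedBall (0 : EuclideanSpace ℝ (Fin l)) 1, U (x, 0) = u j x) →
        ENNReal.ofReal c * (gagliardoE (1 - 1 / p) p (ball 0 1) (u j)) ^ (p / (p - 1))
          ≤ ∫⁻ z in ball (0 : EuclideanSpace ℝ (Fin l)) 1 ×ˢ Ioo (0 : ℝ) 1,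
              ENNReal.ofReal (‖fderiv ℝ U z‖ ^ p)) :=
  statement3_general hNcpt hNsub ⟨b, hb⟩ hl hp hπ

end
end

section
/- Let ν ≥ 1, let N ⊆ ℝ^ν be a compact connected smooth embedded submanifold without boundary with base point b ∈ N, let ℓ ≥ 1, let 1 ≤ p < ∞, and let 0 < ρ < 1. Let B^{ℓ+1}_+ = { x ∈ ℝ^{ℓ+1} : |x| < 1, x_{ℓ+1} > 0 } denote the open upper half-ball. There exists a constant c > 0, depending only on ℓ and p, such that for every continuous u : B̄^ℓ → N with u(x) = b whenever ρ ≤ |x| ≤ 1, and every C^1 map U : closure(B^{ℓ+1}_+) → N with U(x, 0) = u(x) for all x ∈ B̄^ℓ, one has ∫_{B^{ℓ+1}_+} ‖DU‖^p ≥ c · ( ∫_ρ^1 r^{ℓ−p} dr ) · E^{1,p}_top(u). -/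
/-!
The paraboloids `{(y, t) | 2 r t = r ^ 2 - ‖y‖ ^ 2, 0 ≤ t}`, `0 < r ≤ 1`, foliate part of the
half-ball. Each is parametrized over the unit ball by `x ↦ (r x, r (1 - ‖x‖ ^ 2) / 2)`, which is
`r`-Lipschitz for the sup norm on `ℝ ^ ℓ × ℝ`. Flattening a paraboloid while widening it to radius
`1` is a homotopy from `U` on the paraboloid to `u`; for `ρ ≤ r` it is relative to the sphere, since
`u = b` on the rims swept out. So `U` on each such paraboloid is a competitor for the topological
energy, and by scaling its energy is at most `r ^ (p - ℓ)` times the integral of `‖DU‖ ^ p` over the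
paraboloid with respect to the measure of its projection to `ℝ ^ ℓ`. At a fixed `y`, the height of
the paraboloid moves with `r` at speed at least `1 / 2`, so integrating over `r` and applying
Tonelli bounds the energy of `U` from below.
-/

open Metric Set MeasureTheory Filter
open scoped ENNReal Topology

noncomputable section

section EnergyDensity

variable {E F : Type*} [NormedAddCommGroup E] [NormedSpace ℝ E]
  [NormedAddCommGroup F] [NormedSpace ℝ F]

/-- The density `‖DU‖ ^ p` of the `p`-energy of `U`, for the operator norm of the derivative. -/
def energyDensity (p : ℝ) (U : E → F) (z : E) : ℝ≥0∞ :=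
  ENNReal.ofReal (‖fderiv ℝ U z‖ ^ p)

lemma measurable_energyDensity [MeasurableSpace E] [OpensMeasurableSpace E] [CompleteSpace F]
    (p : ℝ) (U : E → F) : Measurable (energyDensity p U) :=
  ((measurable_fderiv ℝ U).norm.pow_const p).ennreal_ofReal

end EnergyDensity

section HalfBall

/-- The closed upper half-ball. It is Euclidean although the norm of `E × ℝ` is the sup norm. -/
def closedHalfBall (E : Type*) [NormedAddCommGroup E] : Set (E × ℝ) :=
  {z | ‖z.1‖ ^ 2 + z.2 ^ 2 ≤ 1 ∧ 0 ≤ z.2}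

/-- The open upper half-ball. It is Euclidean although the norm of `E × ℝ` is the sup norm. -/
def openHalfBall (E : Type*) [NormedAddCommGroup E] : Set (E × ℝ) :=
  {z | ‖z.1‖ ^ 2 + z.2 ^ 2 < 1 ∧ 0 < z.2}

variable {E : Type*} [NormedAddCommGroup E]

lemma isOpen_openHalfBall : IsOpen (openHalfBall E) := by
  have hball : IsOpen {z : E × ℝ | ‖z.1‖ ^ 2 + z.2 ^ 2 < 1} := isOpen_lt (by fun_prop) (by fun_prop)
  exact hball.inter (isOpen_lt continuous_const continuous_snd)

lemma openHalfBall_subset_closedHalfBall : openHalfBall E ⊆ closedHalfBall E :=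
  fun _ hz => ⟨hz.1.le, hz.2.le⟩

end HalfBall

section Paraboloid

variable {E : Type*} [NormedAddCommGroup E] [NormedSpace ℝ E]

/-- The parametrization of the paraboloid cap of radius `m` and height `s / 2` whose rim is the
sphere of radius `m` in `E × {0}`. The caps with `m = s` foliate a region of the upper half-space;
those with `m ≠ s` interpolate between them and the flat unit disc. -/
def paraboloid (m s : ℝ) (x : E) : E × ℝ :=
  (m • x, s * (1 - ‖x‖ ^ 2) / 2)

lemma paraboloid_of_norm_eq_one (m s : ℝ) {x : E} (hx : ‖x‖ = 1) :
    paraboloid m s x = (m • x, 0) := by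
  simp [paraboloid, hx]

lemma apply_paraboloid_eq_of_norm_eq_one {X : Type*} {b : X} {u : E → X} {U : E × ℝ → X} {r : ℝ}
    (hr : 0 ≤ r) (hub : ∀ x, r ≤ ‖x‖ → ‖x‖ ≤ 1 → u x = b)
    (hUu : ∀ x ∈ closedBall 0 1, U (x, 0) = u x) {x : E} (hx : ‖x‖ = 1) {m : ℝ}
    (hm : m ∈ Icc r 1) (s : ℝ) : U (paraboloid m s x) = b := by
  have hnorm : ‖m • x‖ = m := by
    rw [norm_smul, hx, mul_one, Real.norm_of_nonneg (hr.trans hm.1)]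
  rw [paraboloid_of_norm_eq_one m s hx, hUu _ (mem_closedBall_zero_iff.2 (hnorm.trans_le hm.2)),
    hub _ (hm.1.trans_eq hnorm.symm) (hnorm.trans_le hm.2)]

lemma norm_sq_add_sq_paraboloid_le {m s : ℝ} (hm : |m| ≤ 1) (hs : |s| ≤ 1) (x : E) :
    ‖(paraboloid m s x).1‖ ^ 2 + (paraboloid m s x).2 ^ 2 ≤ ((1 + ‖x‖ ^ 2) / 2) ^ 2 := by
  calc ‖(paraboloid m s x).1‖ ^ 2 + (paraboloid m s x).2 ^ 2
      = m ^ 2 * ‖x‖ ^ 2 + s ^ 2 * ((1 - ‖x‖ ^ 2) / 2) ^ 2 := by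
        simp only [paraboloid, norm_smul, mul_pow, Real.norm_eq_abs, sq_abs]
        ring
    _ ≤ 1 * ‖x‖ ^ 2 + 1 * ((1 - ‖x‖ ^ 2) / 2) ^ 2 := by
        gcongr <;> rwa [sq_le_one_iff_abs_le_one]
    _ = ((1 + ‖x‖ ^ 2) / 2) ^ 2 := by ring

lemma paraboloid_mem_closedHalfBall {m s : ℝ} (hm : |m| ≤ 1) (hs : s ∈ Icc 0 1) {x : E}
    (hx : ‖x‖ ≤ 1) : paraboloid m s x ∈ closedHalfBall E := by
  have hx_sq : ‖x‖ ^ 2 ≤ 1 := pow_le_one₀ (norm_nonneg x) hx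
  refine ⟨(norm_sq_add_sq_paraboloid_le hm ?_ x).trans (pow_le_one₀ (by positivity) ?_), ?_⟩
  · rw [abs_of_nonneg hs.1]
    exact hs.2
  · linarith
  · exact div_nonneg (mul_nonneg hs.1 (sub_nonneg.2 hx_sq)) zero_le_two

lemma paraboloid_mem_openHalfBall {m s : ℝ} (hm : |m| ≤ 1) (hs : s ∈ Ioc 0 1) {x : E}
    (hx : ‖x‖ < 1) : paraboloid m s x ∈ openHalfBall E := by
  have hx_sq : ‖x‖ ^ 2 < 1 := pow_lt_one₀ (norm_nonneg x) hx two_ne_zero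
  refine ⟨(norm_sq_add_sq_paraboloid_le hm ?_ x).trans_lt
    (pow_lt_one₀ (by positivity) ?_ two_ne_zero), ?_⟩
  · rw [abs_of_pos hs.1]
    exact hs.2
  · linarith
  · exact div_pos (mul_pos hs.1 (sub_pos.2 hx_sq)) zero_lt_two

end Paraboloid

section ParaboloidDerivative

variable {E : Type*} [NormedAddCommGroup E] [InnerProductSpace ℝ E]

lemma contDiff_paraboloid (m s : ℝ) {n : WithTop ℕ∞} :
    ContDiff ℝ n (paraboloid m s : E → E × ℝ) :=
  (contDiff_id.const_smul m).prodMk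
    ((contDiff_const.mul (contDiff_const.sub (contDiff_norm_sq ℝ))).div_const 2)

lemma hasFDerivAt_paraboloid (m s : ℝ) (x : E) :
    HasFDerivAt (paraboloid m s)
      ((m • ContinuousLinearMap.id ℝ E).prod (-(s • innerSL ℝ x))) x := by
  refine ((hasFDerivAt_id x).const_smul m).prodMk ?_
  refine ((((hasStrictFDerivAt_norm_sq x).hasFDerivAt.const_sub 1).const_mul s).mul_const
    (2⁻¹ : ℝ)).congr_fderiv ?_
  module

lemma norm_fderiv_paraboloid_le (m s : ℝ) (x : E) :
    ‖fderiv ℝ (paraboloid m s) x‖ ≤ max |m| (|s| * ‖x‖) := by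
  rw [(hasFDerivAt_paraboloid m s x).fderiv, ContinuousLinearMap.opNorm_prod, Prod.norm_mk,
    norm_neg, norm_smul, norm_smul, innerSL_apply_norm, Real.norm_eq_abs, Real.norm_eq_abs]
  gcongr
  exact mul_le_of_le_one_right (abs_nonneg m) ContinuousLinearMap.norm_id_le

variable {F : Type*} [NormedAddCommGroup F] [NormedSpace ℝ F] {U : E × ℝ → F} {r : ℝ}

lemma norm_fderiv_comp_paraboloid_le {x : E} (hx : ‖x‖ ≤ 1)
    (hU : DifferentiableAt ℝ U (paraboloid r r x)) :
    ‖fderiv ℝ (U ∘ paraboloid r r) x‖ ≤ |r| * ‖fderiv ℝ U (paraboloid r r x)‖ := by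
  have hD : ‖fderiv ℝ (paraboloid r r) x‖ ≤ |r| :=
    (norm_fderiv_paraboloid_le r r x).trans
      (max_le le_rfl (mul_le_of_le_one_right (abs_nonneg r) hx))
  rw [fderiv_comp x hU (hasFDerivAt_paraboloid r r x).differentiableAt, mul_comm]
  exact (ContinuousLinearMap.opNorm_comp_le _ _).trans (by gcongr)

lemma energyDensity_comp_paraboloid_le {p : ℝ} (hp : 0 ≤ p) (hr : 0 ≤ r) {x : E} (hx : ‖x‖ ≤ 1)
    (hU : DifferentiableAt ℝ U (paraboloid r r x)) :
    energyDensity p (U ∘ paraboloid r r) x ≤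
      ENNReal.ofReal (r ^ p) * energyDensity p U (paraboloid r r x) := by
  rw [energyDensity, energyDensity, ← ENNReal.ofReal_mul (by positivity),
    ← Real.mul_rpow hr (norm_nonneg _)]
  gcongr
  simpa only [abs_of_nonneg hr] using norm_fderiv_comp_paraboloid_le hx hU

end ParaboloidDerivative

section ChangeOfVariables

lemma ofReal_mul_setLIntegral_comp_le {s : Set ℝ} (hs : MeasurableSet s) {g g' : ℝ → ℝ} {c : ℝ}
    (hg : ∀ x ∈ s, HasDerivWithinAt g (g' x) s x) (hinj : InjOn g s) (hc : ∀ x ∈ s, c ≤ |g' x|)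
    (f : ℝ → ℝ≥0∞) :
    ENNReal.ofReal c * ∫⁻ x in s, f (g x) ≤ ∫⁻ t in g '' s, f t := by
  rw [lintegral_image_eq_lintegral_abs_deriv_mul hs hg hinj f]
  refine (lintegral_const_mul_le _ _).trans (setLIntegral_mono' hs fun x hx => ?_)
  gcongr
  exact hc x hx

lemma lintegral_comp_const_smul {E : Type*} [NormedAddCommGroup E] [NormedSpace ℝ E]
    [FiniteDimensional ℝ E] [MeasurableSpace E] [BorelSpace E] (μ : Measure E)
    [μ.IsAddHaarMeasure] {r : ℝ} (hr : r ≠ 0) (f : E → ℝ≥0∞) :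
    ∫⁻ x, f (r • x) ∂μ = ENNReal.ofReal |(r ^ Module.finrank ℝ E)⁻¹| * ∫⁻ y, f y ∂μ := by
  rw [← (measurableEmbedding_const_smul₀ hr).lintegral_map, Measure.map_addHaar_smul μ hr,
    lintegral_smul_measure, smul_eq_mul]

lemma ofReal_intervalIntegral_le_lintegral {a b : ℝ} (hab : a ≤ b) (f : ℝ → ℝ)
    (hf : ∀ x ∈ Ioc a b, 0 ≤ f x) :
    ENNReal.ofReal (∫ x in a..b, f x) ≤ ∫⁻ x in Ioc a b, ENNReal.ofReal (f x) := by
  rw [intervalIntegral.integral_of_le hab]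
  calc ENNReal.ofReal (∫ x in Ioc a b, f x)
      ≤ ‖∫ x in Ioc a b, f x‖ₑ := Real.ofReal_le_enorm _
    _ ≤ ∫⁻ x in Ioc a b, ‖f x‖ₑ := enorm_integral_le_lintegral_enorm _
    _ = ∫⁻ x in Ioc a b, ENNReal.ofReal (f x) :=
        setLIntegral_congr_fun measurableSet_Ioc fun x hx => Real.enorm_of_nonneg (hf x hx)

end ChangeOfVariables

section Foliation

/-- The height of the paraboloid `paraboloid r r` above a point `y` with `‖y‖ ^ 2 = a`. -/
def paraboloidHeight (r a : ℝ) : ℝ :=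
  r / 2 - a / (2 * r)

lemma hasDerivAt_paraboloidHeight (a : ℝ) {r : ℝ} (hr : r ≠ 0) :
    HasDerivAt (paraboloidHeight · a) (1 / 2 + a / (2 * r ^ 2)) r := by
  refine (((hasDerivAt_id' r).div_const 2).sub
    ((hasDerivAt_const r a).div ((hasDerivAt_id' r).const_mul 2) (by positivity))).congr_deriv ?_
  field_simp
  ring

lemma strictMonoOn_paraboloidHeight {a : ℝ} (ha : 0 ≤ a) :
    StrictMonoOn (paraboloidHeight · a) (Ioi 0) := by
  intro r (hr : 0 < r) s _ hrs
  have hterm : a / (2 * s) ≤ a / (2 * r) := by gcongr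
  simp only [paraboloidHeight]
  linarith

lemma half_mul_lintegral_comp_paraboloidHeight_le {a : ℝ} (ha : 0 ≤ a) (f : ℝ → ℝ≥0∞) :
    ENNReal.ofReal (1 / 2) * ∫⁻ r in Ioi 0, f (paraboloidHeight r a) ≤ ∫⁻ t, f t := by
  have hspeed : ∀ r ∈ Ioi (0 : ℝ), 1 / 2 ≤ |1 / 2 + a / (2 * r ^ 2)| := fun r _ =>
    (le_add_of_nonneg_right (by positivity)).trans (le_abs_self _)
  exact (ofReal_mul_setLIntegral_comp_le measurableSet_Ioi
    (fun r hr => (hasDerivAt_paraboloidHeight a (ne_of_gt hr)).hasDerivWithinAt)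
    (strictMonoOn_paraboloidHeight ha).injOn hspeed f).trans (setLIntegral_le_lintegral _ _)

lemma half_mul_lintegral_paraboloids_le {E : Type*} [NormedAddCommGroup E] [MeasurableSpace E]
    [OpensMeasurableSpace E] (μ : Measure E) [SFinite μ] {f : E × ℝ → ℝ≥0∞} (hf : Measurable f) :
    ENNReal.ofReal (1 / 2) *
        ∫⁻ r in Ioi 0, ∫⁻ y, f (y, paraboloidHeight r (‖y‖ ^ 2)) ∂μ ≤
      ∫⁻ z, f z ∂μ.prod volume := by
  have hmeas : Measurable fun q : ℝ × E => f (q.2, paraboloidHeight q.1 (‖q.2‖ ^ 2)) :=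
    hf.comp (by unfold paraboloidHeight; fun_prop)
  calc ENNReal.ofReal (1 / 2) * ∫⁻ r in Ioi 0, ∫⁻ y, f (y, paraboloidHeight r (‖y‖ ^ 2)) ∂μ
      = ∫⁻ y, (ENNReal.ofReal (1 / 2) *
          ∫⁻ r in Ioi 0, f (y, paraboloidHeight r (‖y‖ ^ 2))) ∂μ := by
        rw [lintegral_lintegral_swap hmeas.aemeasurable,
          lintegral_const_mul' _ _ ENNReal.ofReal_ne_top]
    _ ≤ ∫⁻ y, (∫⁻ t, f (y, t)) ∂μ := lintegral_mono fun y =>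
        half_mul_lintegral_comp_paraboloidHeight_le (sq_nonneg ‖y‖) fun t => f (y, t)
    _ = ∫⁻ z, f z ∂μ.prod volume := (lintegral_prod _ hf.aemeasurable).symm

lemma paraboloid_eq_prodMk_paraboloidHeight {E : Type*} [NormedAddCommGroup E] [NormedSpace ℝ E]
    {r : ℝ} (hr : r ≠ 0) (x : E) :
    paraboloid r r x = (r • x, paraboloidHeight r (‖r • x‖ ^ 2)) := by
  refine Prod.ext rfl ?_
  simp only [paraboloid, paraboloidHeight, norm_smul, mul_pow, Real.norm_eq_abs, sq_abs]
  field_simp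

lemma lintegral_comp_paraboloid {E : Type*} [NormedAddCommGroup E] [NormedSpace ℝ E]
    [FiniteDimensional ℝ E] [MeasurableSpace E] [BorelSpace E] (μ : Measure E)
    [μ.IsAddHaarMeasure] {r : ℝ} (hr : 0 < r) (f : E × ℝ → ℝ≥0∞) :
    ∫⁻ x, f (paraboloid r r x) ∂μ =
      ENNReal.ofReal (r ^ Module.finrank ℝ E)⁻¹ *
        ∫⁻ y, f (y, paraboloidHeight r (‖y‖ ^ 2)) ∂μ := by
  simp only [paraboloid_eq_prodMk_paraboloidHeight hr.ne']
  rw [lintegral_comp_const_smul μ hr.ne' fun y => f (y, paraboloidHeight r (‖y‖ ^ 2)),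
    abs_of_pos (by positivity)]

variable {E : Type*} [NormedAddCommGroup E] [InnerProductSpace ℝ E] [FiniteDimensional ℝ E]
  [MeasurableSpace E] [BorelSpace E] (μ : Measure E) [μ.IsAddHaarMeasure]
variable {F : Type*} [NormedAddCommGroup F] [NormedSpace ℝ F] {U : E × ℝ → F} {p : ℝ}

lemma rpow_mul_lintegral_energyDensity_comp_paraboloid_le (hp : 0 ≤ p)
    (hU : DifferentiableOn ℝ U (openHalfBall E)) {r : ℝ} (hr : r ∈ Ioc 0 1) :
    ENNReal.ofReal (r ^ (Module.finrank ℝ E - p)) *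
        ∫⁻ x in ball 0 1, energyDensity p (U ∘ paraboloid r r) x ∂μ ≤
      ∫⁻ y, (openHalfBall E).indicator (energyDensity p U)
        (y, paraboloidHeight r (‖y‖ ^ 2)) ∂μ := by
  have hr0 : 0 < r := hr.1
  set f := (openHalfBall E).indicator (energyDensity p U) with hf
  have hdensity : ∀ x ∈ ball (0 : E) 1,
      energyDensity p (U ∘ paraboloid r r) x ≤ ENNReal.ofReal (r ^ p) * f (paraboloid r r x) := by
    intro x hx
    have hx1 : ‖x‖ < 1 := mem_ball_zero_iff.1 hx
    have hmem := paraboloid_mem_openHalfBall ((abs_of_pos hr0).trans_le hr.2) hr hx1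
    rw [hf, indicator_of_mem hmem]
    exact energyDensity_comp_paraboloid_le hp hr0.le hx1.le
      (hU.differentiableAt (isOpen_openHalfBall.mem_nhds hmem))
  have hcancel : r ^ (Module.finrank ℝ E - p) * (r ^ p * (r ^ Module.finrank ℝ E)⁻¹) = 1 := by
    rw [← mul_assoc, ← Real.rpow_add hr0, sub_add_cancel, Real.rpow_natCast,
      mul_inv_cancel₀ (by positivity)]
  calc ENNReal.ofReal (r ^ (Module.finrank ℝ E - p)) *
        ∫⁻ x in ball 0 1, energyDensity p (U ∘ paraboloid r r) x ∂μ
      ≤ ENNReal.ofReal (r ^ (Module.finrank ℝ E - p)) *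
          ∫⁻ x, ENNReal.ofReal (r ^ p) * f (paraboloid r r x) ∂μ := by
        gcongr 1
        exact (setLIntegral_mono' measurableSet_ball hdensity).trans
          (setLIntegral_le_lintegral _ _)
    _ = ∫⁻ y, f (y, paraboloidHeight r (‖y‖ ^ 2)) ∂μ := by
        rw [lintegral_const_mul' _ _ ENNReal.ofReal_ne_top, lintegral_comp_paraboloid μ hr0,
          ← mul_assoc, ← mul_assoc, ← ENNReal.ofReal_mul (by positivity),
          ← ENNReal.ofReal_mul (by positivity), mul_assoc (r ^ _), hcancel, ENNReal.ofReal_one,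
          one_mul]

lemma half_mul_lintegral_energy_paraboloids_le [CompleteSpace F] (hp : 0 ≤ p)
    (hU : DifferentiableOn ℝ U (openHalfBall E)) :
    ENNReal.ofReal (1 / 2) * ∫⁻ r in Ioc 0 1, ENNReal.ofReal (r ^ (Module.finrank ℝ E - p)) *
        ∫⁻ x in ball 0 1, energyDensity p (U ∘ paraboloid r r) x ∂μ ≤
      ∫⁻ z in openHalfBall E, energyDensity p U z ∂μ.prod volume := by
  set f := (openHalfBall E).indicator (energyDensity p U)
  have hf : Measurable f :=
    (measurable_energyDensity p U).indicator isOpen_openHalfBall.measurableSet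
  calc _ ≤ ENNReal.ofReal (1 / 2) *
          ∫⁻ r in Ioc 0 1, ∫⁻ y, f (y, paraboloidHeight r (‖y‖ ^ 2)) ∂μ := by
        gcongr 1
        exact setLIntegral_mono' measurableSet_Ioc fun r hr =>
          rpow_mul_lintegral_energyDensity_comp_paraboloid_le μ hp hU hr
    _ ≤ ENNReal.ofReal (1 / 2) *
          ∫⁻ r in Ioi 0, ∫⁻ y, f (y, paraboloidHeight r (‖y‖ ^ 2)) ∂μ := by
        gcongr
        exact Ioc_subset_Ioi_self
    _ ≤ ∫⁻ z, f z ∂μ.prod volume := half_mul_lintegral_paraboloids_le μ hf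
    _ = ∫⁻ z in openHalfBall E, energyDensity p U z ∂μ.prod volume :=
        lintegral_indicator isOpen_openHalfBall.measurableSet _

end Foliation

section TopologicalEnergy

variable {l ν : ℕ} {N : Set (EuclideanSpace ℝ (Fin ν))} {b : EuclideanSpace ℝ (Fin ν)}
  {u : EuclideanSpace ℝ (Fin l) → EuclideanSpace ℝ (Fin ν)}
  {U : EuclideanSpace ℝ (Fin l) × ℝ → EuclideanSpace ℝ (Fin ν)} {p r : ℝ}

lemma homotopicRelSphere_comp_paraboloid (hr : r ∈ Icc 0 1)
    (hub : ∀ x : EuclideanSpace ℝ (Fin l), r ≤ ‖x‖ → ‖x‖ ≤ 1 → u x = b)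
    (hU : ContinuousOn U (closedHalfBall (EuclideanSpace ℝ (Fin l))))
    (hUN : MapsTo U (closedHalfBall (EuclideanSpace ℝ (Fin l))) N)
    (hUu : ∀ x ∈ closedBall (0 : EuclideanSpace ℝ (Fin l)) 1, U (x, 0) = u x) :
    HomotopicRelSphere N (U ∘ paraboloid r r) u := by
  let cap : EuclideanSpace ℝ (Fin l) × ℝ → EuclideanSpace ℝ (Fin l) × ℝ := fun z =>
    paraboloid (AffineMap.lineMap r 1 z.2) (AffineMap.lineMap r 0 z.2) z.1
  have hwidth : ∀ t ∈ Icc (0 : ℝ) 1, AffineMap.lineMap r 1 t ∈ Icc r 1 := fun t ht =>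
    (convex_Icc r 1).lineMap_mem (left_mem_Icc.2 hr.2) (right_mem_Icc.2 hr.2) ht
  have hcap_cont : Continuous cap := by
    simp only [cap, paraboloid, AffineMap.lineMap_apply_module]
    fun_prop
  have hcap_mem : MapsTo cap (closedBall 0 1 ×ˢ Icc 0 1) (closedHalfBall _) := by
    rintro ⟨x, t⟩ ⟨hx, ht⟩
    refine paraboloid_mem_closedHalfBall ?_ ?_ (mem_closedBall_zero_iff.1 hx)
    · rw [abs_of_nonneg (hr.1.trans (hwidth t ht).1)]
      exact (hwidth t ht).2
    · exact (convex_Icc 0 1).lineMap_mem hr (left_mem_Icc.2 zero_le_one) ht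
  refine ⟨U ∘ cap, hU.comp hcap_cont.continuousOn hcap_mem, hUN.comp hcap_mem,
    fun x hx => ⟨?_, ?_⟩, fun x hx t ht => ?_⟩
  · simp [cap]
  · simpa [cap, paraboloid] using hUu x hx
  · have hx1 : ‖x‖ = 1 := mem_sphere_zero_iff_norm.1 hx
    exact (apply_paraboloid_eq_of_norm_eq_one hr.1 hub hUu hx1 (hwidth t ht) _).trans
      (apply_paraboloid_eq_of_norm_eq_one hr.1 hub hUu hx1 (left_mem_Icc.2 hr.2) r).symm

lemma topEnergy_le_lintegral_comp_paraboloid (hr : r ∈ Icc 0 1)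
    (hub : ∀ x : EuclideanSpace ℝ (Fin l), r ≤ ‖x‖ → ‖x‖ ≤ 1 → u x = b)
    (hU : C1OnNhd U (closedHalfBall (EuclideanSpace ℝ (Fin l))))
    (hUN : MapsTo U (closedHalfBall (EuclideanSpace ℝ (Fin l))) N)
    (hUu : ∀ x ∈ closedBall (0 : EuclideanSpace ℝ (Fin l)) 1, U (x, 0) = u x) :
    topEnergy p N b u ≤ ∫⁻ x in ball 0 1, energyDensity p (U ∘ paraboloid r r) x := by
  obtain ⟨V, hV, hVsub, hUV⟩ := hU
  have hsmooth : ContDiff ℝ 1 (paraboloid r r : EuclideanSpace ℝ (Fin l) → _) :=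
    contDiff_paraboloid r r
  have hmem : MapsTo (paraboloid r r) (closedBall (0 : EuclideanSpace ℝ (Fin l)) 1)
      (closedHalfBall _) := fun x hx =>
    paraboloid_mem_closedHalfBall ((abs_of_nonneg hr.1).trans_le hr.2) hr
      (mem_closedBall_zero_iff.1 hx)
  exact sInf_le ⟨U ∘ paraboloid r r,
    ⟨_, hV.preimage hsmooth.continuous, fun x hx => hVsub (hmem hx),
      hUV.comp hsmooth.contDiffOn fun _ hx => hx⟩,
    hUN.comp hmem,
    fun x hx => apply_paraboloid_eq_of_norm_eq_one hr.1 hub hUu (mem_sphere_zero_iff_norm.1 hx)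
      (left_mem_Icc.2 hr.2) r,
    homotopicRelSphere_comp_paraboloid hr hub (hUV.continuousOn.mono hVsub) hUN hUu,
    rfl⟩

theorem statement4_general {ρ : ℝ} (hp : 0 ≤ p) (hρ : 0 < ρ) (hρ1 : ρ < 1)
    (hub : ∀ x : EuclideanSpace ℝ (Fin l), ρ ≤ ‖x‖ → ‖x‖ ≤ 1 → u x = b)
    (hU : C1OnNhd U (closedHalfBall (EuclideanSpace ℝ (Fin l))))
    (hUN : MapsTo U (closedHalfBall (EuclideanSpace ℝ (Fin l))) N)
    (hUu : ∀ x ∈ closedBall (0 : EuclideanSpace ℝ (Fin l)) 1, U (x, 0) = u x) :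
    ENNReal.ofReal (1 / 2) * ENNReal.ofReal (∫ r in ρ..1, r ^ ((l : ℝ) - p)) * topEnergy p N b u ≤
      ∫⁻ z in openHalfBall (EuclideanSpace ℝ (Fin l)), energyDensity p U z := by
  have hdiff : DifferentiableOn ℝ U (openHalfBall (EuclideanSpace ℝ (Fin l))) := by
    obtain ⟨V, -, hVsub, hUV⟩ := hU
    exact (hUV.differentiableOn one_ne_zero).mono
      (openHalfBall_subset_closedHalfBall.trans hVsub)
  calc ENNReal.ofReal (1 / 2) * ENNReal.ofReal (∫ r in ρ..1, r ^ ((l : ℝ) - p)) * topEnergy p N b u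
      ≤ ENNReal.ofReal (1 / 2) *
          ∫⁻ r in Ioc ρ 1, ENNReal.ofReal (r ^ ((l : ℝ) - p)) * topEnergy p N b u := by
        rw [mul_assoc, lintegral_mul_const _ (by fun_prop)]
        gcongr
        exact ofReal_intervalIntegral_le_lintegral hρ1.le _ fun r hr =>
          Real.rpow_nonneg (hρ.trans hr.1).le _
    _ ≤ ENNReal.ofReal (1 / 2) * ∫⁻ r in Ioc ρ 1, ENNReal.ofReal (r ^ ((l : ℝ) - p)) *
          ∫⁻ x in ball 0 1, energyDensity p (U ∘ paraboloid r r) x := by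
        gcongr 1
        refine setLIntegral_mono' measurableSet_Ioc fun r hr => ?_
        gcongr
        exact topEnergy_le_lintegral_comp_paraboloid ⟨(hρ.trans hr.1).le, hr.2⟩
          (fun x hx => hub x (hr.1.le.trans hx)) hU hUN hUu
    _ ≤ ENNReal.ofReal (1 / 2) * ∫⁻ r in Ioc 0 1, ENNReal.ofReal (r ^ ((l : ℝ) - p)) *
          ∫⁻ x in ball 0 1, energyDensity p (U ∘ paraboloid r r) x := by
        gcongr
    _ ≤ ∫⁻ z in openHalfBall (EuclideanSpace ℝ (Fin l)), energyDensity p U z := by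
        simpa only [finrank_euclideanSpace_fin, ← Measure.volume_eq_prod] using
          half_mul_lintegral_energy_paraboloids_le volume hp hdiff

end TopologicalEnergy

/-- fundamental lower bound on the half-ball: there is `c > 0` depending only on
`ℓ` and `p` such that for every `0 < ρ < 1`, every `u : B̄^ℓ → N` continuous with `u = b` on
`{ρ ≤ |x| ≤ 1}`, and every `C^1` map `U` on the closed upper half-ball of `ℝ^{ℓ+1}` with values
in `N` and `U(·,0) = u`, one has `∫_{B^{ℓ+1}_+} ‖DU‖^p ≥ c (∫_ρ^1 r^{ℓ-p} dr) E^{1,p}_top(u)`. -/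
theorem statement4 (l : ℕ) (hl : 1 ≤ l) (p : ℝ) (hp : 1 ≤ p) :
    ∃ c : ℝ, 0 < c ∧
      ∀ (ρ : ℝ), 0 < ρ → ρ < 1 →
      ∀ (ν : ℕ), 1 ≤ ν →
      ∀ (N : Set (EuclideanSpace ℝ (Fin ν))),
        IsCompact N → IsConnected N → IsSmoothSubmanifold N →
      ∀ b ∈ N,
      ∀ u : EuclideanSpace ℝ (Fin l) → EuclideanSpace ℝ (Fin ν),
        ContinuousOn u (closedBall 0 1) →
        MapsTo u (closedBall 0 1) N →
        (∀ x : EuclideanSpace ℝ (Fin l), ρ ≤ ‖x‖ → ‖x‖ ≤ 1 → u x = b) →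
      ∀ U : EuclideanSpace ℝ (Fin l) × ℝ → EuclideanSpace ℝ (Fin ν),
        C1OnNhd U {z : EuclideanSpace ℝ (Fin l) × ℝ | ‖z.1‖ ^ 2 + z.2 ^ 2 ≤ 1 ∧ 0 ≤ z.2} →
        MapsTo U {z : EuclideanSpace ℝ (Fin l) × ℝ | ‖z.1‖ ^ 2 + z.2 ^ 2 ≤ 1 ∧ 0 ≤ z.2} N →
        (∀ x ∈ closedBall (0 : EuclideanSpace ℝ (Fin l)) 1, U (x, 0) = u x) →
        ENNReal.ofReal c * ENNReal.ofReal (∫ r in ρ..1, r ^ ((l : ℝ) - p)) * topEnergy p N b u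
          ≤ ∫⁻ z in {z : EuclideanSpace ℝ (Fin l) × ℝ | ‖z.1‖ ^ 2 + z.2 ^ 2 < 1 ∧ 0 < z.2},
              ENNReal.ofReal (‖fderiv ℝ U z‖ ^ p) :=
  ⟨1 / 2, by norm_num, fun _ hρ hρ1 _ _ _ _ _ _ _ _ _ _ _ hub _ hU hUN hUu =>
    statement4_general (zero_le_one.trans hp) hρ hρ1 hub hU hUN hUu⟩

end
end

section
/- Let ν ≥ 1, let N ⊆ ℝ^ν be a compact connected smooth embedded submanifold without boundary with base point b ∈ N, let ℓ ≥ 1, and let 1 ≤ p < ∞. Let U : B̄^ℓ × [0,1] → N be a C^1 map with U(x, t) = b for every x ∈ S^{ℓ−1} and t ∈ [0,1], and set u = U(·, 0). Then ∫_{B^ℓ×(0,1)} ‖DU‖^p ≥ E^{1,p}_top(u). -/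
open Metric Set MeasureTheory Filter
open scoped ENNReal Topology

noncomputable section

/-!
Every horizontal slice `U (·, t)` competes in the infimum defining the topological energy of
`U (·, s)`: moving the time coordinate affinely from `t` to `s` is a homotopy through `U`, and it
fixes the sphere because `U` does not depend on time there. The derivative of a slice is a
restriction of the derivative of `U`, so its operator norm is no larger. It remains to average the
resulting bound over `t ∈ (0, 1)`, by Tonelli's theorem.
-/

section C1OnNhd

variable {E F G : Type*} [NormedAddCommGroup E] [NormedSpace ℝ E]
  [NormedAddCommGroup F] [NormedSpace ℝ F] [NormedAddCommGroup G] [NormedSpace ℝ G]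
  {f : F → G} {B : Set F}

theorem C1OnNhd.continuousOn (hf : C1OnNhd f B) : ContinuousOn f B := by
  obtain ⟨V, -, hBV, hfV⟩ := hf
  exact hfV.continuousOn.mono hBV

theorem C1OnNhd.differentiableAt (hf : C1OnNhd f B) {y : F} (hy : y ∈ B) :
    DifferentiableAt ℝ f y := by
  obtain ⟨V, hV, hBV, hfV⟩ := hf
  exact (hfV.differentiableOn one_ne_zero).differentiableAt (hV.mem_nhds (hBV hy))

theorem C1OnNhd.comp_contDiff {g : E → F} {A : Set E} (hf : C1OnNhd f B)
    (hg : ContDiff ℝ 1 g) (hAB : MapsTo g A B) : C1OnNhd (fun x => f (g x)) A := by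
  obtain ⟨V, hV, hBV, hfV⟩ := hf
  exact ⟨g ⁻¹' V, hV.preimage hg.continuous, fun _ hx => hBV (hAB hx),
    hfV.comp hg.contDiffOn (mapsTo_preimage g V)⟩

end C1OnNhd

section Slices

variable {𝕜 E F G : Type*} [NontriviallyNormedField 𝕜]
  [NormedAddCommGroup E] [NormedSpace 𝕜 E] [NormedAddCommGroup F] [NormedSpace 𝕜 F]
  [NormedAddCommGroup G] [NormedSpace 𝕜 G] {f : E × F → G} {y : F}

theorem norm_fderiv_comp_prodMk_left_le {x : E} (hf : DifferentiableAt 𝕜 f (x, y)) :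
    ‖fderiv 𝕜 (fun x' => f (x', y)) x‖ ≤ ‖fderiv 𝕜 f (x, y)‖ := by
  have hslice : HasFDerivAt (fun x' => f (x', y))
      ((fderiv 𝕜 f (x, y)).comp (ContinuousLinearMap.inl 𝕜 E F)) x :=
    hf.hasFDerivAt.comp x (hasFDerivAt_prodMk_left x y)
  rw [hslice.fderiv]
  exact (ContinuousLinearMap.opNorm_comp_le _ _).trans <|
    mul_le_of_le_one_right (norm_nonneg _) (ContinuousLinearMap.norm_inl_le_one 𝕜 E F)

theorem setLIntegral_rpow_norm_fderiv_slice_le [MeasurableSpace E] (μ : Measure E) {A : Set E}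
    (hA : MeasurableSet A) {p : ℝ} (hp : 0 ≤ p)
    (hf : ∀ x ∈ A, DifferentiableAt 𝕜 f (x, y)) :
    ∫⁻ x in A, ENNReal.ofReal (‖fderiv 𝕜 (fun x' => f (x', y)) x‖ ^ p) ∂μ ≤
      ∫⁻ x in A, ENNReal.ofReal (‖fderiv 𝕜 f (x, y)‖ ^ p) ∂μ := by
  refine setLIntegral_mono' hA fun x hx => ?_
  gcongr
  exact norm_fderiv_comp_prodMk_left_le (hf x hx)

end Slices

theorem mul_measure_le_setLIntegral_prod {α β : Type*} [MeasurableSpace α] [MeasurableSpace β]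
    {μ : Measure α} {ν : Measure β} [SFinite μ] [SFinite ν] {A : Set α} {T : Set β}
    (hT : MeasurableSet T) {f : α × β → ℝ≥0∞}
    (hf : AEMeasurable f ((μ.prod ν).restrict (A ×ˢ T))) {c : ℝ≥0∞}
    (hc : ∀ t ∈ T, c ≤ ∫⁻ x in A, f (x, t) ∂μ) :
    c * ν T ≤ ∫⁻ z in A ×ˢ T, f z ∂μ.prod ν := by
  calc c * ν T = ∫⁻ _ in T, c ∂ν := (setLIntegral_const T c).symm
    _ ≤ ∫⁻ t in T, ∫⁻ x in A, f (x, t) ∂μ ∂ν := setLIntegral_mono' hT hc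
    _ = ∫⁻ z in A ×ˢ T, f z ∂μ.prod ν := (setLIntegral_prod_symm f hf).symm

section Cylinder

variable {l ν : ℕ} {N : Set (EuclideanSpace ℝ (Fin ν))}
  {U : EuclideanSpace ℝ (Fin l) × ℝ → EuclideanSpace ℝ (Fin ν)} {s t : ℝ}

theorem homotopicRelSphere_slices {φ : EuclideanSpace ℝ (Fin l) → EuclideanSpace ℝ (Fin ν)}
    (hU : ContinuousOn U (closedBall 0 1 ×ˢ Icc (0 : ℝ) 1))
    (hUN : MapsTo U (closedBall 0 1 ×ˢ Icc (0 : ℝ) 1) N)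
    (hUφ : ∀ x ∈ sphere (0 : EuclideanSpace ℝ (Fin l)) 1, ∀ r ∈ Icc (0 : ℝ) 1, U (x, r) = φ x)
    (ht : t ∈ Icc (0 : ℝ) 1) (hs : s ∈ Icc (0 : ℝ) 1) :
    HomotopicRelSphere N (fun x => U (x, t)) (fun x => U (x, s)) := by
  have htime : ∀ r ∈ Icc (0 : ℝ) 1, AffineMap.lineMap t s r ∈ Icc (0 : ℝ) 1 :=
    fun r hr => (convex_Icc 0 1).lineMap_mem ht hs hr
  have hcyl : MapsTo (fun z : EuclideanSpace ℝ (Fin l) × ℝ => (z.1, AffineMap.lineMap t s z.2))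
      (closedBall 0 1 ×ˢ Icc (0 : ℝ) 1) (closedBall 0 1 ×ˢ Icc (0 : ℝ) 1) :=
    fun z hz => ⟨hz.1, htime z.2 hz.2⟩
  have hcont : Continuous
      (fun z : EuclideanSpace ℝ (Fin l) × ℝ => (z.1, AffineMap.lineMap t s z.2)) :=
    continuous_fst.prodMk (AffineMap.lineMap_continuous.comp continuous_snd)
  refine ⟨fun z => U (z.1, AffineMap.lineMap t s z.2), hU.comp hcont.continuousOn hcyl,
    hUN.comp hcyl, fun x _ => ?_, fun x hx r hr => ?_⟩
  · simp only [AffineMap.lineMap_apply_zero, AffineMap.lineMap_apply_one, and_self]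
  · exact (hUφ x hx _ (htime r hr)).trans (hUφ x hx t ht).symm

theorem topEnergy_slice_le {b : EuclideanSpace ℝ (Fin ν)} (p : ℝ)
    (hU : C1OnNhd U (closedBall 0 1 ×ˢ Icc (0 : ℝ) 1))
    (hUN : MapsTo U (closedBall 0 1 ×ˢ Icc (0 : ℝ) 1) N)
    (hUb : ∀ x ∈ sphere (0 : EuclideanSpace ℝ (Fin l)) 1, ∀ r ∈ Icc (0 : ℝ) 1, U (x, r) = b)
    (hs : s ∈ Icc (0 : ℝ) 1) (ht : t ∈ Icc (0 : ℝ) 1) :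
    topEnergy p N b (fun x => U (x, s)) ≤
      ∫⁻ x in ball (0 : EuclideanSpace ℝ (Fin l)) 1,
        ENNReal.ofReal (‖fderiv ℝ (fun x' => U (x', t)) x‖ ^ p) := by
  have hslice : MapsTo (fun x : EuclideanSpace ℝ (Fin l) => (x, t))
      (closedBall 0 1) (closedBall 0 1 ×ˢ Icc (0 : ℝ) 1) := fun _ hx => ⟨hx, ht⟩
  exact sInf_le ⟨fun x => U (x, t), hU.comp_contDiff (contDiff_prodMk_left t) hslice,
    hUN.comp hslice, fun x hx => hUb x hx t ht,
    homotopicRelSphere_slices hU.continuousOn hUN hUb ht hs, rfl⟩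

theorem statement5_general {b : EuclideanSpace ℝ (Fin ν)} {p : ℝ} (hp : 0 ≤ p)
    (hU : C1OnNhd U (closedBall 0 1 ×ˢ Icc (0 : ℝ) 1))
    (hUN : MapsTo U (closedBall 0 1 ×ˢ Icc (0 : ℝ) 1) N)
    (hUb : ∀ x ∈ sphere (0 : EuclideanSpace ℝ (Fin l)) 1, ∀ t ∈ Icc (0 : ℝ) 1, U (x, t) = b)
    (hs : s ∈ Icc (0 : ℝ) 1) :
    topEnergy p N b (fun x => U (x, s)) ≤
      ∫⁻ z in ball (0 : EuclideanSpace ℝ (Fin l)) 1 ×ˢ Ioo (0 : ℝ) 1,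
        ENNReal.ofReal (‖fderiv ℝ U z‖ ^ p) := by
  have hmeas : Measurable fun z => ENNReal.ofReal (‖fderiv ℝ U z‖ ^ p) :=
    ((measurable_fderiv ℝ U).norm.pow_const p).ennreal_ofReal
  have hslices (t : ℝ) (ht : t ∈ Ioo (0 : ℝ) 1) :
      topEnergy p N b (fun x => U (x, s)) ≤
        ∫⁻ x in ball (0 : EuclideanSpace ℝ (Fin l)) 1,
          ENNReal.ofReal (‖fderiv ℝ U (x, t)‖ ^ p) := by
    have htI : t ∈ Icc (0 : ℝ) 1 := Ioo_subset_Icc_self ht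
    exact (topEnergy_slice_le p hU hUN hUb hs htI).trans <|
      setLIntegral_rpow_norm_fderiv_slice_le volume measurableSet_ball hp fun x hx =>
        hU.differentiableAt ⟨ball_subset_closedBall hx, htI⟩
  calc topEnergy p N b (fun x => U (x, s))
      = topEnergy p N b (fun x => U (x, s)) * volume (Ioo (0 : ℝ) 1) := by
        rw [Real.volume_Ioo, sub_zero, ENNReal.ofReal_one, mul_one]
    _ ≤ _ := mul_measure_le_setLIntegral_prod measurableSet_Ioo hmeas.aemeasurable hslices

end Cylinder

/-- lower bound on the cylinder: if `U : B̄^ℓ × [0,1] → N` is `C^1` with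
`U(x,t) = b` for all `x ∈ S^{ℓ-1}` and `t ∈ [0,1]`, and `u = U(·,0)`, then
`∫_{B^ℓ×(0,1)} ‖DU‖^p ≥ E^{1,p}_top(u)`. -/
theorem statement5 (ν : ℕ) (hν : 1 ≤ ν) (N : Set (EuclideanSpace ℝ (Fin ν)))
    (hNcpt : IsCompact N) (hNconn : IsConnected N) (hNsub : IsSmoothSubmanifold N)
    (b : EuclideanSpace ℝ (Fin ν)) (hb : b ∈ N)
    (l : ℕ) (hl : 1 ≤ l) (p : ℝ) (hp : 1 ≤ p)
    (U : EuclideanSpace ℝ (Fin l) × ℝ → EuclideanSpace ℝ (Fin ν))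
    (hU1 : C1OnNhd U (closedBall 0 1 ×ˢ Icc (0 : ℝ) 1))
    (hUN : MapsTo U (closedBall 0 1 ×ˢ Icc (0 : ℝ) 1) N)
    (hUb : ∀ x ∈ sphere (0 : EuclideanSpace ℝ (Fin l)) 1, ∀ t ∈ Icc (0 : ℝ) 1,
      U (x, t) = b) :
    topEnergy p N b (fun x => U (x, 0))
      ≤ ∫⁻ z in ball (0 : EuclideanSpace ℝ (Fin l)) 1 ×ˢ Ioo (0 : ℝ) 1,
          ENNReal.ofReal (‖fderiv ℝ U z‖ ^ p) :=
  statement5_general (zero_le_one.trans hp) hU1 hUN hUb (left_mem_Icc.2 zero_le_one)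

end
end

section
/- Let ν ≥ 1, let N ⊆ ℝ^ν be a compact connected smooth embedded submanifold without boundary with base point b ∈ N, let ℓ ≥ 1, and let p > ℓ be a real number. Let v : B̄^ℓ → N be continuous with v = b on S^{ℓ−1}, and assume that v is NOT homotopic relative to S^{ℓ−1} to the constant map b. Then E^{1,p}_top(v) > 0, i.e., inf { ∫_{B^ℓ} ‖Dw(x)‖^p dx : w : B̄^ℓ → N is C^1, w = b on S^{ℓ−1}, and w is homotopic to v relative to S^{ℓ−1} } > 0. -/
open Metric Set MeasureTheory Filter
open scoped ENNReal Topology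

noncomputable section

/-! Morrey's argument: at a point `x` of a bounded open set `Ω`, a map equal to `b` on the frontier
differs from `b` by at most the integral of its derivative along any segment from `x` to a point
outside `Ω`. Averaging over the end points `x + z`, with `z` in a ball far from the origin, and
applying Hölder's inequality at each time `t` bounds the difference by a multiple of the `L^p` norm
of the derivative; the constant contains `∫₀¹ t ^ (-ℓ / p) dt`, which is finite because `p > ℓ`.
A map of small energy thus has its values in a neighbourhood of `b` that can be contracted in `N`
with `b` fixed, so it is null-homotopic, whereas a map homotopic to `v` is not. -/

section Homotopy

variable {l ν : ℕ} {N : Set (EuclideanSpace ℝ (Fin ν))} {b : EuclideanSpace ℝ (Fin ν)}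

namespace HomotopicRelSphere

variable {f g h : EuclideanSpace ℝ (Fin l) → EuclideanSpace ℝ (Fin ν)}

theorem exists_homotopicRel (hfg : HomotopicRelSphere N f g) :
    ∃ f' g' : C(closedBall (0 : EuclideanSpace ℝ (Fin l)) 1, N),
      (∀ x, (f' x : EuclideanSpace ℝ (Fin ν)) = f x) ∧
      (∀ x, (g' x : EuclideanSpace ℝ (Fin ν)) = g x) ∧
      f'.HomotopicRel g' (Subtype.val ⁻¹' sphere 0 1) := by
  obtain ⟨H, hcont, hmaps, hends, hsphere⟩ := hfg
  let G : C(unitInterval × closedBall (0 : EuclideanSpace ℝ (Fin l)) 1, N) :=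
    { toFun := fun q => ⟨H (q.2, q.1), hmaps ⟨q.2.2, q.1.2⟩⟩
      continuous_toFun := by
        refine Continuous.subtype_mk ?_ _
        exact hcont.comp_continuous (by fun_prop) fun q => ⟨q.2.2, q.1.2⟩ }
  refine ⟨G.curry 0, G.curry 1, fun x => (hends x x.2).1, fun x => (hends x x.2).2,
    ⟨{ toContinuousMap := G
       map_zero_left := fun _ => rfl
       map_one_left := fun _ => rfl
       prop' := fun t x hx => Subtype.ext ?_ }⟩⟩
  exact (hsphere x hx t t.2).trans (hends x x.2).1.symm

theorem of_homotopicRel {f' g' : C(closedBall (0 : EuclideanSpace ℝ (Fin l)) 1, N)}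
    (hf : ∀ x, (f' x : EuclideanSpace ℝ (Fin ν)) = f x)
    (hg : ∀ x, (g' x : EuclideanSpace ℝ (Fin ν)) = g x)
    (hfg : f'.HomotopicRel g' (Subtype.val ⁻¹' sphere 0 1)) : HomotopicRelSphere N f g := by
  classical
  obtain ⟨G⟩ := hfg
  let H : EuclideanSpace ℝ (Fin l) × ℝ → EuclideanSpace ℝ (Fin ν) := fun q =>
    if h : q.1 ∈ closedBall 0 1 ∧ q.2 ∈ Icc (0 : ℝ) 1 then G (⟨q.2, h.2⟩, ⟨q.1, h.1⟩) else 0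
  have H_eq {x t} (hx : x ∈ closedBall 0 1) (ht : t ∈ Icc (0 : ℝ) 1) :
      H (x, t) = G (⟨t, ht⟩, ⟨x, hx⟩) := dif_pos ⟨hx, ht⟩
  refine ⟨H, ?_, ?_, fun x hx => ⟨?_, ?_⟩, fun x hx t ht => ?_⟩
  · have domRestrict_eq : (closedBall 0 1 ×ˢ Icc (0 : ℝ) 1).domRestrict H =
        fun q => (G (⟨q.1.2, q.2.2⟩, ⟨q.1.1, q.2.1⟩) : EuclideanSpace ℝ (Fin ν)) :=
      funext fun q => H_eq q.2.1 q.2.2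
    rw [continuousOn_iff_continuous_domRestrict, domRestrict_eq]
    fun_prop
  · rintro ⟨x, t⟩ ⟨hx, ht⟩
    rw [H_eq hx ht]
    exact Subtype.prop _
  · rw [H_eq hx (left_mem_Icc.2 zero_le_one), ← hf ⟨x, hx⟩]
    exact congrArg Subtype.val (G.apply_zero _)
  · rw [H_eq hx (right_mem_Icc.2 zero_le_one), ← hg ⟨x, hx⟩]
    exact congrArg Subtype.val (G.apply_one _)
  · rw [H_eq (sphere_subset_closedBall hx) ht, ← hf ⟨x, sphere_subset_closedBall hx⟩]
    exact congrArg Subtype.val (G.eq_fst _ hx)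

theorem symm (hfg : HomotopicRelSphere N f g) : HomotopicRelSphere N g f := by
  obtain ⟨f', g', hf, hg, hfg'⟩ := hfg.exists_homotopicRel
  exact of_homotopicRel hg hf hfg'.symm

theorem trans (hfg : HomotopicRelSphere N f g) (hgh : HomotopicRelSphere N g h) :
    HomotopicRelSphere N f h := by
  obtain ⟨f', g₁, hf, hg₁, hfg'⟩ := hfg.exists_homotopicRel
  obtain ⟨g₂, h', hg₂, hh, hgh'⟩ := hgh.exists_homotopicRel
  obtain rfl : g₁ = g₂ := ContinuousMap.ext fun x => Subtype.ext ((hg₁ x).trans (hg₂ x).symm)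
  exact of_homotopicRel hf hh (hfg'.trans hgh')

end HomotopicRelSphere

/-- Semilocal contractibility of `N` at `b` in the pointed sense: the part of `N` in some
neighbourhood of `b` can be contracted to `b` inside `N` while `b` stays fixed. The contraction
may leave the neighbourhood, and the time parameter is the second component, as in
`HomotopicRelSphere`. -/
def SemilocallyContractibleAt {E : Type*} [TopologicalSpace E] (N : Set E) (b : E) : Prop :=
  ∃ U ∈ 𝓝 b, ∃ C : E × ℝ → E,
    ContinuousOn C ((N ∩ U) ×ˢ Icc (0 : ℝ) 1) ∧
    MapsTo C ((N ∩ U) ×ˢ Icc (0 : ℝ) 1) N ∧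
    (∀ y ∈ N ∩ U, C (y, 0) = y ∧ C (y, 1) = b) ∧
    ∀ t ∈ Icc (0 : ℝ) 1, C (b, t) = b

theorem IsSmoothSubmanifold.semilocallyContractibleAt (hN : IsSmoothSubmanifold N) (hb : b ∈ N) :
    SemilocallyContractibleAt N b := by
  obtain ⟨d, hcharts⟩ := hN
  obtain ⟨U, V, φ, ψ, hU, hV, hbU, hφ, hψ, hφm, hψm, hψφ, hφψ, mem_iff⟩ := hcharts b hb
  obtain ⟨r, hr, hrV⟩ := Metric.isOpen_iff.1 hV (φ b) (hφm hbU)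
  have segment_mem {y} (hy : φ y ∈ ball (φ b) r) {t : ℝ} (ht : t ∈ Icc (0 : ℝ) 1) :
      AffineMap.lineMap (φ y) (φ b) t ∈ V :=
    hrV ((convex_ball (φ b) r).lineMap_mem hy (mem_ball_self hr) ht)
  refine ⟨U ∩ φ ⁻¹' ball (φ b) r, ?_, fun q => ψ (AffineMap.lineMap (φ q.1) (φ b) q.2),
    ?_, ?_, ?_, ?_⟩
  · exact inter_mem (hU.mem_nhds hbU)
      ((hφ.continuousOn.continuousAt (hU.mem_nhds hbU)).preimage_mem_nhds (ball_mem_nhds _ hr))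
  · refine hψ.continuousOn.comp ?_ fun q hq => segment_mem hq.1.2.2 hq.2
    have hφ_fst : ContinuousOn (fun q : EuclideanSpace ℝ (Fin ν) × ℝ => φ q.1)
        ((N ∩ (U ∩ φ ⁻¹' ball (φ b) r)) ×ˢ Icc (0 : ℝ) 1) :=
      hφ.continuousOn.comp continuousOn_fst fun q hq => hq.1.2.1
    simp only [AffineMap.lineMap_apply_module]
    exact ((continuousOn_const.sub continuousOn_snd).smul hφ_fst).add
      (continuousOn_snd.smul continuousOn_const)
  · rintro ⟨y, t⟩ ⟨⟨hyN, hyU, hyr⟩, ht⟩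
    have hV' := segment_mem hyr ht
    refine (mem_iff _ (hψm hV')).2 fun i hi => ?_
    have hy : φ y i = 0 := (mem_iff y hyU).1 hyN i hi
    have hb : φ b i = 0 := (mem_iff b hbU).1 hb i hi
    rw [hφψ _ hV']
    simp [AffineMap.lineMap_apply_module, hy, hb]
  · rintro y ⟨-, hyU, -⟩
    simp [hψφ y hyU, hψφ b hbU]
  · intro t _
    simp [hψφ b hbU]

theorem SemilocallyContractibleAt.exists_mem_nhds_homotopicRelSphere_const
    (hN : SemilocallyContractibleAt N b) :
    ∃ U ∈ 𝓝 b, ∀ (l : ℕ) (w : EuclideanSpace ℝ (Fin l) → EuclideanSpace ℝ (Fin ν)),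
      ContinuousOn w (closedBall 0 1) → MapsTo w (closedBall 0 1) (N ∩ U) →
      (∀ x ∈ sphere 0 1, w x = b) → HomotopicRelSphere N w fun _ => b := by
  obtain ⟨U, hU, C, C_cont, C_maps, C_ends, C_base⟩ := hN
  refine ⟨U, hU, fun l w w_cont w_maps w_sphere => ⟨fun q => C (w q.1, q.2), ?_, ?_, ?_, ?_⟩⟩
  · have w_fst : ContinuousOn (fun q : EuclideanSpace ℝ (Fin l) × ℝ => w q.1)
        (closedBall 0 1 ×ˢ Icc (0 : ℝ) 1) :=
      w_cont.comp continuousOn_fst fun q hq => hq.1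
    exact C_cont.comp (w_fst.prodMk continuousOn_snd) fun q hq => ⟨w_maps hq.1, hq.2⟩
  · exact fun q hq => C_maps ⟨w_maps hq.1, hq.2⟩
  · exact fun x hx => C_ends (w x) (w_maps hx)
  · intro x hx t ht
    simp only [w_sphere x hx, C_base t ht]

end Homotopy

section Morrey

theorem exists_mem_Icc_mem_frontier_of_mem_of_notMem {X : Type*} [TopologicalSpace X] {Ω : Set X}
    (hΩ : IsOpen Ω) {γ : ℝ → X} (hγ : Continuous γ) (h₀ : γ 0 ∈ Ω) (h₁ : γ 1 ∉ Ω) :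
    ∃ T ∈ Icc (0 : ℝ) 1, γ T ∈ frontier Ω ∧ ∀ t ∈ Ico 0 T, γ t ∈ Ω := by
  have hcompact : IsCompact (Icc (0 : ℝ) 1 ∩ γ ⁻¹' Ωᶜ) :=
    isCompact_Icc.inter_right (hΩ.isClosed_compl.preimage hγ)
  obtain ⟨T, ⟨hT, hTΩ⟩, hleast⟩ := hcompact.exists_isLeast ⟨1, right_mem_Icc.2 zero_le_one, h₁⟩
  have hbefore : ∀ t ∈ Ico 0 T, γ t ∈ Ω := fun t ht => by
    by_contra h
    exact ht.2.not_ge (hleast ⟨⟨ht.1, ht.2.le.trans hT.2⟩, h⟩)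
  have hTpos : 0 < T := hT.1.lt_of_ne fun h => hTΩ (h ▸ h₀)
  have hclosure : T ∈ closure (Ico 0 T) := by
    rw [closure_Ico hTpos.ne]
    exact right_mem_Icc.2 hTpos.le
  refine ⟨T, hT, ⟨?_, fun h => hTΩ (interior_subset h)⟩, hbefore⟩
  exact map_mem_closure hγ hclosure hbefore

theorem exists_forall_mem_ball_add_notMem {E : Type*} [NormedAddCommGroup E] [NormedSpace ℝ E]
    [Nontrivial E] {Ω : Set E} (hΩ : Bornology.IsBounded Ω) (r : ℝ) :
    ∃ c : E, ∀ x ∈ Ω, ∀ z ∈ ball c r, x + z ∉ Ω := by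
  obtain ⟨R, hR⟩ := hΩ.exists_norm_le
  obtain ⟨c, hc⟩ := NormedSpace.exists_lt_norm ℝ E (2 * R + r)
  refine ⟨c, fun x hx z hz hxz => ?_⟩
  have hz_small : ‖z‖ ≤ ‖x + z‖ + ‖x‖ := by simpa using norm_sub_le (x + z) x
  have hz_large : ‖c‖ ≤ ‖z‖ + ‖z - c‖ := by simpa using norm_sub_le z (z - c)
  linarith [hR _ hx, hR _ hxz, mem_ball_iff_norm.1 hz]

theorem setLIntegral_Ioo_ofReal_rpow_ne_top {s : ℝ} (hs : -1 < s) :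
    ∫⁻ t in Ioo (0 : ℝ) 1, ENNReal.ofReal (t ^ s) ≠ ∞ :=
  ((intervalIntegral.integrableOn_Ioo_rpow_iff one_pos).2 hs).lintegral_lt_top.ne

theorem setLIntegral_le_rpow_mul_measure_rpow {α : Type*} [MeasurableSpace α] {μ : Measure α}
    {p q : ℝ} (hpq : p.HolderConjugate q) {f : α → ℝ≥0∞} (hf : Measurable f) (A : Set α) :
    ∫⁻ x in A, f x ∂μ ≤ (∫⁻ x in A, f x ^ p ∂μ) ^ (1 / p) * μ A ^ (1 / q) := by
  simpa using ENNReal.lintegral_mul_le_Lp_mul_Lq (μ.restrict A) hpq hf.aemeasurable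
    (aemeasurable_const (b := (1 : ℝ≥0∞)))

variable {E F : Type*} [NormedAddCommGroup E] [NormedSpace ℝ E]
  [NormedAddCommGroup F] [NormedSpace ℝ F]

theorem C1OnNhd.enorm_sub_le_lintegral_segment {w : E → F} {b : F} {Ω : Set E}
    (hΩ : IsOpen Ω) (hw : C1OnNhd w (closure Ω)) (hwb : ∀ x ∈ frontier Ω, w x = b)
    {x z : E} (hx : x ∈ Ω) (hxz : x + z ∉ Ω) :
    ‖w x - b‖ₑ ≤
      ‖z‖ₑ * ∫⁻ t in Ioo (0 : ℝ) 1, Ω.indicator (fun y => ‖fderiv ℝ w y‖ₑ) (x + t • z) := by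
  obtain ⟨V, hV, hΩV, hwV⟩ := hw
  obtain ⟨T, hT, hT_frontier, hT_before⟩ : ∃ T ∈ Icc (0 : ℝ) 1,
      x + T • z ∈ frontier Ω ∧ ∀ t ∈ Ico 0 T, x + t • z ∈ Ω :=
    exists_mem_Icc_mem_frontier_of_mem_of_notMem hΩ (by fun_prop) (by simpa) (by simpa)
  have mem_V : ∀ t ∈ Icc 0 T, x + t • z ∈ V := fun t ht => hΩV <| by
    rcases ht.2.eq_or_lt with rfl | h
    · exact frontier_subset_closure hT_frontier
    · exact subset_closure (hT_before t ⟨ht.1, h⟩)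
  have hC1 : ContDiffOn ℝ 1 (fun t : ℝ => w (x + t • z)) (Icc 0 T) :=
    hwV.comp (by fun_prop) mem_V
  have hderiv : ∀ t ∈ Ioo 0 T,
      ‖deriv (fun t : ℝ => w (x + t • z)) t‖ₑ ≤ ‖z‖ₑ * ‖fderiv ℝ w (x + t • z)‖ₑ := by
    intro t ht
    have hw_diff : DifferentiableAt ℝ w (x + t • z) :=
      (hwV.differentiableOn one_ne_zero).differentiableAt
        (hV.mem_nhds (mem_V t (Ioo_subset_Icc_self ht)))
    have hline : HasDerivAt (fun t : ℝ => x + t • z) z t := by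
      simpa using ((hasDerivAt_id t).smul_const z).const_add x
    have hcomp : HasDerivAt (fun t : ℝ => w (x + t • z)) (fderiv ℝ w (x + t • z) z) t :=
      hw_diff.hasFDerivAt.comp_hasDerivAt t hline
    rw [hcomp.deriv, mul_comm]
    exact ContinuousLinearMap.le_opENorm _ _
  calc ‖w x - b‖ₑ = ‖w (x + T • z) - w (x + (0 : ℝ) • z)‖ₑ := by
        rw [hwb _ hT_frontier, zero_smul, add_zero, enorm_sub_rev]
    _ ≤ ∫⁻ t in Ioo 0 T, ‖deriv (fun t : ℝ => w (x + t • z)) t‖ₑ := by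
        rw [restrict_Ioo_eq_restrict_Icc]
        exact enorm_sub_le_lintegral_deriv_of_contDiffOn_Icc hC1 hT.1
    _ ≤ ∫⁻ t in Ioo 0 T, ‖z‖ₑ * Ω.indicator (fun y => ‖fderiv ℝ w y‖ₑ) (x + t • z) :=
        setLIntegral_mono' measurableSet_Ioo fun t ht => by
          rw [indicator_of_mem (hT_before t (Ioo_subset_Ico_self ht))]
          exact hderiv t ht
    _ ≤ ∫⁻ t in Ioo (0 : ℝ) 1, ‖z‖ₑ * Ω.indicator (fun y => ‖fderiv ℝ w y‖ₑ) (x + t • z) :=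
        lintegral_mono_set (Ioo_subset_Ioo_right hT.2)
    _ = _ := lintegral_const_mul' _ _ enorm_ne_top

variable [FiniteDimensional ℝ E] [MeasurableSpace E] [BorelSpace E]
  (μ : Measure E) [μ.IsAddHaarMeasure]

theorem lintegral_comp_add_smul {g : E → ℝ≥0∞} (hg : Measurable g) (x : E) {t : ℝ} (ht : t ≠ 0) :
    ∫⁻ z, g (x + t • z) ∂μ =
      ENNReal.ofReal |(t ^ Module.finrank ℝ E)⁻¹| * ∫⁻ y, g y ∂μ := by
  have hgx : Measurable fun y => g (x + y) := by fun_prop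
  rw [← lintegral_map hgx (measurable_const_smul t), Measure.map_addHaar_smul μ ht,
    lintegral_smul_measure, lintegral_add_left_eq_self g x, smul_eq_mul]

theorem setLIntegral_comp_add_smul_le {p q : ℝ} (hpq : p.HolderConjugate q) {g : E → ℝ≥0∞}
    (hg : Measurable g) (A : Set E) (x : E) {t : ℝ} (ht : 0 < t) :
    ∫⁻ z in A, g (x + t • z) ∂μ ≤
      ENNReal.ofReal (t ^ (-(Module.finrank ℝ E / p))) *
        ((∫⁻ y, g y ^ p ∂μ) ^ (1 / p) * μ A ^ (1 / q)) := by
  have hp : 0 ≤ 1 / p := hpq.one_div_nonneg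
  have hscale : (ENNReal.ofReal |(t ^ Module.finrank ℝ E)⁻¹|) ^ (1 / p) =
      ENNReal.ofReal (t ^ (-(Module.finrank ℝ E / p))) := by
    rw [abs_of_nonneg (by positivity), ENNReal.ofReal_rpow_of_nonneg (by positivity) hp,
      ← Real.rpow_natCast, ← Real.rpow_neg ht.le, ← Real.rpow_mul ht.le, neg_mul,
      mul_one_div]
  calc ∫⁻ z in A, g (x + t • z) ∂μ
    _ ≤ (∫⁻ z in A, g (x + t • z) ^ p ∂μ) ^ (1 / p) * μ A ^ (1 / q) :=
        setLIntegral_le_rpow_mul_measure_rpow hpq (by fun_prop) A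
    _ ≤ (∫⁻ z, g (x + t • z) ^ p ∂μ) ^ (1 / p) * μ A ^ (1 / q) := by
        gcongr
        exact Measure.restrict_le_self
    _ = _ := by
        rw [lintegral_comp_add_smul μ (hg.pow_const p) x ht.ne', ENNReal.mul_rpow_of_nonneg _ _ hp,
          hscale, mul_assoc]

theorem setLIntegral_lintegral_segment_le {p q : ℝ} (hpq : p.HolderConjugate q) {g : E → ℝ≥0∞}
    (hg : Measurable g) (A : Set E) (x : E) :
    ∫⁻ z in A, (∫⁻ t in Ioo (0 : ℝ) 1, g (x + t • z)) ∂μ ≤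
      (∫⁻ t in Ioo (0 : ℝ) 1, ENNReal.ofReal (t ^ (-(Module.finrank ℝ E / p)))) *
        ((∫⁻ y, g y ^ p ∂μ) ^ (1 / p) * μ A ^ (1 / q)) := by
  have hmeas : Measurable (Function.uncurry fun (z : E) (t : ℝ) => g (x + t • z)) := by
    simp only [Function.uncurry_def]
    fun_prop
  rw [lintegral_lintegral_swap hmeas.aemeasurable, ← lintegral_mul_const _ (by fun_prop)]
  exact setLIntegral_mono' measurableSet_Ioo fun t ht =>
    setLIntegral_comp_add_smul_le μ hpq hg A x ht.1

theorem C1OnNhd.measure_mul_enorm_sub_le [CompleteSpace F] {w : E → F} {b : F} {Ω : Set E}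
    (hΩ : IsOpen Ω) (hw : C1OnNhd w (closure Ω)) (hwb : ∀ x ∈ frontier Ω, w x = b)
    {p q : ℝ} (hpq : p.HolderConjugate q) {x : E} (hx : x ∈ Ω) {A : Set E} (hA : MeasurableSet A)
    (hxA : ∀ z ∈ A, x + z ∉ Ω) {M : ℝ≥0∞} (hM : ∀ z ∈ A, ‖z‖ₑ ≤ M) :
    μ A * ‖w x - b‖ₑ ≤
      M * ((∫⁻ t in Ioo (0 : ℝ) 1, ENNReal.ofReal (t ^ (-(Module.finrank ℝ E / p)))) *
        ((∫⁻ y in Ω, ‖fderiv ℝ w y‖ₑ ^ p ∂μ) ^ (1 / p) * μ A ^ (1 / q))) := by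
  set g : E → ℝ≥0∞ := Ω.indicator fun y => ‖fderiv ℝ w y‖ₑ
  have hg : Measurable g := (measurable_fderiv ℝ w).enorm.indicator hΩ.measurableSet
  have hg_rpow : (fun y => g y ^ p) = Ω.indicator fun y => ‖fderiv ℝ w y‖ₑ ^ p :=
    (indicator_comp_of_zero (g := (· ^ p)) (ENNReal.zero_rpow_of_pos hpq.pos)).symm
  rw [← lintegral_indicator hΩ.measurableSet, ← hg_rpow]
  calc μ A * ‖w x - b‖ₑ = ∫⁻ _ in A, ‖w x - b‖ₑ ∂μ := by rw [setLIntegral_const, mul_comm]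
    _ ≤ ∫⁻ z in A, M * (∫⁻ t in Ioo (0 : ℝ) 1, g (x + t • z)) ∂μ := by
        refine setLIntegral_mono' hA fun z hz => ?_
        grw [hw.enorm_sub_le_lintegral_segment hΩ hwb hx (hxA z hz), hM z hz]
    _ = M * ∫⁻ z in A, (∫⁻ t in Ioo (0 : ℝ) 1, g (x + t • z)) ∂μ :=
        lintegral_const_mul _ (by fun_prop)
    _ ≤ _ := by
        gcongr
        exact setLIntegral_lintegral_segment_le μ hpq hg A x

theorem exists_enorm_sub_le_mul_lintegral_fderiv [Nontrivial E] [CompleteSpace F] {Ω : Set E}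
    (hΩ : IsOpen Ω) (hΩ_bdd : Bornology.IsBounded Ω) {p : ℝ} (hp : Module.finrank ℝ E < p) :
    ∃ C : ℝ≥0∞, C ≠ ∞ ∧ ∀ (w : E → F) (b : F), C1OnNhd w (closure Ω) →
      (∀ x ∈ frontier Ω, w x = b) → ∀ x ∈ closure Ω,
        ‖w x - b‖ₑ ≤ C * (∫⁻ y in Ω, ‖fderiv ℝ w y‖ₑ ^ p ∂μ) ^ (1 / p) := by
  have hdim : (1 : ℝ) ≤ Module.finrank ℝ E := by exact_mod_cast Module.finrank_pos
  have hpq := Real.HolderConjugate.conjExponent (hdim.trans_lt hp)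
  obtain ⟨c, hc⟩ := exists_forall_mem_ball_add_notMem hΩ_bdd 1
  set A : Set E := ball c 1
  set q : ℝ := p.conjExponent
  set I : ℝ≥0∞ := ∫⁻ t in Ioo (0 : ℝ) 1, ENNReal.ofReal (t ^ (-(Module.finrank ℝ E / p)))
  have hI : I ≠ ∞ := setLIntegral_Ioo_ofReal_rpow_ne_top <| by
    rwa [neg_lt_neg_iff, div_lt_one hpq.pos]
  have hA_pos : μ A ≠ 0 := (measure_ball_pos μ c one_pos).ne'
  have hA_fin : μ A ≠ ∞ := measure_ball_lt_top.ne
  have hA_enorm : ∀ z ∈ A, ‖z‖ₑ ≤ ENNReal.ofReal (‖c‖ + 1) := fun z hz => by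
    rw [← ofReal_norm]
    exact ENNReal.ofReal_le_ofReal (norm_lt_of_mem_ball hz).le
  refine ⟨(μ A)⁻¹ * (ENNReal.ofReal (‖c‖ + 1) * (I * μ A ^ (1 / q))), ?_,
    fun w b hw hwb x hx => ?_⟩
  · have := hpq.symm.one_div_nonneg
    finiteness
  by_cases hxΩ : x ∈ Ω
  · have haverage := hw.measure_mul_enorm_sub_le μ hΩ hwb hpq hxΩ measurableSet_ball (hc x hxΩ)
      hA_enorm
    calc ‖w x - b‖ₑ = (μ A)⁻¹ * (μ A * ‖w x - b‖ₑ) := by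
          rw [← mul_assoc, ENNReal.inv_mul_cancel hA_pos hA_fin, one_mul]
      _ ≤ _ := mul_le_mul_right haverage _
      _ = _ := by ring
  · simp [hwb x ⟨hx, fun h => hxΩ (interior_subset h)⟩]

end Morrey

section EnergyGap

variable {l ν : ℕ} {N : Set (EuclideanSpace ℝ (Fin ν))} {b : EuclideanSpace ℝ (Fin ν)} {p : ℝ}

theorem SemilocallyContractibleAt.exists_pos_forall_lintegral_lt_homotopicRelSphere_const
    (hN : SemilocallyContractibleAt N b) (hl : 1 ≤ l) (hp : (l : ℝ) < p) :
    ∃ ε : ℝ≥0∞, 0 < ε ∧ ∀ w : EuclideanSpace ℝ (Fin l) → EuclideanSpace ℝ (Fin ν),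
      C1OnNhd w (closedBall 0 1) → MapsTo w (closedBall 0 1) N → (∀ x ∈ sphere 0 1, w x = b) →
      ∫⁻ x in ball 0 1, ENNReal.ofReal (‖fderiv ℝ w x‖ ^ p) < ε →
      HomotopicRelSphere N w fun _ => b := by
  have hp_pos : 0 < p := (Nat.cast_nonneg l).trans_lt hp
  have : Nonempty (Fin l) := ⟨⟨0, hl⟩⟩
  obtain ⟨U, hU, hnull⟩ := hN.exists_mem_nhds_homotopicRelSphere_const
  obtain ⟨δ, hδ, hδU⟩ := EMetric.mem_nhds_iff.1 hU
  obtain ⟨C, hC, hmorrey⟩ := exists_enorm_sub_le_mul_lintegral_fderiv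
    (F := EuclideanSpace ℝ (Fin ν)) (volume : Measure (EuclideanSpace ℝ (Fin l)))
    isOpen_ball (isBounded_ball (x := 0) (r := 1)) (by simpa using hp)
  simp only [closure_ball _ one_ne_zero, frontier_ball _ one_ne_zero] at hmorrey
  refine ⟨(δ / C) ^ p, ENNReal.rpow_pos_of_nonneg (ENNReal.div_pos hδ.ne' hC) hp_pos.le, ?_⟩
  intro w hw hwN hwb henergy
  have hw_cont : ContinuousOn w (closedBall 0 1) := by
    obtain ⟨V, -, hV, hwV⟩ := hw
    exact hwV.continuousOn.mono hV
  refine hnull l w hw_cont (fun x hx => ⟨hwN hx, hδU ?_⟩) hwb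
  rw [Metric.mem_eball, edist_eq_enorm_sub]
  calc ‖w x - b‖ₑ ≤ C * (∫⁻ y in ball 0 1, ‖fderiv ℝ w y‖ₑ ^ p) ^ (1 / p) :=
        hmorrey w b hw hwb x hx
    _ = (∫⁻ y in ball 0 1, ENNReal.ofReal (‖fderiv ℝ w y‖ ^ p)) ^ p⁻¹ * C := by
        simp only [← ofReal_norm, one_div, mul_comm C,
          ENNReal.ofReal_rpow_of_nonneg (norm_nonneg _) hp_pos.le]
    _ < δ := ENNReal.mul_lt_of_lt_div ((ENNReal.rpow_inv_lt_iff hp_pos).2 henergy)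

theorem statement7_general (hN : SemilocallyContractibleAt N b) (hl : 1 ≤ l) (hp : (l : ℝ) < p) :
    ∃ ε : ℝ≥0∞, 0 < ε ∧ ∀ v : EuclideanSpace ℝ (Fin l) → EuclideanSpace ℝ (Fin ν),
      ¬ HomotopicRelSphere N v (fun _ => b) → ε ≤ topEnergy p N b v := by
  obtain ⟨ε, hε, hnull⟩ := hN.exists_pos_forall_lintegral_lt_homotopicRelSphere_const hl hp
  refine ⟨ε, hε, fun v hv => le_sInf ?_⟩
  rintro _ ⟨w, hw, hwN, hwb, hwv, rfl⟩
  by_contra! hlt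
  exact hv (hwv.symm.trans (hnull w hw hwN hwb hlt))

end EnergyGap

/-- if `p > ℓ` and `v : B̄^ℓ → N`, with `v = b` on `S^{ℓ-1}`, is not homotopic to
the constant `b` relative to `S^{ℓ-1}`, then its topological `p`-energy is positive. -/
theorem statement7 (ν : ℕ) (hν : 1 ≤ ν) (N : Set (EuclideanSpace ℝ (Fin ν)))
    (hNcpt : IsCompact N) (hNconn : IsConnected N) (hNsub : IsSmoothSubmanifold N)
    (b : EuclideanSpace ℝ (Fin ν)) (hb : b ∈ N)
    (l : ℕ) (hl : 1 ≤ l) (p : ℝ) (hp : (l : ℝ) < p)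
    (v : EuclideanSpace ℝ (Fin l) → EuclideanSpace ℝ (Fin ν))
    (hvc : ContinuousOn v (closedBall 0 1))
    (hvN : MapsTo v (closedBall 0 1) N)
    (hvb : ∀ x ∈ sphere (0 : EuclideanSpace ℝ (Fin l)) 1, v x = b)
    (hnontriv : ¬ HomotopicRelSphere N v (fun _ => b)) :
    0 < topEnergy p N b v := by
  obtain ⟨ε, hε, hgap⟩ := statement7_general (hNsub.semilocallyContractibleAt hb) hl hp
  exact hε.trans_le (hgap v hnontriv)

end
end
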